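/- Let d ≥ 2, 1 ≤ k ≤ d, 2 ≤ r̃ ≤ r < ∞, 2 < q ≤ ∞ with 2/q ≥ (d−k)(1/2 − 1/r) + k(1/2 − 1/r̃). Then for every f ∈ H^{1/q}(𝕋^d), ‖e^{−itΔ} f‖_{L^q_t(𝕋; L^r_x(𝕋^{d−k}; L^{r̃}_y(𝕋^k)))} ≤ C ‖f‖_{H^{1/q}(𝕋^d)}. -/

import Mathlib

open MeasureTheory Complex Finset
open scoped ENNReal Real ComplexConjugate

noncomputable section


/-- Mixed-norm building block: the `L^p` "norm" (`p ∈ [1,∞]`) of an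
`ℝ≥0∞`-valued function, with the convention `essSup` for `p = ∞`. -/
def eNorm {α : Type*} [MeasurableSpace α] (p : ℝ≥0∞) (μ : Measure α) (g : α → ℝ≥0∞) : ℝ≥0∞ :=
  if p = ∞ then essSup g μ else (∫⁻ a, g a ^ p.toReal ∂μ) ^ (1 / p.toReal)

/-- The `m`-dimensional torus `𝕋^m = (ℝ/ℤ)^m`. -/
abbrev Torus (m : ℕ) := Fin m → AddCircle (1 : ℝ)

/-- The character `z ↦ e^{2πi z·ξ}` on `𝕋^m`. -/
def eChar {m : ℕ} (ξ : Fin m → ℤ) (z : Torus m) : ℂ := ∏ i, fourier (ξ i) (z i)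

/-- Fourier coefficient of a function on the product torus `𝕋^m × 𝕋^k`. -/
def fcoef {m k : ℕ} (f : Torus m × Torus k → ℂ) (ξ : (Fin m → ℤ) × (Fin k → ℤ)) : ℂ :=
  ∫ z : Torus m × Torus k, f z * conj (eChar ξ.1 z.1 * eChar ξ.2 z.2)

/-- The frequency box `ℤ^m ∩ [-N,N]^m`. -/
def box (m N : ℕ) : Finset (Fin m → ℤ) :=
  Finset.Icc (fun _ => -(N : ℤ)) (fun _ => (N : ℤ))

/-- The mixed norm `‖f‖_{L^r_x L^s_y}` on `𝕋^m × 𝕋^k`, valued in `ℝ≥0∞`. -/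
def mixedNorm {m k : ℕ} (r s : ℝ≥0∞) (f : Torus m × Torus k → ℂ) : ℝ≥0∞ :=
  eNorm r volume (fun x => eNorm s volume (fun y => (‖f (x, y)‖₊ : ℝ≥0∞)))

/-- The frequency-truncated Schrödinger propagator `e^{-itΔ}P_{≤N} f` on `𝕋^m × 𝕋^k`,
given on the Fourier side by multiplication with `e^{2πit|ξ|²} 𝟙_{[-N,N]^d}(ξ)`. -/
def prp {m k : ℕ} (N : ℕ) (t : ℝ) (f : Torus m × Torus k → ℂ)
    (z : Torus m × Torus k) : ℂ :=
  ∑ ξ₁ ∈ box m N, ∑ ξ₂ ∈ box k N,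
    fcoef f (ξ₁, ξ₂) *
      Complex.exp (2 * Real.pi * I * t * ((∑ i, (ξ₁ i : ℝ) ^ 2) + ∑ i, (ξ₂ i : ℝ) ^ 2)) *
      (eChar ξ₁ z.1 * eChar ξ₂ z.2)

/-- The full (untruncated) Schrödinger evolution `e^{-itΔ}f` on `𝕋^m × 𝕋^k`,
with time variable on the torus `𝕋` (the phase `e^{2πit|ξ|²}` is well defined on
`𝕋` since `|ξ|² ∈ ℤ`). -/
def evol {m k : ℕ} (t : AddCircle (1 : ℝ)) (f : Torus m × Torus k → ℂ)
    (z : Torus m × Torus k) : ℂ :=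
  ∑' ξ : (Fin m → ℤ) × (Fin k → ℤ),
    fcoef f ξ * fourier ((∑ i, (ξ.1 i) ^ 2) + ∑ i, (ξ.2 i) ^ 2) t *
      (eChar ξ.1 z.1 * eChar ξ.2 z.2)

/-- The Sobolev norm `‖f‖_{H^s(𝕋^d)} = (∑_ξ (1+|ξ|²)^s |f̂(ξ)|²)^{1/2}`. -/
def sobolevNorm {m k : ℕ} (s : ℝ) (f : Torus m × Torus k → ℂ) : ℝ≥0∞ :=
  (∑' ξ : (Fin m → ℤ) × (Fin k → ℤ),
      ENNReal.ofReal
        ((1 + ((∑ i, (ξ.1 i : ℝ) ^ 2) + ∑ i, (ξ.2 i : ℝ) ^ 2)) ^ s *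
          ‖fcoef f ξ‖ ^ 2)) ^ (1 / 2 : ℝ)




/-- Uniform bound for shifted Gaussian sums. -/
lemma gauss_shift_bound : ∃ C : ℝ, 0 < C ∧ ∀ y : ℝ, 0 ≤ y → y < 1 → ∀ c : ℝ, 1 / 5 ≤ c →
    Summable (fun k : ℤ => Real.exp (-π * c * (k - y) ^ 2)) ∧
    ∑' k : ℤ, Real.exp (-π * c * (k - y) ^ 2) ≤ C := by
  have hs : Summable (fun k : ℤ => Real.exp (π / 5) * Real.exp (-π * ((1/10) * k ^ 2 - 2 * 0 * |k|))) := by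
    have := summable_pow_mul_jacobiTheta₂_term_bound 0 (T := 1/10) (by norm_num) 0
    simp only [pow_zero, one_mul] at this
    exact this.mul_left _
  have hle : ∀ y : ℝ, 0 ≤ y → y < 1 → ∀ c : ℝ, 1 / 5 ≤ c → ∀ k : ℤ,
      Real.exp (-π * c * (k - y) ^ 2) ≤
        Real.exp (π / 5) * Real.exp (-π * ((1/10) * k ^ 2 - 2 * 0 * |k|)) := by
    intro y hy0 hy1 c hc k
    rw [← Real.exp_add]
    apply Real.exp_le_exp.mpr
    have h1 : (1/10) * (k:ℝ)^2 - 1/5 ≤ c * (k - y) ^ 2 := by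
      have : (1/5) * ((k:ℝ) - y)^2 ≤ c * (k - y)^2 := by gcongr
      have h2 : (k:ℝ)^2 / 2 - 1 ≤ ((k:ℝ) - y)^2 := by nlinarith [sq_nonneg ((k:ℝ) - 2 * y)]
      linarith
    have hpi := Real.pi_pos
    nlinarith
  refine ⟨∑' k : ℤ, Real.exp (π / 5) * Real.exp (-π * ((1/10) * k ^ 2 - 2 * 0 * |k|)) + 1, ?_, ?_⟩
  · have : 0 ≤ ∑' k : ℤ, Real.exp (π / 5) * Real.exp (-π * ((1/10) * k ^ 2 - 2 * 0 * |k|)) :=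
      tsum_nonneg fun k => by positivity
    linarith
  · intro y hy0 hy1 c hc
    have hsum : Summable (fun k : ℤ => Real.exp (-π * c * (k - y) ^ 2)) :=
      Summable.of_nonneg_of_le (fun k => (Real.exp_pos _).le) (hle y hy0 hy1 c hc) hs
    refine ⟨hsum, ?_⟩
    have := hsum.tsum_le_tsum (hle y hy0 hy1 c hc) hs
    linarith

/-- Dispersive bound for the Gaussian-regularised one-dimensional Weyl sums on short times. -/
lemma theta_bound : ∃ C : ℝ, 0 < C ∧ ∀ (n : ℕ) (τ : ℝ), 0 < |τ| → |τ| ≤ ((2:ℝ) ^ n)⁻¹ →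
    ∀ y : ℝ, 0 ≤ y → y < 1 →
    ‖∑' k : ℤ, ((Real.exp (-π * (k:ℝ) ^ 2 / 4 ^ n) : ℝ) : ℂ) * cexp (2 * π * I * (((k:ℝ) ^ 2 : ℝ) : ℂ) * τ) *
      cexp (2 * π * I * k * y)‖ ≤ C * |τ| ^ (-(1/2) : ℝ) := by
  obtain ⟨C, hC, hG⟩ := gauss_shift_bound
  refine ⟨C, hC, ?_⟩
  intro n τ hτ0 hτ y hy0 hy1
  set w : ℂ := 2 * τ + I * (((4:ℝ)^n)⁻¹ : ℝ) with hw
  have hgen : ∀ b : ℝ, ((2:ℂ) * τ + I * (b : ℂ)).re = 2 * τ ∧ ((2:ℂ) * τ + I * (b : ℂ)).im = b := by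
    intro b; simp
  have hwre : w.re = 2 * τ := (hgen _).1
  have hwim : w.im = ((4:ℝ)^n)⁻¹ := (hgen _).2
  have hwim0 : 0 < w.im := by rw [hwim]; positivity
  have hw0 : w ≠ 0 := by intro h; rw [h] at hwim0; simp at hwim0
  have hterm : ∀ k : ℤ, ((Real.exp (-π * (k:ℝ) ^ 2 / 4 ^ n) : ℝ) : ℂ) * cexp (2 * π * I * (((k:ℝ) ^ 2 : ℝ) : ℂ) * τ) *
      cexp (2 * π * I * k * y) = jacobiTheta₂_term k y w := by
    intro k
    rw [jacobiTheta₂_term, hw, Complex.ofReal_exp, ← Complex.exp_add, ← Complex.exp_add]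
    congr 1
    push_cast
    have : I * I = -1 := I_mul_I
    field_simp
    ring_nf
    simp only [I_sq]
    ring
  simp_rw [hterm]
  change ‖jacobiTheta₂ y w‖ ≤ _
  rw [jacobiTheta₂_functional_equation, mul_assoc, norm_mul]
  have hsqn : normSq w ≤ 5 * ((4:ℝ)^n)⁻¹ := by
    rw [normSq_apply, hwre, hwim]
    have h4 : ((4:ℝ)^n) = (2:ℝ)^n * 2^n := by rw [← mul_pow]; norm_num
    have h1 : τ * τ ≤ ((4:ℝ)^n)⁻¹ := by
      rw [h4, mul_inv, ← abs_mul_abs_self]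
      exact mul_le_mul hτ hτ (abs_nonneg _) (by positivity)
    have h2 : ((4:ℝ)^n)⁻¹ ≤ 1 := inv_le_one_of_one_le₀ (one_le_pow₀ (by norm_num))
    have h3 : 0 < ((4:ℝ)^n)⁻¹ := by positivity
    nlinarith
  have hnsq0 : 0 < normSq w := normSq_pos.mpr hw0
  set c : ℝ := w.im / normSq w with hc
  have hc5 : 1 / 5 ≤ c := by
    rw [hc, hwim, div_le_div_iff₀ (by norm_num) hnsq0]
    linarith
  obtain ⟨hsum, hbd⟩ := hG y hy0 hy1 c hc5
  have hnorm : ∀ k : ℤ, ‖cexp (-π * I * (y:ℂ) ^ 2 / w) * jacobiTheta₂_term k (y / w) (-1 / w)‖ =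
      Real.exp (-π * c * (k - y) ^ 2) := by
    intro k
    rw [jacobiTheta₂_term, ← Complex.exp_add, Complex.norm_exp]
    congr 1
    have : (-π * I * (y:ℂ) ^ 2 / w + (2 * π * I * k * (y / w) + π * I * k ^ 2 * (-1 / w)))
        = ((-π * (k - y)^2 : ℝ) : ℂ) * (I * w⁻¹) := by
      push_cast
      field_simp
      ring
    rw [this, re_ofReal_mul, I_mul_re, inv_im, hc]
    ring
  have h1 : ‖cexp (-π * I * (y:ℂ) ^ 2 / w) * jacobiTheta₂ (y / w) (-1 / w)‖ ≤ C := by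
    rw [jacobiTheta₂, ← tsum_mul_left]
    refine (norm_tsum_le_tsum_norm ?_).trans ?_
    · simp_rw [hnorm]; exact hsum
    · simp_rw [hnorm]; exact hbd
  have h2 : ‖1 / (-I * w) ^ (1 / 2 : ℂ)‖ ≤ |τ| ^ (-(1/2) : ℝ) := by
    rw [norm_div, norm_one]
    have e1 : ((1:ℂ)/2) = (((1/2 : ℝ)) : ℂ) := by push_cast; rfl
    rw [e1, Complex.norm_cpow_real, norm_mul, norm_neg, norm_I, one_mul, Real.rpow_neg (abs_nonneg _),
      one_div]
    apply inv_anti₀ (by positivity)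
    apply Real.rpow_le_rpow (abs_nonneg _) _ (by norm_num)
    have := Complex.abs_re_le_norm w
    rw [hwre, abs_mul] at this
    have h2 : |(2:ℝ)| = 2 := by norm_num
    rw [h2] at this
    linarith [abs_nonneg τ]
  calc _ ≤ |τ| ^ (-(1/2) : ℝ) * C := mul_le_mul h2 h1 (norm_nonneg _) (by positivity)
    _ = _ := mul_comm _ _



/-- The Gaussian-damped Schrödinger multiplier. -/
def cf (n : ℕ) (τ l : ℝ) : ℂ := ((Real.exp (-π * l / 4 ^ n) : ℝ) : ℂ) * cexp (2 * π * I * (l : ℂ) * τ)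

lemma cf_add (n : ℕ) (τ l l' : ℝ) : cf n τ (l + l') = cf n τ l * cf n τ l' := by
  unfold cf
  have h1 : Real.exp (-π * (l + l') / 4 ^ n) = Real.exp (-π * l / 4 ^ n) * Real.exp (-π * l' / 4 ^ n) := by
    rw [← Real.exp_add]; congr 1; ring
  have h2 : cexp (2 * π * I * ((l + l' : ℝ) : ℂ) * τ)
      = cexp (2 * π * I * (l : ℂ) * τ) * cexp (2 * π * I * (l' : ℂ) * τ) := by
    rw [← Complex.exp_add]; congr 1; push_cast; ring
  rw [h1, h2]; push_cast; ring

lemma cf_norm (n : ℕ) (τ l : ℝ) : ‖cf n τ l‖ = Real.exp (-π * l / 4 ^ n) := by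
  unfold cf
  rw [norm_mul, Complex.norm_real, Complex.norm_exp]
  simp [abs_of_pos (Real.exp_pos _)]

lemma cf_zero (n : ℕ) (τ : ℝ) : cf n τ 0 = 1 := by simp [cf]

/-- A dispersive orthonormal system of dimension `m`. -/
structure DSys {X A : Type} [MeasurableSpace X] (μ : Measure X) (e : A → X → ℂ) (l : A → ℝ) (m : ℝ) :
    Prop where
  meas : ∀ a, Measurable (e a)
  norm_one : ∀ a x, ‖e a x‖ = 1
  orth : ∀ a b, a ≠ b → ∫ x, e a x * conj (e b x) ∂μ = 0
  l_nonneg : ∀ a, 0 ≤ l a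
  summ : ∀ ε : ℝ, 0 < ε → Summable fun a => Real.exp (-ε * l a)
  disp : ∃ C : ℝ, 0 < C ∧ ∀ (n : ℕ) (τ : ℝ), 0 < |τ| → |τ| ≤ ((2:ℝ) ^ n)⁻¹ → ∀ x x' : X,
    ‖∑' a, cf n τ (l a) * (e a x * conj (e a x'))‖ ≤ C * |τ| ^ (-m / 2)

lemma DSys.summ_cf {X A : Type} [MeasurableSpace X] {μ : Measure X} {e : A → X → ℂ} {l : A → ℝ} {m : ℝ}
    (h : DSys μ e l m) (n : ℕ) (τ : ℝ) : Summable fun a => ‖cf n τ (l a)‖ := by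
  have := h.summ (π / 4 ^ n) (by positivity)
  simp_rw [cf_norm]
  convert this using 3
  ring

lemma DSys.unit {X A : Type} [MeasurableSpace X] [Unique A] (μ : Measure X) (e : A → X → ℂ) (l : A → ℝ)
    (he : ∀ a x, e a x = 1) (hl : ∀ a, l a = 0) : DSys μ e l 0 where
  meas a := by
    have : e a = fun _ => 1 := funext (he a)
    rw [this]; exact measurable_const
  norm_one a x := by rw [he]; simp
  orth a b hab := absurd (Subsingleton.elim a b) hab
  l_nonneg a := (hl a).ge
  summ ε _ := by exact Summable.of_finite
  disp := by
    refine ⟨1, one_pos, fun n τ _ _ x x' => ?_⟩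
    simp [he, hl, cf_zero, tsum_fintype]

lemma DSys.prod {X A Y B : Type} [MeasurableSpace X] [MeasurableSpace Y] {μ : Measure X} {ν : Measure Y}
    [IsProbabilityMeasure μ] [IsProbabilityMeasure ν]
    {e : A → X → ℂ} {l : A → ℝ} {m : ℝ} {e' : B → Y → ℂ} {l' : B → ℝ} {k : ℝ}
    (h : DSys μ e l m) (h' : DSys ν e' l' k) :
    DSys (μ.prod ν) (fun (a : A × B) (z : X × Y) => e a.1 z.1 * e' a.2 z.2) (fun a => l a.1 + l' a.2)
      (m + k) where
  meas a := ((h.meas a.1).comp measurable_fst).mul ((h'.meas a.2).comp measurable_snd)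
  norm_one a x := by rw [norm_mul, h.norm_one, h'.norm_one, one_mul]
  orth a b hab := by
    have : ∀ z : X × Y, e a.1 z.1 * e' a.2 z.2 * conj (e b.1 z.1 * e' b.2 z.2)
        = (e a.1 z.1 * conj (e b.1 z.1)) * (e' a.2 z.2 * conj (e' b.2 z.2)) := by
      intro z; rw [map_mul]; ring
    simp_rw [this]
    rw [integral_prod_mul (fun x => e a.1 x * conj (e b.1 x)) (fun y => e' a.2 y * conj (e' b.2 y))]
    by_cases h1 : a.1 = b.1
    · have h2 : a.2 ≠ b.2 := fun h2 => hab (Prod.ext h1 h2)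
      rw [h'.orth _ _ h2, mul_zero]
    · rw [h.orth _ _ h1, zero_mul]
  l_nonneg a := add_nonneg (h.l_nonneg _) (h'.l_nonneg _)
  summ ε hε := by
    have := (h.summ ε hε).mul_of_nonneg (h'.summ ε hε) (fun _ => (Real.exp_pos _).le)
      (fun _ => (Real.exp_pos _).le)
    convert this using 2 with a
    rw [← Real.exp_add]; congr 1; ring
  disp := by
    obtain ⟨C, hC, H⟩ := h.disp
    obtain ⟨C', hC', H'⟩ := h'.disp
    refine ⟨C * C', mul_pos hC hC', fun n τ h0 h1 x x' => ?_⟩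
    have e1 : ∀ a : A × B, cf n τ (l a.1 + l' a.2) * (e a.1 x.1 * e' a.2 x.2 * conj (e a.1 x'.1 * e' a.2 x'.2))
        = (cf n τ (l a.1) * (e a.1 x.1 * conj (e a.1 x'.1))) *
          (cf n τ (l' a.2) * (e' a.2 x.2 * conj (e' a.2 x'.2))) := by
      intro a; rw [cf_add, map_mul]; ring
    simp_rw [e1]
    rw [← tsum_mul_tsum_of_summable_norm (f := fun a => cf n τ (l a) * (e a x.1 * conj (e a x'.1)))
      (g := fun b => cf n τ (l' b) * (e' b x.2 * conj (e' b x'.2))), norm_mul]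
    · calc _ ≤ (C * |τ| ^ (-m / 2)) * (C' * |τ| ^ (-k / 2)) :=
            mul_le_mul (H n τ h0 h1 _ _) (H' n τ h0 h1 _ _) (norm_nonneg _) (by positivity)
        _ = C * C' * |τ| ^ (-(m + k) / 2) := by
            have : -(m + k) / 2 = -m / 2 + -k / 2 := by ring
            rw [this, Real.rpow_add h0]; ring
    · convert h.summ_cf n τ using 2 with a
      rw [norm_mul, norm_mul, RCLike.norm_conj, h.norm_one, h.norm_one]; ring
    · convert h'.summ_cf n τ using 2 with a
      rw [norm_mul, norm_mul, RCLike.norm_conj, h'.norm_one, h'.norm_one]; ring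

lemma DSys.transfer {X A X' A' : Type} [MeasurableSpace X] [MeasurableSpace X'] {μ : Measure X}
    {μ' : Measure X'} {e : A → X → ℂ} {l : A → ℝ} {m : ℝ} (h : DSys μ e l m)
    (φ : X' ≃ᵐ X) (hφ : MeasurePreserving φ μ' μ) (ι : A' ≃ A) (e' : A' → X' → ℂ) (l' : A' → ℝ)
    (he : ∀ a x, e' a x = e (ι a) (φ x)) (hl : ∀ a, l' a = l (ι a)) : DSys μ' e' l' m where
  meas a := by
    have : e' a = fun x => e (ι a) (φ x) := funext (he a)
    rw [this]; exact (h.meas _).comp φ.measurable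
  norm_one a x := by rw [he, h.norm_one]
  orth a b hab := by
    simp_rw [he]
    rw [hφ.integral_comp' (fun x => e (ι a) x * conj (e (ι b) x))]
    exact h.orth _ _ (fun hh => hab (ι.injective hh))
  l_nonneg a := by rw [hl]; exact h.l_nonneg _
  summ ε hε := by
    simp_rw [hl]
    exact (ι.summable_iff (f := fun a => Real.exp (-ε * l a))).mpr (h.summ ε hε)
  disp := by
    obtain ⟨C, hC, H⟩ := h.disp
    refine ⟨C, hC, fun n τ h0 h1 x x' => ?_⟩
    simp_rw [he, hl]
    rw [ι.tsum_eq (fun a => cf n τ (l a) * (e a (φ x) * conj (e a (φ x'))))]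
    exact H n τ h0 h1 _ _

lemma DSys.circle : DSys (volume : Measure (AddCircle (1:ℝ))) (fun (k : ℤ) x => fourier k x)
    (fun k => (k:ℝ) ^ 2) 1 where
  meas a := (map_continuous (fourier a)).measurable
  norm_one a x := by rw [fourier_apply]; exact Circle.norm_coe _
  orth a b hab := by
    have h0 : a + -b ≠ 0 := by omega
    have : ∀ x : AddCircle (1:ℝ), fourier a x * conj (fourier b x) = fourier (a + -b) x := by
      intro x; rw [fourier_add, fourier_neg]
    simp_rw [this]
    exact integral_eq_zero_of_add_right_eq_neg (μ := volume) (fourier_add_half_inv_index h0 (by norm_num))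
  l_nonneg a := by positivity
  summ ε hε := by
    have := summable_pow_mul_jacobiTheta₂_term_bound 0 (T := ε / π) (by positivity) 0
    simp only [pow_zero, one_mul] at this
    convert this using 3 with k
    have := Real.pi_ne_zero
    field_simp
    ring
  disp := by
    obtain ⟨C, hC, H⟩ := theta_bound
    refine ⟨C, hC, fun n τ h0 h1 x x' => ?_⟩
    obtain ⟨y, hy⟩ : ∃ y : ℝ, (0 ≤ y ∧ y < 1) ∧ (y : AddCircle (1:ℝ)) = x - x' := by
      have := (AddCircle.coe_image_Ico_eq (1:ℝ) 0)
      have h2 : x - x' ∈ Set.image ((↑) : ℝ → AddCircle (1:ℝ)) (Set.Ico 0 (0 + 1)) := by rw [this]; trivial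
      obtain ⟨y, hy, hy2⟩ := h2
      exact ⟨y, ⟨hy.1, by linarith [hy.2]⟩, hy2⟩
    have := H n τ h0 h1 y hy.1.1 hy.1.2
    have e2 : (-1 / 2 : ℝ) = -(1/2) := by ring
    rw [e2]
    convert this using 5 with k
    · simp only [cf]
    · have h3 : conj (fourier k x') = fourier k (-x') := by
        rw [← fourier_neg, fourier_apply, fourier_apply, neg_smul, smul_neg]
      have h4 : fourier k x * fourier k (-x') = fourier k (x + -x') := by
        rw [fourier_apply, fourier_apply, fourier_apply, smul_add, AddCircle.toCircle_add, Circle.coe_mul]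
      refine (congrArg _ h3).trans (h4.trans ?_)
      rw [← sub_eq_add_neg, ← hy.2, fourier_coe_apply]
      congr 1
      push_cast
      ring

instance : IsProbabilityMeasure (volume : Measure (AddCircle (1:ℝ))) :=
  ⟨by simp [AddCircle.measure_univ]⟩

lemma DSys.torus (m : ℕ) : DSys (volume : Measure (Torus m)) (fun ξ z => eChar ξ z)
    (fun ξ => ∑ i, (ξ i : ℝ) ^ 2) m := by
  induction m with
  | zero =>
    have := DSys.unit (volume : Measure (Torus 0)) (fun ξ z => eChar ξ z) (fun ξ => ∑ i, (ξ i : ℝ) ^ 2)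
      (by simp [eChar]) (by simp)
    simpa using this
  | succ m ih =>
    have h := DSys.circle.prod ih
    have h2 := h.transfer (MeasurableEquiv.piFinSuccAbove (fun _ : Fin (m+1) => AddCircle (1:ℝ)) 0)
      (volume_preserving_piFinSuccAbove (fun _ : Fin (m+1) => AddCircle (1:ℝ)) 0)
      (Fin.insertNthEquiv (fun _ => ℤ) 0).symm (fun ξ z => eChar ξ z) (fun ξ => ∑ i, (ξ i : ℝ) ^ 2)
      (by intro a x; simp [eChar, Fin.prod_univ_succ, Fin.tail, MeasurableEquiv.piFinSuccAbove])
      (by intro a; simp [Fin.sum_univ_succ, Fin.tail])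
    have e3 : ((m + 1 : ℕ) : ℝ) = 1 + (m:ℝ) := by push_cast; ring
    rw [e3]; exact h2



/-- bounded measurable functions -/
def BM {X : Type} [MeasurableSpace X] (f : X → ℂ) : Prop := Measurable f ∧ ∃ M : ℝ, ∀ x, ‖f x‖ ≤ M

lemma BM.integrable {X : Type} [MeasurableSpace X] {f : X → ℂ} (h : BM f) (μ : Measure X)
    [IsFiniteMeasure μ] : Integrable f μ := by
  obtain ⟨h1, M, hM⟩ := h
  exact Integrable.of_bound h1.aestronglyMeasurable M (Filter.Eventually.of_forall hM)

lemma BM.mul {X : Type} [MeasurableSpace X] {f g : X → ℂ} (h : BM f) (h' : BM g) :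
    BM (fun x => f x * g x) := by
  obtain ⟨h1, M, hM⟩ := h
  obtain ⟨h1', M', hM'⟩ := h'
  refine ⟨h1.mul h1', M * M', fun x => ?_⟩
  rw [norm_mul]
  exact mul_le_mul (hM x) (hM' x) (norm_nonneg _) ((norm_nonneg _).trans (hM x))

lemma BM.add {X : Type} [MeasurableSpace X] {f g : X → ℂ} (h : BM f) (h' : BM g) :
    BM (fun x => f x + g x) := by
  obtain ⟨h1, M, hM⟩ := h
  obtain ⟨h1', M', hM'⟩ := h'
  exact ⟨h1.add h1', M + M', fun x => (norm_add_le _ _).trans (add_le_add (hM x) (hM' x))⟩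

lemma BM.conj {X : Type} [MeasurableSpace X] {f : X → ℂ} (h : BM f) :
    BM (fun x => conj (f x)) := by
  obtain ⟨h1, M, hM⟩ := h
  exact ⟨Complex.continuous_conj.measurable.comp h1, M, fun x => by rw [RCLike.norm_conj]; exact hM x⟩

lemma BM.indicator {X : Type} [MeasurableSpace X] {f : X → ℂ} (h : BM f) {s : Set X}
    (hs : MeasurableSet s) : BM (s.indicator f) := by
  obtain ⟨h1, M, hM⟩ := h
  exact ⟨h1.indicator hs, M, fun x => (norm_indicator_le_norm_self _ _).trans (hM x)⟩

lemma BM.comp {X Y : Type} [MeasurableSpace X] [MeasurableSpace Y] {f : X → ℂ} (h : BM f) {φ : Y → X}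
    (hφ : Measurable φ) : BM (fun y => f (φ y)) :=
  ⟨h.1.comp hφ, h.2.choose, fun _ => h.2.choose_spec _⟩

lemma DSys.bm {X A : Type} [MeasurableSpace X] {μ : Measure X} {e : A → X → ℂ} {l : A → ℝ} {m : ℝ}
    (h : DSys μ e l m) (a : A) : BM (e a) := ⟨h.meas a, 1, fun x => (h.norm_one a x).le⟩

/-- `L^p` norm for a nonnegative function. -/
def nr {X : Type} [MeasurableSpace X] (p : ℝ) (μ : Measure X) (g : X → ℝ≥0∞) : ℝ≥0∞ :=
  (∫⁻ x, g x ^ p ∂μ) ^ (1 / p)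

/-- mixed norm for a nonnegative function. -/
def nr2 {X Y : Type} [MeasurableSpace X] [MeasurableSpace Y] (s p : ℝ) (μ : Measure X) (ν : Measure Y)
    (g : X × Y → ℝ≥0∞) : ℝ≥0∞ :=
  nr s μ (fun x => nr p ν (fun y => g (x, y)))

/-- generalized Fourier coefficient -/
def fc {X A : Type} [MeasurableSpace X] (μ : Measure X) (e : A → X → ℂ) (f : X → ℂ) (a : A) : ℂ :=
  ∫ x, f x * conj (e a x) ∂μ

/-- the sesquilinear form of the propagator -/
def Bf {X A : Type} [MeasurableSpace X] (μ : Measure X) (e : A → X → ℂ) (l : A → ℝ) (n : ℕ) (τ : ℝ)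
    (f g : X → ℂ) : ℂ := ∑' a, cf n τ (l a) * (fc μ e f a * conj (fc μ e g a))

lemma tsum_mul_le_sqrt {A : Type} (f g : A → ℝ≥0∞) :
    ∑' a, f a * g a ≤ (∑' a, f a ^ (2:ℝ)) ^ (1 / 2 : ℝ) * (∑' a, g a ^ (2:ℝ)) ^ (1 / 2 : ℝ) := by
  rw [ENNReal.tsum_eq_iSup_sum]
  refine iSup_le fun s => ?_
  refine (ENNReal.inner_le_Lp_mul_Lq s f g (by constructor <;> norm_num : Real.HolderConjugate 2 2)).trans ?_
  gcongr <;> exact ENNReal.sum_le_tsum s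

lemma DSys.bessel {X A : Type} [MeasurableSpace X] {μ : Measure X} [IsProbabilityMeasure μ]
    {e : A → X → ℂ} {l : A → ℝ} {m : ℝ}
    (h : DSys μ e l m) {f : X → ℂ} (hf : BM f) :
    ∑' a, ‖fc μ e f a‖ₑ ^ (2:ℝ) ≤ ∫⁻ x, ‖f x‖ₑ ^ (2:ℝ) ∂μ := by
  have ml : ∀ {g : X → ℂ}, BM g → MemLp g 2 μ := by
    intro g hg
    obtain ⟨h1, M, hM⟩ := hg
    exact MemLp.of_bound h1.aestronglyMeasurable M (Filter.Eventually.of_forall hM)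
  let E : A → Lp ℂ 2 μ := fun a => (ml (h.bm a)).toLp
  let F : Lp ℂ 2 μ := (ml hf).toLp
  have hin : ∀ {u v : X → ℂ} (hu : BM u) (hv : BM v), inner ℂ ((ml hu).toLp) ((ml hv).toLp)
      = ∫ x, v x * conj (u x) ∂μ := by
    intro u v hu hv
    rw [L2.inner_def]
    apply integral_congr_ae
    filter_upwards [(ml hu).coeFn_toLp, (ml hv).coeFn_toLp] with x h1 h2
    rw [h1, h2]; rfl
  have hE : Orthonormal ℂ E := by
    constructor
    · intro a
      have := hin (h.bm a) (h.bm a)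
      have h1 : ∀ x, e a x * conj (e a x) = 1 := by
        intro x; rw [Complex.mul_conj, Complex.normSq_eq_norm_sq, h.norm_one]; simp
      simp_rw [h1] at this
      rw [inner_self_eq_norm_sq_to_K] at this
      simp only [integral_const, probReal_univ, one_smul] at this
      have h3 : ‖E a‖ ^ 2 = 1 := by
        have h4 : ((‖E a‖ ^ 2 : ℝ) : ℂ) = ((1 : ℝ) : ℂ) := by
          rw [Complex.ofReal_pow, Complex.ofReal_one]; exact this
        exact Complex.ofReal_injective h4
      nlinarith [norm_nonneg (E a)]
    · intro a b hab
      exact (hin (h.bm a) (h.bm b)).trans (h.orth b a hab.symm)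
  have hfc : ∀ a, inner ℂ (E a) F = fc μ e f a := fun a => hin (h.bm a) hf
  have hb := hE.tsum_inner_products_le F
  have hs := hE.inner_products_summable F
  simp_rw [hfc] at hb hs
  have h1 : ∑' a, ‖fc μ e f a‖ₑ ^ (2:ℝ) = ENNReal.ofReal (∑' a, ‖fc μ e f a‖ ^ 2) := by
    rw [ENNReal.ofReal_tsum_of_nonneg (fun a => by positivity) hs]
    congr 1; ext1 a
    rw [← ofReal_norm, ENNReal.ofReal_rpow_of_nonneg (norm_nonneg _) (by norm_num)]
    norm_num
  rw [h1]
  refine (ENNReal.ofReal_le_ofReal hb).trans ?_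
  rw [ENNReal.ofReal_pow (norm_nonneg _), ofReal_norm, Lp.enorm_def,
    eLpNorm_eq_lintegral_rpow_enorm_toReal (by norm_num) (by norm_num), ← ENNReal.rpow_natCast,
    ← ENNReal.rpow_mul]
  simp only [ENNReal.toReal_ofNat]
  norm_num
  apply le_of_eq
  apply lintegral_congr_ae
  filter_upwards [(ml hf).coeFn_toLp] with x h1
  rw [h1]

lemma norm_fc_le {X A : Type} [MeasurableSpace X] {μ : Measure X} [IsProbabilityMeasure μ]
    {e : A → X → ℂ} {l : A → ℝ} {m : ℝ} (h : DSys μ e l m) {f : X → ℂ} {M : ℝ} (hM : ∀ x, ‖f x‖ ≤ M)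
    (a : A) : ‖fc μ e f a‖ ≤ M := by
  have := norm_integral_le_of_norm_le_const (μ := μ) (f := fun x => f x * conj (e a x)) (C := M)
    (Filter.Eventually.of_forall fun x => by
      rw [norm_mul, RCLike.norm_conj, h.norm_one, mul_one]; exact hM x)
  simpa [fc] using this

lemma fc_add {X A : Type} [MeasurableSpace X] {μ : Measure X} [IsProbabilityMeasure μ]
    {e : A → X → ℂ} {l : A → ℝ} {m : ℝ} (h : DSys μ e l m) {f g : X → ℂ} (hf : BM f) (hg : BM g)
    (a : A) : fc μ e (fun x => f x + g x) a = fc μ e f a + fc μ e g a := by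
  unfold fc
  rw [← integral_add ((hf.mul (h.bm a).conj).integrable μ) ((hg.mul (h.bm a).conj).integrable μ)]
  congr 1; ext1 x; ring

lemma Bf_summable {X A : Type} [MeasurableSpace X] {μ : Measure X} [IsProbabilityMeasure μ]
    {e : A → X → ℂ} {l : A → ℝ} {m : ℝ} (h : DSys μ e l m) {f g : X → ℂ} (hf : BM f) (hg : BM g)
    (n : ℕ) (τ : ℝ) : Summable fun a => cf n τ (l a) * (fc μ e f a * conj (fc μ e g a)) := by
  obtain ⟨h1, M, hM⟩ := hf
  obtain ⟨h1', M', hM'⟩ := hg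
  refine Summable.of_norm_bounded ((h.summ_cf n τ).mul_right (M * M')) fun a => ?_
  rw [norm_mul, norm_mul, RCLike.norm_conj]
  have := norm_fc_le h hM a
  have h2 := norm_fc_le h hM' a
  gcongr
  exact (norm_nonneg _).trans this

lemma Bf_add_left {X A : Type} [MeasurableSpace X] {μ : Measure X} [IsProbabilityMeasure μ]
    {e : A → X → ℂ} {l : A → ℝ} {m : ℝ} (h : DSys μ e l m) {f f' g : X → ℂ} (hf : BM f) (hf' : BM f')
    (hg : BM g) (n : ℕ) (τ : ℝ) :
    Bf μ e l n τ (fun x => f x + f' x) g = Bf μ e l n τ f g + Bf μ e l n τ f' g := by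
  unfold Bf
  rw [← (Bf_summable h hf hg n τ).tsum_add (Bf_summable h hf' hg n τ)]
  congr 1; ext1 a; rw [fc_add h hf hf']; ring

lemma Bf_add_right {X A : Type} [MeasurableSpace X] {μ : Measure X} [IsProbabilityMeasure μ]
    {e : A → X → ℂ} {l : A → ℝ} {m : ℝ} (h : DSys μ e l m) {f g g' : X → ℂ} (hf : BM f) (hg' : BM g')
    (hg : BM g) (n : ℕ) (τ : ℝ) :
    Bf μ e l n τ f (fun x => g x + g' x) = Bf μ e l n τ f g + Bf μ e l n τ f g' := by
  unfold Bf
  rw [← (Bf_summable h hf hg n τ).tsum_add (Bf_summable h hf hg' n τ)]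
  congr 1; ext1 a; rw [fc_add h hg hg', map_add]; ring

lemma enorm_tsum_le' {A : Type} (f : A → ℂ) : ‖∑' a, f a‖ₑ ≤ ∑' a, ‖f a‖ₑ := by
  by_cases h : Summable fun a => ‖f a‖
  · have := norm_tsum_le_tsum_norm h
    rw [← ofReal_norm]
    refine (ENNReal.ofReal_le_ofReal this).trans ?_
    rw [ENNReal.ofReal_tsum_of_nonneg (fun a => norm_nonneg _) h]
    simp_rw [ofReal_norm]; exact le_rfl
  · rw [tsum_eq_zero_of_not_summable (fun h' => h (summable_norm_iff.mpr h'))]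
    simp

lemma Bf_L2 {X A : Type} [MeasurableSpace X] {μ : Measure X} [IsProbabilityMeasure μ]
    {e : A → X → ℂ} {l : A → ℝ} {m : ℝ} (h : DSys μ e l m) {f g : X → ℂ} (hf : BM f) (hg : BM g)
    (n : ℕ) (τ : ℝ) : ‖Bf μ e l n τ f g‖ₑ ≤ nr 2 μ (fun x => ‖f x‖ₑ) * nr 2 μ (fun x => ‖g x‖ₑ) := by
  unfold Bf
  refine (enorm_tsum_le' _).trans ?_
  have h1 : ∀ a, ‖cf n τ (l a) * (fc μ e f a * conj (fc μ e g a))‖ₑ ≤ ‖fc μ e f a‖ₑ * ‖fc μ e g a‖ₑ := by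
    intro a
    rw [enorm_mul, enorm_mul]
    have h2 : ‖cf n τ (l a)‖ₑ ≤ 1 := by
      rw [← ofReal_norm, cf_norm, ENNReal.ofReal_le_one, Real.exp_le_one_iff]
      have := h.l_nonneg a
      have := Real.pi_pos
      rw [div_nonpos_iff]; right
      exact ⟨by nlinarith, by positivity⟩
    have h3 : ‖conj (fc μ e g a)‖ₑ = ‖fc μ e g a‖ₑ := by
      rw [← ofReal_norm, RCLike.norm_conj, ofReal_norm]
    rw [h3]
    calc _ ≤ 1 * (‖fc μ e f a‖ₑ * ‖fc μ e g a‖ₑ) := by gcongr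
      _ = _ := one_mul _
  refine (ENNReal.tsum_le_tsum h1).trans ?_
  refine (tsum_mul_le_sqrt _ _).trans ?_
  unfold nr
  gcongr
  · exact h.bessel hf
  · exact h.bessel hg

/-- Exchange of sum and double integral. -/
lemma exchange {X A : Type} [MeasurableSpace X] [Countable A] (μ : Measure X) [IsFiniteMeasure μ]
    (c : A → ℂ) (hc : Summable fun a => ‖c a‖) (U V : A → X → ℂ) (hU : ∀ a, Measurable (U a))
    (hV : ∀ a, Measurable (V a)) (M M' : ℝ) (hM : ∀ a x, ‖U a x‖ ≤ M) (hM' : ∀ a x, ‖V a x‖ ≤ M') :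
    ‖∑' a, c a * ((∫ x, U a x ∂μ) * conj (∫ x, V a x ∂μ))‖ₑ ≤
      ∫⁻ x, ∫⁻ x', ‖∑' a, c a * (U a x * conj (V a x'))‖ₑ ∂μ ∂μ := by
  have bU : ∀ a, BM (U a) := fun a => ⟨hU a, M, hM a⟩
  have bV : ∀ a, BM (V a) := fun a => ⟨hV a, M', hM' a⟩
  let G : A → X × X → ℂ := fun a z => c a * (U a z.1 * conj (V a z.2))
  have hG1 : ∀ a, BM (G a) := fun a => by
    have h1 : BM (fun z : X × X => U a z.1) := (bU a).comp measurable_fst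
    have h2 : BM (fun z : X × X => conj (V a z.2)) := ((bV a).comp measurable_snd).conj
    have h3 : BM (fun z : X × X => c a) := ⟨measurable_const, ‖c a‖, fun _ => le_rfl⟩
    exact h3.mul (h1.mul h2)
  have hGn : ∀ a z, ‖G a z‖ ≤ ‖c a‖ * (M * M') := by
    intro a z
    simp only [G]
    rw [norm_mul, norm_mul, RCLike.norm_conj]
    gcongr
    · exact (norm_nonneg _).trans (hM a z.1)
    · exact hM a z.1
    · exact hM' a z.2
  have hintg : ∀ a, ∫ z, G a z ∂(μ.prod μ) = c a * ((∫ x, U a x ∂μ) * conj (∫ x, V a x ∂μ)) := by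
    intro a
    simp only [G]
    rw [integral_const_mul, integral_prod_mul (fun x => U a x) (fun x => conj (V a x)), integral_conj]
  have key := hasSum_integral_of_summable_integral_norm (F := G) (μ := μ.prod μ)
    (fun a => (hG1 a).integrable _) (by
      refine Summable.of_nonneg_of_le (fun a => integral_nonneg fun _ => norm_nonneg _) (fun a => ?_)
        ((hc.mul_right (M * M')).mul_right ((μ.prod μ).real Set.univ))
      have := integral_mono_of_nonneg (μ := μ.prod μ) (f := fun z => ‖G a z‖) (g := fun _ => ‖c a‖ * (M * M'))
        (Filter.Eventually.of_forall fun _ => norm_nonneg _) (integrable_const _)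
        (Filter.Eventually.of_forall (hGn a))
      refine this.trans ?_
      rw [integral_const, smul_eq_mul, mul_comm])
  simp_rw [hintg] at key
  rw [key.tsum_eq]
  refine (enorm_integral_le_lintegral_enorm _).trans ?_
  exact lintegral_prod_le _

lemma nr_one {X : Type} [MeasurableSpace X] (μ : Measure X) (g : X → ℝ≥0∞) :
    nr 1 μ g = ∫⁻ x, g x ∂μ := by simp [nr]

lemma disp_enorm {X A : Type} [MeasurableSpace X] {μ : Measure X}
    {e : A → X → ℂ} {l : A → ℝ} {m : ℝ} (h : DSys μ e l m) : ∃ C : ℝ, 0 < C ∧ ∀ (n : ℕ) (τ : ℝ),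
    0 < |τ| → |τ| ≤ ((2:ℝ) ^ n)⁻¹ → ∀ x x' : X,
    ‖∑' a, cf n τ (l a) * (conj (e a x) * e a x')‖ₑ ≤ ENNReal.ofReal (C * |τ| ^ (-m / 2)) := by
  obtain ⟨C, hC, H⟩ := h.disp
  refine ⟨C, hC, fun n τ h0 h1 x x' => ?_⟩
  rw [← ofReal_norm]
  apply ENNReal.ofReal_le_ofReal
  have := H n τ h0 h1 x' x
  simpa only [mul_comm (e _ x')] using this

lemma Bf_L1 {X A : Type} [MeasurableSpace X] [Countable A] {μ : Measure X} [IsProbabilityMeasure μ]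
    {e : A → X → ℂ} {l : A → ℝ} {m : ℝ} (h : DSys μ e l m) : ∃ C : ℝ, 0 < C ∧ ∀ (n : ℕ) (τ : ℝ),
    0 < |τ| → |τ| ≤ ((2:ℝ) ^ n)⁻¹ → ∀ {f g : X → ℂ}, BM f → BM g →
    ‖Bf μ e l n τ f g‖ₑ ≤ ENNReal.ofReal (C * |τ| ^ (-m / 2)) *
      nr 1 μ (fun x => ‖f x‖ₑ) * nr 1 μ (fun x => ‖g x‖ₑ) := by
  obtain ⟨C, hC, H⟩ := disp_enorm h
  refine ⟨C, hC, fun n τ h0 h1 {f g} hf hg => ?_⟩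
  obtain ⟨h3, M, hM⟩ := hf
  obtain ⟨h3', M', hM'⟩ := hg
  refine (exchange μ (fun a => cf n τ (l a)) (h.summ_cf n τ) (fun a x => f x * conj (e a x))
    (fun a x => g x * conj (e a x)) (fun a => h3.mul (h.bm a).conj.1) (fun a => h3'.mul (h.bm a).conj.1) M M'
    (fun a x => by rw [norm_mul, RCLike.norm_conj, h.norm_one, mul_one]; exact hM x)
    (fun a x => by rw [norm_mul, RCLike.norm_conj, h.norm_one, mul_one]; exact hM' x)).trans ?_
  rw [nr_one, nr_one, ← lintegral_const_mul _ h3.enorm, ← lintegral_mul_const _ (by fun_prop)]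
  apply lintegral_mono
  intro x
  simp only
  rw [← lintegral_const_mul _ h3'.enorm]
  apply lintegral_mono
  intro x'
  simp only
  have e1 : ∀ a, cf n τ (l a) * (f x * conj (e a x) * conj (g x' * conj (e a x'))) =
      (f x * conj (g x')) * (cf n τ (l a) * (conj (e a x) * e a x')) := by
    intro a; rw [map_mul, Complex.conj_conj]; ring
  simp_rw [e1]
  rw [tsum_mul_left, enorm_mul, enorm_mul]
  have e2 : ‖conj (g x')‖ₑ = ‖g x'‖ₑ := by
    rw [← ofReal_norm, RCLike.norm_conj, ofReal_norm]
  rw [e2]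
  calc _ ≤ ‖f x‖ₑ * ‖g x'‖ₑ * ENNReal.ofReal (C * |τ| ^ (-m / 2)) := by
        gcongr; exact H n τ h0 h1 x x'
    _ = _ := by ring


lemma Bf_pair {X A Y B : Type} [MeasurableSpace X] [MeasurableSpace Y] [Countable A] [Countable B]
    {μ : Measure X} {ν : Measure Y}
    [IsProbabilityMeasure μ] [IsProbabilityMeasure ν]
    {e : A → X → ℂ} {l : A → ℝ} {m : ℝ} {e' : B → Y → ℂ} {l' : B → ℝ} {k : ℝ}
    (h : DSys μ e l m) (h' : DSys ν e' l' k) : ∃ C : ℝ, 0 < C ∧ ∀ (n : ℕ) (τ : ℝ),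
    0 < |τ| → |τ| ≤ ((2:ℝ) ^ n)⁻¹ → ∀ (p P : ℝ), (∀ {f g : Y → ℂ}, BM f → BM g →
      ‖Bf ν e' l' n τ f g‖ₑ ≤ ENNReal.ofReal P * nr p ν (fun x => ‖f x‖ₑ) * nr p ν (fun x => ‖g x‖ₑ)) →
    ∀ {f g : X × Y → ℂ}, BM f → BM g →
    ‖Bf (μ.prod ν) (fun (a : A × B) (z : X × Y) => e a.1 z.1 * e' a.2 z.2) (fun a => l a.1 + l' a.2)
      n τ f g‖ₑ ≤ ENNReal.ofReal (C * |τ| ^ (-m / 2)) * ENNReal.ofReal P *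
      nr2 1 p μ ν (fun x => ‖f x‖ₑ) * nr2 1 p μ ν (fun x => ‖g x‖ₑ) := by
  obtain ⟨C, hC, H⟩ := disp_enorm h
  refine ⟨C, hC, fun n τ h0 h1 p P hP {f g} hf hg => ?_⟩
  obtain ⟨h3, M, hM⟩ := id hf
  obtain ⟨h3', M', hM'⟩ := id hg
  have hmeas : ∀ {f : X × Y → ℂ}, BM f → ∀ a : A × B,
      Measurable (fun x => conj (e a.1 x) * fc ν e' (fun y => f (x, y)) a.2) := by
    intro f hf a
    refine (h.bm a.1).conj.1.mul ?_
    have : Measurable (fun z : X × Y => f z * conj (e' a.2 z.2)) :=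
      hf.1.mul ((h'.bm a.2).conj.1.comp measurable_snd)
    exact this.stronglyMeasurable.integral_prod_right'.measurable
  have hfc : ∀ {f : X × Y → ℂ}, BM f → ∀ a : A × B,
      fc (μ.prod ν) (fun (a : A × B) (z : X × Y) => e a.1 z.1 * e' a.2 z.2) f a =
        ∫ x, conj (e a.1 x) * fc ν e' (fun y => f (x, y)) a.2 ∂μ := by
    intro f hf a
    unfold fc
    have hb : BM (fun z : X × Y => f z * conj (e a.1 z.1 * e' a.2 z.2)) :=
      hf.mul (((h.bm a.1).comp measurable_fst).mul ((h'.bm a.2).comp measurable_snd)).conj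
    rw [integral_prod _ (hb.integrable _)]
    congr 1; ext1 x
    rw [← integral_const_mul]
    congr 1; ext1 y
    simp only [map_mul]; ring
  have hbd : ∀ {f : X × Y → ℂ} {M : ℝ}, (∀ z, ‖f z‖ ≤ M) → ∀ (a : A × B) x,
      ‖conj (e a.1 x) * fc ν e' (fun y => f (x, y)) a.2‖ ≤ M := by
    intro f M hM a x
    rw [norm_mul, RCLike.norm_conj, h.norm_one, one_mul]
    exact norm_fc_le h' (fun y => hM (x, y)) _
  unfold Bf
  simp_rw [hfc hf, hfc hg]
  refine (exchange μ (fun a : A × B => cf n τ (l a.1 + l' a.2)) ((h.prod h').summ_cf n τ)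
    (fun a x => conj (e a.1 x) * fc ν e' (fun y => f (x, y)) a.2)
    (fun a x => conj (e a.1 x) * fc ν e' (fun y => g (x, y)) a.2)
    (hmeas hf) (hmeas hg) M M' (hbd hM) (hbd hM')).trans ?_
  have hnm : ∀ {f : X × Y → ℂ}, BM f → Measurable (fun x => nr p ν (fun y => ‖f (x, y)‖ₑ)) := by
    intro f hf
    unfold nr
    exact (Measurable.lintegral_prod_right' (hf.1.enorm.pow_const p)).pow_const _
  unfold nr2
  rw [nr_one, nr_one, ← lintegral_const_mul _ (hnm hf), ← lintegral_mul_const _ ((hnm hf).const_mul _)]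
  apply lintegral_mono
  intro x
  simp only
  rw [← lintegral_const_mul _ (hnm hg)]
  apply lintegral_mono
  intro x'
  simp only
  have e1 : ∀ a : A × B, cf n τ (l a.1 + l' a.2) * (conj (e a.1 x) * fc ν e' (fun y => f (x, y)) a.2 *
      conj (conj (e a.1 x') * fc ν e' (fun y => g (x', y)) a.2)) =
      (cf n τ (l a.1) * (conj (e a.1 x) * e a.1 x')) *
      (cf n τ (l' a.2) * (fc ν e' (fun y => f (x, y)) a.2 * conj (fc ν e' (fun y => g (x', y)) a.2))) := by
    intro a; rw [cf_add, map_mul, Complex.conj_conj]; ring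
  simp_rw [e1]
  have bf : BM (fun y => f (x, y)) := hf.comp measurable_prodMk_left
  have bg : BM (fun y => g (x', y)) := hg.comp measurable_prodMk_left
  rw [← tsum_mul_tsum_of_summable_norm (f := fun a => cf n τ (l a) * (conj (e a x) * e a x'))
      (g := fun b => cf n τ (l' b) * (fc ν e' (fun y => f (x, y)) b * conj (fc ν e' (fun y => g (x', y)) b)))
      _ (Bf_summable h' bf bg n τ).norm, enorm_mul]
  · calc _ ≤ ENNReal.ofReal (C * |τ| ^ (-m / 2)) * (ENNReal.ofReal P * nr p ν (fun y => ‖f (x, y)‖ₑ) *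
          nr p ν (fun y => ‖g (x', y)‖ₑ)) := by
          gcongr
          · exact H n τ h0 h1 x x'
          · exact hP bf bg
      _ = _ := by ring
  · convert h.summ_cf n τ using 2 with a
    rw [norm_mul, norm_mul, RCLike.norm_conj, h.norm_one, h.norm_one]; ring



lemma nr_mono {X : Type} [MeasurableSpace X] {p : ℝ} (hp : 0 < p) (μ : Measure X) {g g' : X → ℝ≥0∞}
    (h : ∀ x, g x ≤ g' x) : nr p μ g ≤ nr p μ g' := by
  unfold nr
  have : 0 ≤ 1 / p := by positivity
  gcongr with x
  exact h x

lemma nr_const_mul {X : Type} [MeasurableSpace X] {p : ℝ} (hp : 0 < p) (μ : Measure X) (g : X → ℝ≥0∞)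
    {c : ℝ≥0∞} (hc : c ≠ ⊤) : nr p μ (fun x => c * g x) = c * nr p μ g := by
  unfold nr
  have : ∀ x, (c * g x) ^ p = c ^ p * g x ^ p := fun x => ENNReal.mul_rpow_of_nonneg _ _ hp.le
  simp_rw [this]
  rw [lintegral_const_mul' _ _ (ENNReal.rpow_ne_top_of_nonneg hp.le hc),
    ENNReal.mul_rpow_of_nonneg _ _ (by positivity), ← ENNReal.rpow_mul, mul_one_div_cancel hp.ne',
    ENNReal.rpow_one]

lemma nr_const {X : Type} [MeasurableSpace X] {p : ℝ} (hp : 0 < p) (μ : Measure X) [IsProbabilityMeasure μ]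
    (c : ℝ≥0∞) : nr p μ (fun _ => c) = c := by
  unfold nr
  rw [lintegral_const, measure_univ, mul_one, ← ENNReal.rpow_mul, mul_one_div_cancel hp.ne',
    ENNReal.rpow_one]

lemma nr_add {X : Type} [MeasurableSpace X] {p : ℝ} (hp : 1 ≤ p) (μ : Measure X) {g g' : X → ℝ≥0∞}
    (h : Measurable g) (h' : Measurable g') : nr p μ (fun x => g x + g' x) ≤ nr p μ g + nr p μ g' := by
  exact ENNReal.lintegral_Lp_add_le h.aemeasurable h'.aemeasurable hp

lemma nr_rpow {X : Type} [MeasurableSpace X] {p : ℝ} (hp : 0 < p) (μ : Measure X) (g : X → ℝ≥0∞) :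
    nr p μ g ^ p = ∫⁻ x, g x ^ p ∂μ := by
  unfold nr
  rw [← ENNReal.rpow_mul, one_div_mul_cancel hp.ne', ENNReal.rpow_one]

lemma nr_measurable {X Y : Type} [MeasurableSpace X] [MeasurableSpace Y] (p : ℝ) (ν : Measure Y) [SFinite ν]
    {g : X × Y → ℝ≥0∞} (h : Measurable g) : Measurable (fun x => nr p ν (fun y => g (x, y))) := by
  unfold nr
  exact (Measurable.lintegral_prod_right' (h.pow_const p)).pow_const _

lemma nr2_mono {X Y : Type} [MeasurableSpace X] [MeasurableSpace Y] {s p : ℝ} (hs : 0 < s) (hp : 0 < p)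
    (μ : Measure X) (ν : Measure Y) {g g' : X × Y → ℝ≥0∞} (h : ∀ z, g z ≤ g' z) :
    nr2 s p μ ν g ≤ nr2 s p μ ν g' :=
  nr_mono hs _ fun _ => nr_mono hp _ fun _ => h _

lemma nr2_const {X Y : Type} [MeasurableSpace X] [MeasurableSpace Y] {s p : ℝ} (hs : 0 < s) (hp : 0 < p)
    (μ : Measure X) (ν : Measure Y) [IsProbabilityMeasure μ] [IsProbabilityMeasure ν] (c : ℝ≥0∞) :
    nr2 s p μ ν (fun _ => c) = c := by
  unfold nr2
  simp_rw [nr_const hp, nr_const hs]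

/-- One-level Jensen inequality. -/
lemma jens1 {X : Type} [MeasurableSpace X] (μ : Measure X) {s' p c : ℝ} (hs : 0 < s') (hs2 : s' ≤ 2)
    (hp : 0 < p) (hc : 1 / s' = 1 / p + c) {g h : X → ℝ≥0∞} (hg : Measurable g) (hh : Measurable h)
    (hft : ∀ x, h x ≠ ⊤) (hintg : ∫⁻ x, h x ^ p ∂μ ≤ 1) :
    nr s' μ (fun x => h x * g x) ^ (2:ℝ) ≤ ∫⁻ x, g x ^ (2:ℝ) * ((h x ^ p) ^ (-2 * c) * h x ^ p) ∂μ := by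
  have h1 : ∫⁻ x, (h x * g x) ^ s' ∂μ ≤
      (∫⁻ x, g x ^ (2:ℝ) * ((h x ^ p) ^ (-2 * c) * h x ^ p) ∂μ) ^ (s' / 2) := by
    calc ∫⁻ x, (h x * g x) ^ s' ∂μ ≤
        ∫⁻ x, (g x ^ (2:ℝ) * ((h x ^ p) ^ (-2 * c) * h x ^ p)) ^ (s' / 2) * (h x ^ p) ^ (1 - s' / 2) ∂μ := by
          apply lintegral_mono
          intro x
          simp only
          by_cases hx : h x = 0
          · rw [hx, zero_mul, ENNReal.zero_rpow_of_pos hs]; exact zero_le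
          have hx0 : h x ^ p ≠ 0 := by simp [hx, hp.le, hft x]
          have hxt : h x ^ p ≠ ⊤ := ENNReal.rpow_ne_top_of_nonneg hp.le (hft x)
          rw [ENNReal.mul_rpow_of_nonneg _ _ hs.le, ENNReal.mul_rpow_of_nonneg _ _ (by positivity),
            ENNReal.mul_rpow_of_nonneg _ _ (by positivity), ← ENNReal.rpow_mul, ← ENNReal.rpow_mul (h x ^ p),
            mul_assoc, mul_assoc, ← ENNReal.rpow_add _ _ hx0 hxt, ← ENNReal.rpow_add _ _ hx0 hxt,
            ← ENNReal.rpow_mul]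
          have e1 : p * (-2 * c * (s' / 2) + (s' / 2 + (1 - s' / 2))) = s' := by
            have : c = 1 / s' - 1 / p := by linarith
            rw [this]; field_simp; ring
          rw [e1, mul_comm]
          apply le_of_eq
          congr 2; ring
      _ ≤ (∫⁻ x, g x ^ (2:ℝ) * ((h x ^ p) ^ (-2 * c) * h x ^ p) ∂μ) ^ (s' / 2) *
          (∫⁻ x, h x ^ p ∂μ) ^ (1 - s' / 2) := by
          apply ENNReal.lintegral_mul_norm_pow_le
          · fun_prop
          · fun_prop
          · positivity
          · linarith
          · ring
      _ ≤ (∫⁻ x, g x ^ (2:ℝ) * ((h x ^ p) ^ (-2 * c) * h x ^ p) ∂μ) ^ (s' / 2) * 1 := by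
          gcongr
          exact ENNReal.rpow_le_one hintg (by linarith)
      _ = _ := mul_one _
  unfold nr
  rw [← ENNReal.rpow_mul]
  calc _ ≤ ((∫⁻ x, g x ^ (2:ℝ) * ((h x ^ p) ^ (-2 * c) * h x ^ p) ∂μ) ^ (s' / 2)) ^ (1 / s' * 2) := by
        gcongr
    _ = _ := by
        rw [← ENNReal.rpow_mul]
        have : s' / 2 * (1 / s' * 2) = 1 := by field_simp
        rw [this, ENNReal.rpow_one]

/-- interpolation weight -/
def psi {X Y : Type} (s p d1 d2 : ℝ) (S : ℝ≥0∞) (H : X → ℝ≥0∞) (k : X × Y → ℝ≥0∞) (z : X × Y) : ℝ≥0∞ :=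
  ((H z.1 / S) ^ s) ^ d1 * ((k z / H z.1) ^ p) ^ d2

/-- interpolation density -/
def den {X Y : Type} (s p : ℝ) (S : ℝ≥0∞) (H : X → ℝ≥0∞) (k : X × Y → ℝ≥0∞) (z : X × Y) : ℝ≥0∞ :=
  (H z.1 / S) ^ s * (k z / H z.1) ^ p

/-- Majorant data. -/
structure Maj {X Y : Type} [MeasurableSpace X] [MeasurableSpace Y] (μ : Measure X) (ν : Measure Y)
    (s p : ℝ) (S : ℝ≥0∞) (H : X → ℝ≥0∞) (k : X × Y → ℝ≥0∞) : Prop where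
  km : Measurable k
  mH : Measurable H
  kt : ∀ z, k z ≠ ⊤
  H0 : ∀ x, H x ≠ 0
  Ht : ∀ x, H x ≠ ⊤
  S0 : S ≠ 0
  St : S ≠ ⊤
  hH : ∀ x, nr p ν (fun y => k (x, y)) ≤ H x
  hS : nr s μ H ≤ S

section
variable {X Y : Type} [MeasurableSpace X] [MeasurableSpace Y] {μ : Measure X} {ν : Measure Y}
    [SFinite ν] {s p : ℝ} {S : ℝ≥0∞} {H : X → ℝ≥0∞} {k : X × Y → ℝ≥0∞}


lemma Maj.h1 (hs : 0 < s) (h : Maj μ ν s p S H k) : ∫⁻ x, (H x / S) ^ s ∂μ ≤ 1 := by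
  have e : ∀ x, (H x / S) = S⁻¹ * H x := fun x => by rw [div_eq_mul_inv, mul_comm]
  have : nr s μ (fun x => H x / S) ≤ 1 := by
    simp_rw [e]
    rw [nr_const_mul hs _ _ (ENNReal.inv_ne_top.mpr h.S0)]
    calc _ ≤ S⁻¹ * S := by gcongr; exact h.hS
      _ = 1 := ENNReal.inv_mul_cancel h.S0 h.St
  rw [← nr_rpow hs]
  exact ENNReal.rpow_le_one this hs.le

lemma Maj.h2 (hp : 0 < p) (h : Maj μ ν s p S H k) (x : X) : ∫⁻ y, (k (x, y) / H x) ^ p ∂ν ≤ 1 := by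
  have e : ∀ y, (k (x, y) / H x) = (H x)⁻¹ * k (x, y) := fun x => by rw [div_eq_mul_inv, mul_comm]
  have : nr p ν (fun y => k (x, y) / H x) ≤ 1 := by
    simp_rw [e]
    rw [nr_const_mul hp _ _ (ENNReal.inv_ne_top.mpr (h.H0 x))]
    calc _ ≤ (H x)⁻¹ * H x := by gcongr; exact h.hH x
      _ = 1 := ENNReal.inv_mul_cancel (h.H0 x) (h.Ht x)
  rw [← nr_rpow hp]
  exact ENNReal.rpow_le_one this hp.le

lemma Maj.den_meas (h : Maj μ ν s p S H k) : Measurable (den s p S H k) := by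
  unfold den
  have := h.mH; have := h.km
  fun_prop

lemma Maj.psi_meas (h : Maj μ ν s p S H k) (d1 d2 : ℝ) : Measurable (psi s p d1 d2 S H k) := by
  unfold psi
  have := h.mH; have := h.km
  fun_prop

lemma Maj.den_le (hs : 0 < s) (hp : 0 < p) (h : Maj μ ν s p S H k) :
    ∫⁻ x, ∫⁻ y, den s p S H k (x, y) ∂ν ∂μ ≤ 1 := by
  refine le_trans (lintegral_mono fun x => ?_) (h.h1 hs)
  unfold den
  have hm := h.km
  simp only
  rw [lintegral_const_mul _ (by fun_prop)]
  calc _ ≤ (H x / S) ^ s * 1 := by gcongr; exact h.h2 hp x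
    _ = _ := mul_one _

/-- Two-level Jensen inequality. -/
lemma Maj.jens (hs : 0 < s) (hp : 0 < p) (h : Maj μ ν s p S H k) {s' p' d1 d2 η : ℝ}
    (hs' : 0 < s') (hs2 : s' ≤ 2) (hp' : 0 < p') (hp2 : p' ≤ 2)
    (e1 : 1 / s' = 1 / s + η * d1) (e2 : 1 / p' = 1 / p + η * d2) {A : Set (X × Y)} (hA : MeasurableSet A) :
    nr2 s' p' μ ν (A.indicator k) ^ (2:ℝ) ≤
      S ^ (2:ℝ) * ∫⁻ x, ∫⁻ y, A.indicator (fun z => psi s p d1 d2 S H k z ^ (-2 * η) * den s p S H k z) (x, y) ∂ν ∂μ := by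
  have hmk := h.km
  have hmH := h.mH
  let g2 : X × Y → ℝ≥0∞ := A.indicator 1
  have hg2 : Measurable g2 := measurable_one.indicator hA
  let N : X → ℝ≥0∞ := fun x => nr p' ν (fun y => (k (x, y) / H x) * g2 (x, y))
  have hN : Measurable N := nr_measurable p' ν (g := fun z => (k z / H z.1) * g2 z) (by fun_prop)
  have hin : ∀ x, nr p' ν (fun y => A.indicator k (x, y)) = S * ((H x / S) * N x) := by
    intro x
    have : ∀ y, A.indicator k (x, y) = H x * ((k (x, y) / H x) * g2 (x, y)) := by
      intro y
      rw [← mul_assoc, ENNReal.mul_div_cancel (h.H0 x) (h.Ht x)]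
      by_cases hz : (x, y) ∈ A <;> simp [g2, hz]
    simp_rw [this]
    rw [nr_const_mul hp' _ _ (h.Ht x), ← mul_assoc, ENNReal.mul_div_cancel h.S0 h.St]
  have step1 : nr2 s' p' μ ν (A.indicator k) = S * nr s' μ (fun x => (H x / S) * N x) := by
    unfold nr2
    simp_rw [hin]
    rw [nr_const_mul hs' _ _ h.St]
  rw [step1, ENNReal.mul_rpow_of_nonneg _ _ (by norm_num)]
  have hfin1 : ∀ x, H x / S ≠ ⊤ := fun x => ENNReal.div_ne_top (h.Ht x) h.S0
  have hfin2 : ∀ z, k z / H z.1 ≠ ⊤ := fun z => ENNReal.div_ne_top (h.kt z) (h.H0 _)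
  gcongr
  refine (jens1 μ hs' hs2 hs e1 hN (by fun_prop) hfin1 (h.h1 hs)).trans ?_
  apply lintegral_mono
  intro x
  simp only
  have hx1 : H x / S ≠ 0 := by
    rw [ne_eq, ENNReal.div_eq_zero_iff]; push Not; exact ⟨h.H0 x, h.St⟩
  have hx0 : (H x / S) ^ s ≠ 0 := by simp [hx1, hs.le, hfin1 x]
  have hxt : (H x / S) ^ s ≠ ⊤ := ENNReal.rpow_ne_top_of_nonneg hs.le (hfin1 x)
  have hJ := jens1 ν hp' hp2 hp e2 (g := fun y => g2 (x, y)) (h := fun y => k (x, y) / H x) (by fun_prop)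
    (by fun_prop) (fun y => hfin2 (x, y)) (h.h2 hp x)
  calc _ ≤ (∫⁻ y, g2 (x, y) ^ (2:ℝ) * (((k (x, y) / H x) ^ p) ^ (-2 * (η * d2)) * (k (x, y) / H x) ^ p) ∂ν)
        * (((H x / S) ^ s) ^ (-2 * (η * d1)) * (H x / S) ^ s) := by gcongr
    _ = ∫⁻ y, g2 (x, y) ^ (2:ℝ) * (((k (x, y) / H x) ^ p) ^ (-2 * (η * d2)) * (k (x, y) / H x) ^ p)
        * (((H x / S) ^ s) ^ (-2 * (η * d1)) * (H x / S) ^ s) ∂ν := by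
        rw [lintegral_mul_const _ (by fun_prop)]
    _ ≤ _ := by
        apply lintegral_mono
        intro y
        simp only
        by_cases hz : (x, y) ∈ A
        · simp only [g2, Set.indicator_of_mem hz, Pi.one_apply, ENNReal.one_rpow, one_mul]
          unfold psi den
          simp only
          by_cases hk : k (x, y) / H x = 0
          · rw [hk, ENNReal.zero_rpow_of_pos hp]; simp
          have hk0 : (k (x, y) / H x) ^ p ≠ 0 := by simp [hk, hp.le, hfin2 (x, y)]
          have hkt : (k (x, y) / H x) ^ p ≠ ⊤ := ENNReal.rpow_ne_top_of_nonneg hp.le (hfin2 (x, y))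
          rw [ENNReal.mul_rpow_of_ne_top (ENNReal.rpow_ne_top_of_ne_zero hx0 hxt) (ENNReal.rpow_ne_top_of_ne_zero hk0 hkt), ← ENNReal.rpow_mul ((H x / S) ^ s),
            ← ENNReal.rpow_mul ((k (x, y) / H x) ^ p)]
          have i1 : d1 * (-2 * η) = -2 * (η * d1) := by ring
          have i2 : d2 * (-2 * η) = -2 * (η * d2) := by ring
          rw [i1, i2]
          apply le_of_eq; ring
        · simp [g2, hz]
end



lemma two_geom {δ : ℝ} (hδ : 0 < δ) : ∃ K : ℝ, 0 < K ∧ ∀ c : ℝ,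
    ∑' i : ℤ, ENNReal.ofReal ((2:ℝ) ^ (-δ * |(i:ℝ) + c|)) ≤ ENNReal.ofReal K := by
  have h0 : (2:ℝ) ^ (-δ) < 1 := Real.rpow_lt_one_of_one_lt_of_neg (by norm_num) (by linarith)
  have h00 : 0 < (2:ℝ) ^ (-δ) := by positivity
  have hs : Summable (fun i : ℤ => ((2:ℝ) ^ (-δ)) ^ i.natAbs) := by
    apply Summable.of_nat_of_neg
    · simpa using summable_geometric_of_lt_one h00.le h0
    · simpa using summable_geometric_of_lt_one h00.le h0
  refine ⟨(2:ℝ) ^ δ * ∑' i : ℤ, ((2:ℝ) ^ (-δ)) ^ i.natAbs + 1, ?_, fun c => ?_⟩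
  · have : 0 ≤ ∑' i : ℤ, ((2:ℝ) ^ (-δ)) ^ i.natAbs := tsum_nonneg fun i => by positivity
    positivity
  · have hle : ∀ i : ℤ, (2:ℝ) ^ (-δ * |(i:ℝ) + c|) ≤ (2:ℝ) ^ δ * ((2:ℝ) ^ (-δ)) ^ (i + ⌊c⌋).natAbs := by
      intro i
      rw [← Real.rpow_natCast, ← Real.rpow_mul (by norm_num), ← Real.rpow_add (by norm_num)]
      apply Real.rpow_le_rpow_of_exponent_le (by norm_num)
      have e1 : (((i + ⌊c⌋).natAbs : ℕ) : ℝ) = |(i:ℝ) + ⌊c⌋| := by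
        rw [Nat.cast_natAbs]; push_cast; rfl
      rw [e1]
      have h1 := Int.floor_le c
      have h2 := Int.lt_floor_add_one c
      have h3 : |(i:ℝ) + ⌊c⌋| ≤ |(i:ℝ) + c| + 1 := by
        have : (i:ℝ) + ⌊c⌋ = ((i:ℝ) + c) + (⌊c⌋ - c) := by ring
        rw [this]
        refine (abs_add_le _ _).trans ?_
        gcongr
        rw [abs_le]; constructor <;> linarith
      nlinarith
    calc _ ≤ ∑' i : ℤ, ENNReal.ofReal ((2:ℝ) ^ δ * ((2:ℝ) ^ (-δ)) ^ (i + ⌊c⌋).natAbs) :=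
          ENNReal.tsum_le_tsum fun i => ENNReal.ofReal_le_ofReal (hle i)
      _ = ∑' i : ℤ, ENNReal.ofReal ((2:ℝ) ^ δ * ((2:ℝ) ^ (-δ)) ^ i.natAbs) :=
          (Equiv.addRight ⌊c⌋).tsum_eq (fun i : ℤ => ENNReal.ofReal ((2:ℝ) ^ δ * ((2:ℝ) ^ (-δ)) ^ i.natAbs))
      _ = ENNReal.ofReal (∑' i : ℤ, (2:ℝ) ^ δ * ((2:ℝ) ^ (-δ)) ^ i.natAbs) := by
          rw [ENNReal.ofReal_tsum_of_nonneg (fun i => by positivity) (hs.mul_left _)]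
      _ ≤ _ := by
          apply ENNReal.ofReal_le_ofReal
          rw [tsum_mul_left]; linarith

section
variable {X Y : Type} [MeasurableSpace X] [MeasurableSpace Y] {μ : Measure X} {ν : Measure Y}
    [IsProbabilityMeasure μ] [IsProbabilityMeasure ν] {s p : ℝ} {S : ℝ≥0∞} {H : X → ℝ≥0∞} {k : X × Y → ℝ≥0∞}

lemma exists_maj (hs : 1 ≤ s) (hp : 1 ≤ p) (hk : Measurable k) {M : ℝ≥0∞} (hM : M ≠ ⊤) (hkM : ∀ z, k z ≤ M)
    {δ : ℝ≥0∞} (hδ : δ ≠ 0) (hδt : δ ≠ ⊤) : ∃ S H, Maj μ ν s p S H k ∧ S ≤ nr2 s p μ ν k + δ ∧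
      (∀ x, δ ≤ H x ∧ H x ≤ M + δ) ∧ δ ≤ S ∧ S ≤ M + δ := by
  have hs0 : 0 < s := by linarith
  have hp0 : 0 < p := by linarith
  have hm := nr_measurable p ν hk
  let H : X → ℝ≥0∞ := fun x => nr p ν (fun y => k (x, y)) + δ
  have hH : ∀ x, δ ≤ H x ∧ H x ≤ M + δ := by
    intro x
    refine ⟨le_add_self, add_le_add_left ?_ _⟩
    calc _ ≤ nr p ν (fun _ => M) := nr_mono hp0 _ (fun y => hkM _)
      _ = M := nr_const hp0 _ _
  have hS1 : δ ≤ nr s μ H := by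
    calc δ = nr s μ (fun _ => δ) := (nr_const hs0 _ _).symm
      _ ≤ _ := nr_mono hs0 _ fun x => (hH x).1
  have hS2 : nr s μ H ≤ M + δ := by
    calc _ ≤ nr s μ (fun _ => M + δ) := nr_mono hs0 _ fun x => (hH x).2
      _ = _ := nr_const hs0 _ _
  refine ⟨nr s μ H, H, ⟨hk, hm.add_const _, fun z => ne_top_of_le_ne_top hM (hkM z), ?_, ?_, ?_, ?_, ?_, le_rfl⟩,
    ?_, hH, hS1, hS2⟩
  · intro x h; have := (hH x).1; rw [h] at this; exact hδ (le_antisymm this zero_le)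
  · intro x; exact ne_top_of_le_ne_top (ENNReal.add_ne_top.mpr ⟨hM, hδt⟩) (hH x).2
  · intro h; rw [h] at hS1; exact hδ (le_antisymm hS1 zero_le)
  · exact ne_top_of_le_ne_top (ENNReal.add_ne_top.mpr ⟨hM, hδt⟩) hS2
  · intro x; exact le_self_add
  · refine (nr_add hs μ hm measurable_const).trans ?_
    rw [nr_const hs0]
    exact le_rfl

/-- cells -/
def cell (φ : X × Y → ℝ≥0∞) (i : ℤ) : Set (X × Y) := {z | (2:ℝ≥0∞) ^ (i:ℝ) ≤ φ z ∧ φ z < (2:ℝ≥0∞) ^ ((i:ℝ) + 1)}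

lemma cell_meas {φ : X × Y → ℝ≥0∞} (h : Measurable φ) (i : ℤ) : MeasurableSet (cell φ i) :=
  (measurableSet_le measurable_const h).inter (measurableSet_lt h measurable_const)

lemma two_rpow_mono {a b : ℝ} (h : a ≤ b) : (2:ℝ≥0∞) ^ a ≤ (2:ℝ≥0∞) ^ b :=
  ENNReal.rpow_le_rpow_of_exponent_le (by norm_num) h

lemma cell_unique {φ : X × Y → ℝ≥0∞} {i j : ℤ} {z : X × Y} (hi : z ∈ cell φ i) (hj : z ∈ cell φ j) : i = j := by
  have key : ∀ {i j : ℤ}, z ∈ cell φ i → z ∈ cell φ j → i ≤ j := by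
    intro i j hi hj
    by_contra hlt
    push Not at hlt
    have h1 : ((j:ℝ) + 1) ≤ i := by exact_mod_cast hlt
    exact absurd (hj.2.trans_le ((two_rpow_mono h1).trans hi.1)) (lt_irrefl _)
  exact le_antisymm (key hi hj) (key hj hi)

lemma cell_exists {φ : X × Y → ℝ≥0∞} {L : ℤ} {z : X × Y} (h1 : (2:ℝ≥0∞) ^ (-(L:ℝ)) ≤ φ z)
    (h2 : φ z < (2:ℝ≥0∞) ^ (L:ℝ)) : ∃ i ∈ Finset.Ico (-L) L, z ∈ cell φ i := by
  have ht : φ z ≠ ⊤ := ne_top_of_lt h2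
  have h0 : φ z ≠ 0 := by
    intro h; rw [h] at h1
    have h3 : (2:ℝ≥0∞) ^ (-(L:ℝ)) ≠ 0 := by simp
    exact h3 (le_antisymm h1 zero_le)
  have hpos : 0 < (φ z).toReal := ENNReal.toReal_pos h0 ht
  set x := Real.logb 2 (φ z).toReal with hx
  have hxe : φ z = (2:ℝ≥0∞) ^ x := by
    rw [← ENNReal.ofReal_toReal ht, ← Real.rpow_logb (b := 2) (by norm_num) (by norm_num) hpos, ← hx,
      ← ENNReal.ofReal_rpow_of_pos (by norm_num)]
    norm_num
  have lt_iff : ∀ {a b : ℝ}, (2:ℝ≥0∞) ^ a < (2:ℝ≥0∞) ^ b ↔ a < b := by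
    intro a b
    constructor
    · intro h; by_contra hh; push Not at hh
      exact absurd (h.trans_le (two_rpow_mono hh)) (lt_irrefl _)
    · intro h; exact ENNReal.rpow_lt_rpow_of_exponent_lt (by norm_num) (by norm_num) h
  refine ⟨⌊x⌋, ?_, ?_, ?_⟩
  · rw [hxe] at h1 h2
    rw [lt_iff] at h2
    have h3 : -(L:ℝ) ≤ x := by
      by_contra hh; push Not at hh
      exact absurd ((lt_iff.mpr hh).trans_le h1) (lt_irrefl _)
    rw [Finset.mem_Ico]
    constructor
    · rw [Int.le_floor]; push_cast; exact h3
    · rw [Int.floor_lt]; exact h2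
  · rw [hxe]; exact two_rpow_mono (Int.floor_le x)
  · rw [hxe, lt_iff]; exact Int.lt_floor_add_one x

/-- mass of a cell -/
def cmass (μ : Measure X) (ν : Measure Y) (φ D : X × Y → ℝ≥0∞) (i : ℤ) : ℝ≥0∞ :=
  ∫⁻ x, ∫⁻ y, (cell φ i).indicator D (x, y) ∂ν ∂μ

lemma cmass_sum {φ D : X × Y → ℝ≥0∞} (hφ : Measurable φ) (hD : Measurable D) (I : Finset ℤ) :
    ∑ i ∈ I, cmass μ ν φ D i ≤ ∫⁻ x, ∫⁻ y, D (x, y) ∂ν ∂μ := by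
  unfold cmass
  have hm : ∀ i, Measurable ((cell φ i).indicator D) := fun i => hD.indicator (cell_meas hφ i)
  rw [← lintegral_finsetSum _ fun i _ => (hm i).lintegral_prod_right']
  apply lintegral_mono
  intro x
  simp only
  rw [← lintegral_finsetSum _ fun i _ =>
    (show Measurable (fun y => (cell φ i).indicator D (x, y)) from (hm i).comp measurable_prodMk_left)]
  apply lintegral_mono
  intro y
  simp only
  by_cases h : ∃ i ∈ I, (x, y) ∈ cell φ i
  · obtain ⟨i, hi, hz⟩ := h
    rw [Finset.sum_eq_single_of_mem i hi]
    · exact Set.indicator_le_self' (fun _ _ => zero_le) _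
    · intro j hj hji
      exact Set.indicator_of_notMem (fun hz' => hji (cell_unique hz' hz)) _
  · push Not at h
    rw [Finset.sum_eq_zero]
    · exact zero_le
    · intro i hi; exact Set.indicator_of_notMem (h i hi) _

lemma Maj.cell_bound (hs : 0 < s) (hp : 0 < p) (h : Maj μ ν s p S H k) {s' p' d1 d2 η : ℝ}
    (hs' : 0 < s') (hs2 : s' ≤ 2) (hp' : 0 < p') (hp2 : p' ≤ 2) (hη : |η| ≤ 1)
    (e1 : 1 / s' = 1 / s + η * d1) (e2 : 1 / p' = 1 / p + η * d2) (i : ℤ) :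
    nr2 s' p' μ ν ((cell (psi s p d1 d2 S H k) i).indicator k) ≤
      2 * S * 2 ^ (-η * i) * cmass μ ν (psi s p d1 d2 S H k) (den s p S H k) i ^ (1/2 : ℝ) := by
  have h1 := h.jens hs hp hs' hs2 hp' hp2 e1 e2 (cell_meas (h.psi_meas d1 d2) i)
  have h2 : ∫⁻ x, ∫⁻ y, (cell (psi s p d1 d2 S H k) i).indicator
      (fun z => psi s p d1 d2 S H k z ^ (-2 * η) * den s p S H k z) (x, y) ∂ν ∂μ ≤
      (2 ^ (2:ℝ) * 2 ^ (-2 * η * i)) * cmass μ ν (psi s p d1 d2 S H k) (den s p S H k) i := by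
    unfold cmass
    have hm : Measurable ((cell (psi s p d1 d2 S H k) i).indicator (den s p S H k)) :=
      h.den_meas.indicator (cell_meas (h.psi_meas d1 d2) i)
    rw [← lintegral_const_mul _ hm.lintegral_prod_right']
    apply lintegral_mono
    intro x
    simp only
    rw [← lintegral_const_mul _ (by exact hm.comp measurable_prodMk_left)]
    apply lintegral_mono
    intro y
    simp only
    by_cases hz : (x, y) ∈ cell (psi s p d1 d2 S H k) i
    · rw [Set.indicator_of_mem hz, Set.indicator_of_mem hz]
      gcongr
      rw [← ENNReal.rpow_add _ _ (by norm_num) (by norm_num)]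
      rcases le_total 0 η with h0 | h0
      · have : psi s p d1 d2 S H k (x, y) ^ (-2 * η) ≤ (2 ^ (i:ℝ)) ^ (-2 * η) := by
          rw [show -2 * η = -(2 * η) by ring, ENNReal.rpow_neg, ENNReal.rpow_neg]
          gcongr
          exact hz.1
        refine this.trans ?_
        rw [← ENNReal.rpow_mul]
        apply two_rpow_mono
        linarith
      · have : psi s p d1 d2 S H k (x, y) ^ (-2 * η) ≤ (2 ^ ((i:ℝ) + 1)) ^ (-2 * η) := by
          apply ENNReal.rpow_le_rpow hz.2.le; linarith
        refine this.trans ?_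
        rw [← ENNReal.rpow_mul]
        apply two_rpow_mono
        have := (abs_le.mp hη).1
        linarith
    · rw [Set.indicator_of_notMem hz]; exact zero_le
  have h3 := h1.trans (mul_le_mul_right h2 _)
  have h4 := ENNReal.rpow_le_rpow h3 (show (0:ℝ) ≤ 1 / 2 by norm_num)
  rw [← ENNReal.rpow_mul, show (2:ℝ) * (1 / 2) = 1 by norm_num, ENNReal.rpow_one] at h4
  refine h4.trans (le_of_eq ?_)
  rw [ENNReal.mul_rpow_of_nonneg _ _ (by norm_num), ENNReal.mul_rpow_of_nonneg _ _ (by norm_num),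
    ENNReal.mul_rpow_of_nonneg _ _ (by norm_num), ← ENNReal.rpow_mul, ← ENNReal.rpow_mul, ← ENNReal.rpow_mul,
    show (2:ℝ) * (1 / 2) = 1 by norm_num, ENNReal.rpow_one, ENNReal.rpow_one,
    show -2 * η * i * (1 / 2) = -η * i by ring]
  ring

end



lemma rpow_box {a b : ℝ≥0∞} (ha : a ≠ 0) (hb : b ≠ ⊤) (t : ℝ) : ∃ C : ℝ≥0∞, C ≠ ⊤ ∧
    ∀ x, a ≤ x → x ≤ b → x ^ t ≤ C ∧ (x ^ t)⁻¹ ≤ C := by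
  by_cases hab : a ≤ b
  swap
  · exact ⟨1, by simp, fun x h1 h2 => absurd (h1.trans h2) hab⟩
  have hat : a ≠ ⊤ := ne_top_of_le_ne_top hb hab
  have hb0 : b ≠ 0 := fun h => ha (le_antisymm (h ▸ hab) zero_le)
  have key : ∀ (t : ℝ) x, a ≤ x → x ≤ b → x ^ t ≤ a ^ t + b ^ t := by
    intro t x h1 h2
    rcases le_total 0 t with h0 | h0
    · exact (ENNReal.rpow_le_rpow h2 h0).trans le_add_self
    · refine le_trans ?_ le_self_add
      obtain ⟨u, rfl⟩ : ∃ u, t = -u := ⟨-t, by ring⟩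
      rw [ENNReal.rpow_neg, ENNReal.rpow_neg]
      have : 0 ≤ u := by linarith
      gcongr
  refine ⟨(a ^ t + b ^ t) + (a ^ (-t) + b ^ (-t)), ?_, fun x h1 h2 => ⟨(key t x h1 h2).trans le_self_add, ?_⟩⟩
  · simp only [ne_eq, ENNReal.add_eq_top, not_or]
    exact ⟨⟨ENNReal.rpow_ne_top_of_ne_zero ha hat, ENNReal.rpow_ne_top_of_ne_zero hb0 hb⟩,
      ⟨ENNReal.rpow_ne_top_of_ne_zero ha hat, ENNReal.rpow_ne_top_of_ne_zero hb0 hb⟩⟩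
  · rw [← ENNReal.rpow_neg]
    exact (key (-t) x h1 h2).trans le_add_self

section
variable {X Y : Type} [MeasurableSpace X] [MeasurableSpace Y] {μ : Measure X} {ν : Measure Y}
    [IsProbabilityMeasure μ] [IsProbabilityMeasure ν] {s p : ℝ} {S : ℝ≥0∞} {H : X → ℝ≥0∞} {k : X × Y → ℝ≥0∞}

lemma Maj.psi_bounds (h : Maj μ ν s p S H k) (d1 d2 : ℝ) {a b : ℝ≥0∞} (ha : a ≠ 0) (hb : b ≠ ⊤)
    (hH : ∀ x, a ≤ H x ∧ H x ≤ b) (hS : a ≤ S ∧ S ≤ b) (hk : ∀ z, k z = 0 ∨ (a ≤ k z ∧ k z ≤ b)) :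
    ∃ L : ℤ, ∀ z, k z ≠ 0 → (2:ℝ≥0∞) ^ (-(L:ℝ)) ≤ psi s p d1 d2 S H k z ∧
      psi s p d1 d2 S H k z < (2:ℝ≥0∞) ^ (L:ℝ) := by
  have hat : a ≠ ⊤ := ne_top_of_le_ne_top hb (hS.1.trans hS.2)
  have hab : a / b ≠ 0 := by rw [ne_eq, ENNReal.div_eq_zero_iff]; push Not; exact ⟨ha, hb⟩
  have hba : b / a ≠ ⊤ := ENNReal.div_ne_top hb ha
  obtain ⟨C1, hC1, H1⟩ := rpow_box hab hba (s * d1)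
  obtain ⟨C2, hC2, H2⟩ := rpow_box hab hba (p * d2)
  obtain ⟨n, hn⟩ := ENNReal.exists_nat_gt (r := C1 * C2) (ENNReal.mul_ne_top hC1 hC2)
  have hn2 : C1 * C2 < (2:ℝ≥0∞) ^ ((n:ℤ):ℝ) := by
    refine hn.trans_le ?_
    rw [Int.cast_natCast, ENNReal.rpow_natCast]
    exact_mod_cast (Nat.lt_two_pow_self (n := n)).le
  refine ⟨n, fun z hz => ?_⟩
  have hkz := (hk z).resolve_left hz
  obtain ⟨i1, i2⟩ := H1 (H z.1 / S) (ENNReal.div_le_div (hH _).1 hS.2) (ENNReal.div_le_div (hH _).2 hS.1)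
  obtain ⟨i3, i4⟩ := H2 (k z / H z.1) (ENNReal.div_le_div hkz.1 (hH _).2) (ENNReal.div_le_div hkz.2 (hH _).1)
  unfold psi
  rw [← ENNReal.rpow_mul, ← ENNReal.rpow_mul]
  refine ⟨?_, (mul_le_mul' i1 i3).trans_lt hn2⟩
  rw [ENNReal.rpow_neg, ENNReal.inv_le_iff_inv_le, ENNReal.mul_inv]
  · exact (mul_le_mul' i2 i4).trans hn2.le
  · right; exact ne_top_of_le_ne_top hC2 i3
  · left; exact ne_top_of_le_ne_top hC1 i1

lemma sub_sum {β : (X × Y → ℂ) → ℝ≥0∞} (h0 : β (fun _ => 0) = 0)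
    (hadd : ∀ f f', BM f → BM f' → β (fun z => f z + f' z) ≤ β f + β f') {I : Finset ℤ} {F : ℤ → X × Y → ℂ}
    (hF : ∀ i, BM (F i)) : BM (fun z => ∑ i ∈ I, F i z) ∧ β (fun z => ∑ i ∈ I, F i z) ≤ ∑ i ∈ I, β (F i) := by
  classical
  induction I using Finset.induction_on with
  | empty => simp [h0]; exact ⟨measurable_const, 0, by simp⟩
  | insert a I ha ih =>
    simp_rw [Finset.sum_insert ha]
    exact ⟨(hF a).add ih.1, (hadd _ _ (hF a) ih.1).trans (by gcongr; exact ih.2)⟩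

lemma schur {K : ℝ≥0∞} {I J : Finset ℤ} {a b : ℤ → ℝ≥0∞} {w : ℤ → ℤ → ℝ≥0∞}
    (ha : ∑ i ∈ I, a i ≤ 1) (hb : ∑ i ∈ J, b i ≤ 1) (h1 : ∀ i, ∑ j ∈ J, w i j ≤ K)
    (h2 : ∀ j, ∑ i ∈ I, w i j ≤ K) :
    ∑ i ∈ I, ∑ j ∈ J, w i j * (a i ^ (1/2:ℝ) * b j ^ (1/2:ℝ)) ≤ 2 * K := by
  have key : ∀ x y : ℝ≥0∞, x ^ (1/2:ℝ) * y ^ (1/2:ℝ) ≤ x + y := by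
    intro x y
    calc _ ≤ (x + y) ^ (1/2:ℝ) * (x + y) ^ (1/2:ℝ) := by
          gcongr
          · exact le_self_add
          · exact le_add_self
      _ = x + y := by
          rw [← ENNReal.rpow_add_of_nonneg _ _ (by norm_num) (by norm_num)]; norm_num
  calc _ ≤ ∑ i ∈ I, ∑ j ∈ J, w i j * (a i + b j) := by gcongr; exact key _ _
    _ = ∑ i ∈ I, ∑ j ∈ J, w i j * a i + ∑ i ∈ I, ∑ j ∈ J, w i j * b j := by
        simp_rw [mul_add, Finset.sum_add_distrib]
    _ = ∑ i ∈ I, (∑ j ∈ J, w i j) * a i + ∑ j ∈ J, (∑ i ∈ I, w i j) * b j := by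
        congr 1
        · simp_rw [Finset.sum_mul]
        · rw [Finset.sum_comm]; simp_rw [Finset.sum_mul]
    _ ≤ ∑ i ∈ I, K * a i + ∑ j ∈ J, K * b j := by
        gcongr with i hi j hj
        · exact h1 i
        · exact h2 j
    _ = K * ∑ i ∈ I, a i + K * ∑ j ∈ J, b j := by rw [Finset.mul_sum, Finset.mul_sum]
    _ ≤ K * 1 + K * 1 := by gcongr
    _ = 2 * K := by ring

/-- choice between the two endpoints -/
lemma min_bound {θ P0 P1 : ℝ} (h0 : 0 < θ) (h1 : θ < 1) (hP0 : 0 < P0) (hP1 : 0 < P1) :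
    ∃ U : ℝ, ∀ t : ℝ, min (P0 * 2 ^ (θ * t)) (P1 * 2 ^ (-(1 - θ) * t)) ≤
      P0 ^ (1 - θ) * P1 ^ θ * 2 ^ (-(min θ (1 - θ)) * |t + U|) := by
  refine ⟨-Real.logb 2 (P1 / P0), fun t => ?_⟩
  set V := Real.logb 2 (P1 / P0) with hV
  have hPV : P1 = P0 * 2 ^ V := by
    rw [hV, Real.rpow_logb (by norm_num) (by norm_num) (by positivity)]; field_simp
  have e0 : P0 ^ (1 - θ) * P1 ^ θ = P0 * 2 ^ (θ * V) := by
    rw [hPV, Real.mul_rpow hP0.le (by positivity), ← mul_assoc, ← Real.rpow_add hP0,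
      ← Real.rpow_mul (by norm_num)]
    ring_nf; simp [mul_comm]
  have hm1 := min_le_left θ (1 - θ)
  have hm2 := min_le_right θ (1 - θ)
  have hm0 : 0 < min θ (1 - θ) := lt_min h0 (by linarith)
  rw [e0]
  rcases le_total (t + -V) 0 with ht | ht
  · refine (min_le_left _ _).trans ?_
    rw [abs_of_nonpos ht, mul_assoc, ← Real.rpow_add (by norm_num)]
    gcongr
    · norm_num
    · nlinarith
  · refine (min_le_right _ _).trans ?_
    rw [abs_of_nonneg ht, mul_assoc, ← Real.rpow_add (by norm_num), hPV, mul_assoc,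
      ← Real.rpow_add (by norm_num)]
    refine mul_le_mul_of_nonneg_left (Real.rpow_le_rpow_of_exponent_le (by norm_num) ?_) hP0.le
    nlinarith

end

section
variable {X Y : Type} [MeasurableSpace X] [MeasurableSpace Y] {μ : Measure X} {ν : Measure Y}
    [IsProbabilityMeasure μ] [IsProbabilityMeasure ν]

/-- Hypotheses of the bilinear interpolation. -/
structure BHyp (μ : Measure X) (ν : Measure Y) (β : (X × Y → ℂ) → (X × Y → ℂ) → ℝ≥0∞)
    (s0 p0 s1 p1 P0 P1 : ℝ) : Prop where
  addl : ∀ f f' g, BM f → BM f' → BM g → β (fun z => f z + f' z) g ≤ β f g + β f' g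
  addr : ∀ g f f', BM g → BM f → BM f' → β g (fun z => f z + f' z) ≤ β g f + β g f'
  b0 : ∀ f g, BM f → BM g → β f g ≤ ENNReal.ofReal P0 * nr2 s0 p0 μ ν (fun z => ‖f z‖ₑ) *
    nr2 s0 p0 μ ν (fun z => ‖g z‖ₑ)
  b1 : ∀ f g, BM f → BM g → β f g ≤ ENNReal.ofReal P1 * nr2 s1 p1 μ ν (fun z => ‖f z‖ₑ) *
    nr2 s1 p1 μ ν (fun z => ‖g z‖ₑ)

lemma BM_zero : BM (fun _ : X × Y => (0:ℂ)) := ⟨measurable_const, 0, by simp⟩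

lemma nr2_zero {s p : ℝ} (hs : 0 < s) (hp : 0 < p) : nr2 s p μ ν (fun _ => ‖(0:ℂ)‖ₑ) = 0 := by
  rw [nr2_const hs hp]; simp

lemma two_rpow_ofReal (t : ℝ) : (2:ℝ≥0∞) ^ t = ENNReal.ofReal ((2:ℝ) ^ t) := by
  rw [← ENNReal.ofReal_rpow_of_pos (by norm_num)]; norm_num

lemma interp_b {θ s0 p0 s1 p1 s p : ℝ} (h0 : 0 < θ) (h1 : θ < 1)
    (hs0 : 0 < s0) (hs0' : s0 ≤ 2) (hp0 : 0 < p0) (hp0' : p0 ≤ 2) (hs1 : 0 < s1) (hs1' : s1 ≤ 2)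
    (hp1 : 0 < p1) (hp1' : p1 ≤ 2) (hs : 1 ≤ s) (hp : 1 ≤ p)
    (es : 1 / s = (1 - θ) * (1 / s0) + θ * (1 / s1)) (ep : 1 / p = (1 - θ) * (1 / p0) + θ * (1 / p1)) :
    ∃ K : ℝ, 0 < K ∧ ∀ β P0 P1, 0 < P0 → 0 < P1 → BHyp μ ν β s0 p0 s1 p1 P0 P1 →
    ∀ f g, BM f → BM g → ∀ δ : ℝ, 0 < δ → (∀ z, f z = 0 ∨ δ ≤ ‖f z‖) → (∀ z, g z = 0 ∨ δ ≤ ‖g z‖) →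
    β f g ≤ ENNReal.ofReal (K * (P0 ^ (1 - θ) * P1 ^ θ)) *
      (nr2 s p μ ν (fun z => ‖f z‖ₑ) + ENNReal.ofReal δ) *
      (nr2 s p μ ν (fun z => ‖g z‖ₑ) + ENNReal.ofReal δ) := by
  obtain ⟨K, hK, HK⟩ := two_geom (δ := min θ (1 - θ)) (lt_min h0 (by linarith))
  refine ⟨8 * K, by positivity, fun β P0 P1 hP0 hP1 hB f g hf hg δ hδ hfδ hgδ => ?_⟩
  have hspos : 0 < s := by linarith
  have hppos : 0 < p := by linarith
  have hδ0 : ENNReal.ofReal δ ≠ 0 := by simpa using hδ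
  set d1 := 1 / s1 - 1 / s0 with hd1
  set d2 := 1 / p1 - 1 / p0 with hd2
  -- decomposition of one function
  have dec : ∀ f : X × Y → ℂ, BM f → (∀ z, f z = 0 ∨ δ ≤ ‖f z‖) → ∃ (S : ℝ≥0∞) (I : Finset ℤ)
      (F : ℤ → X × Y → ℂ) (a : ℤ → ℝ≥0∞), S ≤ nr2 s p μ ν (fun z => ‖f z‖ₑ) + ENNReal.ofReal δ ∧
      (∀ i, BM (F i)) ∧ (f = fun z => ∑ i ∈ I, F i z) ∧ ∑ i ∈ I, a i ≤ 1 ∧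
      (∀ i, nr2 s0 p0 μ ν (fun z => ‖F i z‖ₑ) ≤ 2 * S * 2 ^ (θ * i) * a i ^ (1/2 : ℝ)) ∧
      (∀ i, nr2 s1 p1 μ ν (fun z => ‖F i z‖ₑ) ≤ 2 * S * 2 ^ (-(1 - θ) * i) * a i ^ (1/2 : ℝ)) := by
    intro f hf hfδ
    obtain ⟨hm, M, hM⟩ := id hf
    have hMle : ∀ z, ‖f z‖ₑ ≤ ENNReal.ofReal M := fun z => by
      rw [← ofReal_norm]; exact ENNReal.ofReal_le_ofReal (hM z)
    obtain ⟨S, H, hMaj, hSle, hH, hS1, hS2⟩ := exists_maj (μ := μ) (ν := ν) (k := fun z => ‖f z‖ₑ) hs hp hm.enorm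
      (M := ENNReal.ofReal M) ENNReal.ofReal_ne_top hMle hδ0 ENNReal.ofReal_ne_top
    obtain ⟨L, hL⟩ := hMaj.psi_bounds d1 d2 hδ0 (b := ENNReal.ofReal M + ENNReal.ofReal δ)
      (by simp) hH ⟨hS1, hS2⟩ (fun z => by
        rcases hfδ z with h | h
        · left; simp [h]
        · right
          refine ⟨?_, (hMle z).trans le_self_add⟩
          rw [← ofReal_norm]; exact ENNReal.ofReal_le_ofReal h)
    set φ := psi s p d1 d2 S H (fun z => ‖f z‖ₑ) with hφ
    have hφm : Measurable φ := hMaj.psi_meas d1 d2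
    have hind : ∀ i, (fun z => ‖(cell φ i).indicator f z‖ₑ) = (cell φ i).indicator (fun z => ‖f z‖ₑ) := by
      intro i; ext1 z; by_cases hz : z ∈ cell φ i <;> simp [hz]
    refine ⟨S, Finset.Ico (-L) L, fun i => (cell φ i).indicator f,
      cmass μ ν φ (den s p S H (fun z => ‖f z‖ₑ)), hSle, fun i => hf.indicator (cell_meas hφm i), ?_, ?_, ?_, ?_⟩
    · ext1 z
      by_cases hz : f z = 0
      · rw [hz, Finset.sum_eq_zero]
        intro i _
        by_cases h : z ∈ cell φ i <;> simp [h, hz]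
      · obtain ⟨i, hi, hzi⟩ := cell_exists (hL z (by simpa using hz)).1 (hL z (by simpa using hz)).2
        rw [Finset.sum_eq_single_of_mem i hi]
        · exact (Set.indicator_of_mem hzi f).symm
        · intro j _ hji
          exact Set.indicator_of_notMem (fun hz' => hji (cell_unique hz' hzi)) _
    · exact (cmass_sum hφm hMaj.den_meas _).trans (hMaj.den_le hspos hppos)
    · intro i
      rw [hind]
      have := hMaj.cell_bound hspos hppos hs0 hs0' hp0 hp0' (η := -θ) (d1 := d1) (d2 := d2)
        (by rw [abs_neg, abs_of_pos h0]; exact h1.le) (by rw [es, hd1]; ring) (by rw [ep, hd2]; ring) i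
      rwa [neg_neg] at this
    · intro i
      rw [hind]
      exact hMaj.cell_bound hspos hppos hs1 hs1' hp1 hp1' (η := 1 - θ) (d1 := d1) (d2 := d2)
        (by rw [abs_of_pos (by linarith)]; linarith) (by rw [es, hd1]; ring) (by rw [ep, hd2]; ring) i
  obtain ⟨S, I, F, a, hS, hF, hfF, ha, hF0, hF1⟩ := dec f hf hfδ
  obtain ⟨S', J, G, b, hS', hG, hgG, hb, hG0, hG1⟩ := dec g hg hgδ
  obtain ⟨U, hU⟩ := min_bound h0 h1 hP0 hP1
  set Q := P0 ^ (1 - θ) * P1 ^ θ with hQ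
  have hQ0 : 0 < Q := by positivity
  let w : ℤ → ℤ → ℝ≥0∞ := fun i j => ENNReal.ofReal ((2:ℝ) ^ (-(min θ (1 - θ)) * |(i:ℝ) + j + U|))
  -- bound for each pair of cells
  have hpair : ∀ i j, β (F i) (G j) ≤ (4 * S * S' * ENNReal.ofReal Q) * (w i j * (a i ^ (1/2:ℝ) * b j ^ (1/2:ℝ))) := by
    intro i j
    have c0 : β (F i) (G j) ≤ (4 * S * S' * (a i ^ (1/2:ℝ) * b j ^ (1/2:ℝ))) *
        ENNReal.ofReal (P0 * 2 ^ (θ * ((i:ℝ) + j))) := by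
      refine (hB.b0 _ _ (hF i) (hG j)).trans ?_
      calc _ ≤ ENNReal.ofReal P0 * (2 * S * 2 ^ (θ * i) * a i ^ (1/2 : ℝ)) *
            (2 * S' * 2 ^ (θ * j) * b j ^ (1/2 : ℝ)) := by gcongr; exacts [hF0 i, hG0 j]
        _ = _ := by
          rw [ENNReal.ofReal_mul hP0.le, ← two_rpow_ofReal, mul_add,
            ENNReal.rpow_add _ _ (by norm_num) (by norm_num)]
          ring
    have c1 : β (F i) (G j) ≤ (4 * S * S' * (a i ^ (1/2:ℝ) * b j ^ (1/2:ℝ))) *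
        ENNReal.ofReal (P1 * 2 ^ (-(1 - θ) * ((i:ℝ) + j))) := by
      refine (hB.b1 _ _ (hF i) (hG j)).trans ?_
      calc _ ≤ ENNReal.ofReal P1 * (2 * S * 2 ^ (-(1 - θ) * i) * a i ^ (1/2 : ℝ)) *
            (2 * S' * 2 ^ (-(1 - θ) * j) * b j ^ (1/2 : ℝ)) := by gcongr; exacts [hF1 i, hG1 j]
        _ = _ := by
          rw [ENNReal.ofReal_mul hP1.le, ← two_rpow_ofReal, mul_add,
            ENNReal.rpow_add _ _ (by norm_num) (by norm_num)]
          ring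
    have hm : β (F i) (G j) ≤ (4 * S * S' * (a i ^ (1/2:ℝ) * b j ^ (1/2:ℝ))) *
        ENNReal.ofReal (min (P0 * 2 ^ (θ * ((i:ℝ) + j))) (P1 * 2 ^ (-(1 - θ) * ((i:ℝ) + j)))) := by
      rcases min_choice (P0 * 2 ^ (θ * ((i:ℝ) + j))) (P1 * 2 ^ (-(1 - θ) * ((i:ℝ) + j))) with h | h
      · rw [h]; exact c0
      · rw [h]; exact c1
    refine hm.trans ?_
    calc _ ≤ (4 * S * S' * (a i ^ (1/2:ℝ) * b j ^ (1/2:ℝ))) *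
        ENNReal.ofReal (Q * 2 ^ (-(min θ (1 - θ)) * |(i:ℝ) + j + U|)) := by
          gcongr; exact hU _
      _ = _ := by rw [ENNReal.ofReal_mul hQ0.le]; simp only [w]; ring
  have hw1 : ∀ i, ∑ j ∈ J, w i j ≤ ENNReal.ofReal K := by
    intro i
    refine le_trans ?_ (HK (i + U))
    refine le_trans (le_of_eq ?_) (ENNReal.sum_le_tsum J)
    refine Finset.sum_congr rfl fun j _ => ?_
    simp only [w]; congr 4; ring
  have hw2 : ∀ j, ∑ i ∈ I, w i j ≤ ENNReal.ofReal K := by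
    intro j
    refine le_trans ?_ (HK (j + U))
    refine le_trans (le_of_eq ?_) (ENNReal.sum_le_tsum I)
    refine Finset.sum_congr rfl fun i _ => ?_
    simp only [w]; congr 4; ring
  have z1 : ∀ g, BM g → β (fun _ => 0) g = 0 := by
    intro g hg
    have := hB.b0 _ g BM_zero hg
    rw [nr2_zero hs0 hp0] at this
    simpa using this
  have z2 : ∀ g, BM g → β g (fun _ => 0) = 0 := by
    intro g hg
    have := hB.b0 g _ hg BM_zero
    rw [nr2_zero hs0 hp0] at this
    simpa using this
  have s1 : β f g ≤ ∑ i ∈ I, ∑ j ∈ J, β (F i) (G j) := by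
    have t1 := (sub_sum (β := fun f => β f g) (z1 g hg) (fun f f' h h' => hB.addl f f' g h h' hg) (I := I) hF).2
    rw [← hfF] at t1
    refine t1.trans ?_
    gcongr with i hi
    have t2 := (sub_sum (β := fun g => β (F i) g) (z2 _ (hF i)) (fun f f' h h' => hB.addr (F i) f f' (hF i) h h')
      (I := J) hG).2
    rw [← hgG] at t2
    exact t2
  calc β f g ≤ ∑ i ∈ I, ∑ j ∈ J, β (F i) (G j) := s1
    _ ≤ ∑ i ∈ I, ∑ j ∈ J, (4 * S * S' * ENNReal.ofReal Q) * (w i j * (a i ^ (1/2:ℝ) * b j ^ (1/2:ℝ))) := by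
        gcongr with i hi j hj; exact hpair i j
    _ = (4 * S * S' * ENNReal.ofReal Q) * ∑ i ∈ I, ∑ j ∈ J, (w i j * (a i ^ (1/2:ℝ) * b j ^ (1/2:ℝ))) := by
        simp_rw [← Finset.mul_sum]
    _ ≤ (4 * S * S' * ENNReal.ofReal Q) * (2 * ENNReal.ofReal K) := by
        gcongr; exact schur ha hb hw1 hw2
    _ = ENNReal.ofReal (8 * K * Q) * S * S' := by
        have e8 : ENNReal.ofReal (8 * K * Q) = 8 * ENNReal.ofReal K * ENNReal.ofReal Q := by
          rw [ENNReal.ofReal_mul (by positivity : (0:ℝ) ≤ 8 * K), ENNReal.ofReal_mul (by norm_num : (0:ℝ) ≤ 8)]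
          norm_num
        rw [e8]; ring
    _ ≤ _ := by gcongr

lemma lim_delta {b : ℝ≥0∞} {A B C E : ℝ} (hA : 0 ≤ A) (hB : 0 ≤ B) (hC : 0 ≤ C) (hE : 0 ≤ E)
    (h : ∀ δ : ℝ, 0 < δ → b ≤ ENNReal.ofReal C * (ENNReal.ofReal A + ENNReal.ofReal δ) *
      (ENNReal.ofReal B + ENNReal.ofReal δ) + ENNReal.ofReal E * ENNReal.ofReal δ) :
    b ≤ ENNReal.ofReal C * ENNReal.ofReal A * ENNReal.ofReal B := by
  have hc : Filter.Tendsto (fun δ : ℝ => ENNReal.ofReal (C * (A + δ) * (B + δ) + E * δ))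
      (nhdsWithin 0 (Set.Ioi 0)) (nhds (ENNReal.ofReal (C * (A + 0) * (B + 0) + E * 0))) := by
    have : Continuous (fun δ : ℝ => ENNReal.ofReal (C * (A + δ) * (B + δ) + E * δ)) := by
      refine ENNReal.continuous_ofReal.comp ?_
      fun_prop
    exact (this.tendsto 0).mono_left nhdsWithin_le_nhds
  have := ge_of_tendsto hc (b := b) (by
    filter_upwards [self_mem_nhdsWithin] with δ hδ
    have hδ' : 0 < δ := hδ
    refine (h δ hδ').trans (le_of_eq ?_)
    rw [ENNReal.ofReal_add (by positivity) (by positivity), ENNReal.ofReal_mul (by positivity),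
      ENNReal.ofReal_mul (by positivity), ENNReal.ofReal_mul (by positivity),
      ENNReal.ofReal_add (by positivity) (by positivity), ENNReal.ofReal_add (by positivity) (by positivity)])
  refine this.trans (le_of_eq ?_)
  rw [← ENNReal.ofReal_mul hC, ← ENNReal.ofReal_mul (by positivity)]
  simp

lemma nr2_le_bd {s p M : ℝ} (hs : 0 < s) (hp : 0 < p) {f : X × Y → ℂ} (h : ∀ z, ‖f z‖ ≤ M) :
    nr2 s p μ ν (fun z => ‖f z‖ₑ) ≤ ENNReal.ofReal M := by
  rw [← nr2_const hs hp μ ν (ENNReal.ofReal M)]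
  refine nr2_mono hs hp _ _ fun z => ?_
  rw [← ofReal_norm]; exact ENNReal.ofReal_le_ofReal (h z)

lemma interp {θ s0 p0 s1 p1 s p : ℝ} (h0 : 0 < θ) (h1 : θ < 1)
    (hs0 : 0 < s0) (hs0' : s0 ≤ 2) (hp0 : 0 < p0) (hp0' : p0 ≤ 2) (hs1 : 0 < s1) (hs1' : s1 ≤ 2)
    (hp1 : 0 < p1) (hp1' : p1 ≤ 2) (hs : 1 ≤ s) (hp : 1 ≤ p)
    (es : 1 / s = (1 - θ) * (1 / s0) + θ * (1 / s1)) (ep : 1 / p = (1 - θ) * (1 / p0) + θ * (1 / p1)) :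
    ∃ K : ℝ, 0 < K ∧ ∀ β P0 P1, 0 < P0 → 0 < P1 → BHyp μ ν β s0 p0 s1 p1 P0 P1 →
    ∀ f g, BM f → BM g →
    β f g ≤ ENNReal.ofReal (K * (P0 ^ (1 - θ) * P1 ^ θ)) *
      nr2 s p μ ν (fun z => ‖f z‖ₑ) * nr2 s p μ ν (fun z => ‖g z‖ₑ) := by
  obtain ⟨K, hK, HK⟩ := interp_b (μ := μ) (ν := ν) h0 h1 hs0 hs0' hp0 hp0' hs1 hs1' hp1 hp1' hs hp es ep
  refine ⟨K, hK, fun β P0 P1 hP0 hP1 hB f g hf hg => ?_⟩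
  have hspos : 0 < s := by linarith
  have hppos : 0 < p := by linarith
  have key : ∀ f : X × Y → ℂ, BM f → ∃ M : ℝ, 0 ≤ M ∧ (∀ z, ‖f z‖ ≤ M) ∧
      ∃ A : ℝ, 0 ≤ A ∧ nr2 s p μ ν (fun z => ‖f z‖ₑ) = ENNReal.ofReal A := by
    intro f hf
    obtain ⟨hm, M, hM⟩ := hf
    refine ⟨|M|, abs_nonneg _, fun z => (hM z).trans (le_abs_self _), _, ENNReal.toReal_nonneg,
      (ENNReal.ofReal_toReal ?_).symm⟩
    exact ne_top_of_le_ne_top ENNReal.ofReal_ne_top (nr2_le_bd hspos hppos hM)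
  obtain ⟨Mf, hMf0, hMf, A, hA, eA⟩ := key f hf
  obtain ⟨Mg, hMg0, hMg, B, hBB, eB⟩ := key g hg
  rw [eA, eB]
  refine lim_delta hA hBB (by positivity) (E := P0 * Mg + P0 * Mf) (by positivity) fun δ hδ => ?_
  have split : ∀ f : X × Y → ℂ, BM f → ∀ M A : ℝ, (∀ z, ‖f z‖ ≤ M) →
      nr2 s p μ ν (fun z => ‖f z‖ₑ) = ENNReal.ofReal A → ∃ f1 f2 : X × Y → ℂ,
      BM f1 ∧ BM f2 ∧ (f = fun z => f1 z + f2 z) ∧ (∀ z, f1 z = 0 ∨ δ ≤ ‖f1 z‖) ∧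
      (∀ z, ‖f2 z‖ ≤ δ) ∧ (∀ z, ‖f1 z‖ ≤ M) ∧ nr2 s p μ ν (fun z => ‖f1 z‖ₑ) ≤ ENNReal.ofReal A := by
    intro f hf M A hM hA
    have hms : MeasurableSet {z | δ ≤ ‖f z‖} := measurableSet_le measurable_const hf.1.norm
    refine ⟨{z | δ ≤ ‖f z‖}.indicator f, {z | δ ≤ ‖f z‖}ᶜ.indicator f, hf.indicator hms,
      hf.indicator hms.compl, ?_, fun z => ?_, fun z => ?_, fun z => ?_, ?_⟩
    · ext1 z
      exact (Set.indicator_self_add_compl_apply _ f z).symm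
    · by_cases h : z ∈ {z | δ ≤ ‖f z‖}
      · right; rw [Set.indicator_of_mem h]; exact h
      · left; exact Set.indicator_of_notMem h _
    · by_cases h : z ∈ {z | δ ≤ ‖f z‖}
      · rw [Set.indicator_of_notMem (by simpa using h)]; simpa using hδ.le
      · rw [Set.indicator_of_mem (by simpa using h)]; exact (not_le.mp h).le
    · exact (norm_indicator_le_norm_self _ _).trans (hM z)
    · rw [← hA]
      refine nr2_mono hspos hppos _ _ fun z => ?_
      exact enorm_indicator_le_enorm_self _ _
  obtain ⟨f1, f2, hf1, hf2, ef, hf1δ, hf2δ, hf1M, hf1A⟩ := split f hf Mf A hMf eA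
  obtain ⟨g1, g2, hg1, hg2, eg, hg1δ, hg2δ, hg1M, hg1A⟩ := split g hg Mg B hMg eB
  have t1 : β f g ≤ β f1 g + β f2 g := by rw [ef]; exact hB.addl _ _ _ hf1 hf2 hg
  have t2 : β f1 g ≤ β f1 g1 + β f1 g2 := by rw [eg]; exact hB.addr _ _ _ hf1 hg1 hg2
  have t3 : β f1 g1 ≤ _ := HK β P0 P1 hP0 hP1 hB f1 g1 hf1 hg1 δ hδ hf1δ hg1δ
  have t4 : β f2 g ≤ ENNReal.ofReal P0 * ENNReal.ofReal δ * ENNReal.ofReal Mg :=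
    (hB.b0 _ _ hf2 hg).trans (by
      gcongr; exacts [nr2_le_bd hs0 hp0 hf2δ, nr2_le_bd hs0 hp0 hMg])
  have t5 : β f1 g2 ≤ ENNReal.ofReal P0 * ENNReal.ofReal Mf * ENNReal.ofReal δ :=
    (hB.b0 _ _ hf1 hg2).trans (by
      gcongr; exacts [nr2_le_bd hs0 hp0 hf1M, nr2_le_bd hs0 hp0 hg2δ])
  calc β f g ≤ (β f1 g1 + β f1 g2) + β f2 g := t1.trans (by gcongr)
    _ ≤ (ENNReal.ofReal (K * (P0 ^ (1 - θ) * P1 ^ θ)) * (ENNReal.ofReal A + ENNReal.ofReal δ) *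
      (ENNReal.ofReal B + ENNReal.ofReal δ) + ENNReal.ofReal P0 * ENNReal.ofReal Mf * ENNReal.ofReal δ) +
      ENNReal.ofReal P0 * ENNReal.ofReal δ * ENNReal.ofReal Mg := by
        gcongr
        refine t3.trans ?_
        gcongr
    _ = _ := by
      rw [ENNReal.ofReal_add (by positivity : 0 ≤ P0 * Mg) (by positivity : 0 ≤ P0 * Mf),
        ENNReal.ofReal_mul hP0.le, ENNReal.ofReal_mul hP0.le]
      ring

end



lemma nr2_two {X Y : Type} [MeasurableSpace X] [MeasurableSpace Y] (μ : Measure X) (ν : Measure Y)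
    [SFinite μ] [SFinite ν] (p : ℝ) (hp : 0 < p) {g : X × Y → ℝ≥0∞} (hg : Measurable g) :
    nr2 p p μ ν g = nr p (μ.prod ν) g := by
  change (∫⁻ x, nr p ν (fun y => g (x, y)) ^ p ∂μ) ^ (1 / p) = _
  simp_rw [nr_rpow hp]
  unfold nr
  rw [lintegral_prod _ (hg.pow_const p).aemeasurable]

lemma Y_interp {Y B : Type} [MeasurableSpace Y] [Countable B] {ν : Measure Y} [IsProbabilityMeasure ν]
    {e : B → Y → ℂ} {l : B → ℝ} {k : ℝ} (h : DSys ν e l k) {θ : ℝ} (h0 : 0 ≤ θ) (h1 : θ ≤ 1) :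
    ∃ C : ℝ, 0 < C ∧ ∀ (n : ℕ) (τ : ℝ), 0 < |τ| → |τ| ≤ ((2:ℝ) ^ n)⁻¹ → ∀ {f g : Y → ℂ}, BM f → BM g →
    ‖Bf ν e l n τ f g‖ₑ ≤ ENNReal.ofReal (C * |τ| ^ (-(k * θ) / 2)) *
      nr (2 / (1 + θ)) ν (fun x => ‖f x‖ₑ) * nr (2 / (1 + θ)) ν (fun x => ‖g x‖ₑ) := by
  obtain ⟨C, hC, H⟩ := Bf_L1 h
  rcases h0.eq_or_lt with rfl | h0
  · refine ⟨1, one_pos, fun n τ ht ht' f g hf hg => ?_⟩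
    simpa using Bf_L2 h hf hg n τ
  rcases h1.eq_or_lt with rfl | h1
  · refine ⟨C, hC, fun n τ ht ht' f g hf hg => ?_⟩
    have : (2:ℝ) / (1 + 1) = 1 := by norm_num
    rw [this, mul_one]; exact H n τ ht ht' hf hg
  have hr : ∀ (p : ℝ) (F : Unit × Y → ℝ≥0∞), nr2 1 p (Measure.dirac ()) ν F = nr p ν (fun y => F ((), y)) := by
    intro p F; unfold nr2; rw [nr_one, lintegral_dirac]
  obtain ⟨K, hK, HK⟩ := interp (μ := Measure.dirac ()) (ν := ν) (s0 := 1) (s1 := 1) (s := 1) (p0 := 2) (p1 := 1)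
    (p := 2 / (1 + θ)) h0 h1
    (by norm_num) (by norm_num) (by norm_num) (by norm_num) (by norm_num) (by norm_num) (by norm_num)
    (by norm_num) le_rfl (by rw [le_div_iff₀ (by linarith)]; linarith) (by ring) (by field_simp; ring)
  refine ⟨K * C ^ θ, by positivity, fun n τ ht ht' f g hf hg => ?_⟩
  have := HK (fun F G => ‖Bf ν e l n τ (fun y => F ((), y)) (fun y => G ((), y))‖ₑ) 1 (C * |τ| ^ (-k / 2))
    one_pos (by positivity) ?_ (fun z => f z.2) (fun z => g z.2) (hf.comp measurable_snd) (hg.comp measurable_snd)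
  · rw [hr, hr] at this
    refine this.trans (le_of_eq ?_)
    congr 3
    rw [Real.one_rpow, one_mul, Real.mul_rpow hC.le (by positivity), ← Real.rpow_mul (abs_nonneg _), mul_assoc]
    congr 3; ring
  · have ms : ∀ {F : Unit × Y → ℂ}, BM F → BM (fun y => F ((), y)) := fun hF => hF.comp measurable_prodMk_left
    constructor
    · intro F F' G hF hF' hG
      rw [Bf_add_left h (ms hF) (ms hF') (ms hG)]
      exact enorm_add_le _ _
    · intro G F F' hG hF hF'
      rw [Bf_add_right h (ms hG) (ms hF') (ms hF)]
      exact enorm_add_le _ _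
    · intro F G hF hG
      rw [hr, hr, ENNReal.ofReal_one, one_mul]
      exact Bf_L2 h (ms hF) (ms hG) n τ
    · intro F G hF hG
      rw [hr, hr]
      exact H n τ ht ht' (ms hF) (ms hG)

/-- Dispersive estimate in mixed norms. -/
lemma DI {X A Y B : Type} [MeasurableSpace X] [MeasurableSpace Y] [Countable A] [Countable B]
    {μ : Measure X} {ν : Measure Y} [IsProbabilityMeasure μ] [IsProbabilityMeasure ν]
    {e : A → X → ℂ} {l : A → ℝ} {m : ℝ} {e' : B → Y → ℂ} {l' : B → ℝ} {k : ℝ}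
    (h : DSys μ e l m) (h' : DSys ν e' l' k) {α β : ℝ} (hα0 : 0 < α) (hα1 : α < 1) (hβ0 : 0 ≤ β) (hβ1 : β ≤ α) :
    ∃ C : ℝ, 0 < C ∧ ∀ (n : ℕ) (τ : ℝ), 0 < |τ| → |τ| ≤ ((2:ℝ) ^ n)⁻¹ → ∀ {f g : X × Y → ℂ}, BM f → BM g →
    ‖Bf (μ.prod ν) (fun (a : A × B) (z : X × Y) => e a.1 z.1 * e' a.2 z.2) (fun a => l a.1 + l' a.2) n τ f g‖ₑ ≤
      ENNReal.ofReal (C * |τ| ^ (-((m * α + k * β) / 2))) *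
      nr2 (2 / (1 + α)) (2 / (1 + β)) μ ν (fun x => ‖f x‖ₑ) *
      nr2 (2 / (1 + α)) (2 / (1 + β)) μ ν (fun x => ‖g x‖ₑ) := by
  have hp := h.prod h'
  set θ := β / α with hθ
  have hθ0 : 0 ≤ θ := by positivity
  have hθ1 : θ ≤ 1 := by rw [hθ, div_le_one hα0]; exact hβ1
  have hβ : β = α * θ := by rw [hθ]; field_simp
  obtain ⟨C1, hC1, H1⟩ := Y_interp h' hθ0 hθ1
  obtain ⟨C2, hC2, H2⟩ := Bf_pair h h'
  obtain ⟨K, hK, HK⟩ := interp (μ := μ) (ν := ν) (s0 := 2) (s1 := 1) (s := 2 / (1 + α)) (p0 := 2) (p1 := 2 / (1 + θ))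
    (p := 2 / (1 + β)) hα0 hα1
    (by norm_num) (by norm_num) (by norm_num) (by norm_num) (by norm_num) (by norm_num) (by positivity)
    (by rw [div_le_iff₀ (by linarith)]; linarith) (by rw [le_div_iff₀ (by linarith)]; linarith)
    (by rw [le_div_iff₀ (by linarith)]; linarith) (by field_simp; ring) (by rw [hβ]; field_simp; ring)
  refine ⟨K * (C2 * C1) ^ α, by positivity, fun n τ ht ht' f g hf hg => ?_⟩
  have := HK (fun F G => ‖Bf (μ.prod ν) (fun (a : A × B) (z : X × Y) => e a.1 z.1 * e' a.2 z.2)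
    (fun a => l a.1 + l' a.2) n τ F G‖ₑ) 1 (C2 * |τ| ^ (-m / 2) * (C1 * |τ| ^ (-(k * θ) / 2)))
    one_pos (by positivity) ?_ f g hf hg
  · refine this.trans (le_of_eq ?_)
    congr 3
    have e1 : C2 * |τ| ^ (-m / 2) * (C1 * |τ| ^ (-(k * θ) / 2)) = (C2 * C1) * |τ| ^ (-m / 2 + -(k * θ) / 2) := by
      rw [Real.rpow_add ht]; ring
    rw [e1, Real.one_rpow, one_mul, Real.mul_rpow (by positivity) (by positivity),
      ← Real.rpow_mul (abs_nonneg _), mul_assoc]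
    congr 3; rw [hβ]; ring
  · constructor
    · intro F F' G hF hF' hG
      rw [Bf_add_left hp hF hF' hG]
      exact enorm_add_le _ _
    · intro G F F' hG hF hF'
      rw [Bf_add_right hp hG hF' hF]
      exact enorm_add_le _ _
    · intro F G hF hG
      rw [ENNReal.ofReal_one, one_mul, nr2_two μ ν 2 (by norm_num) hF.1.enorm, nr2_two μ ν 2 (by norm_num) hG.1.enorm]
      exact Bf_L2 hp hF hG n τ
    · intro F G hF hG
      rw [ENNReal.ofReal_mul (by positivity)]
      exact H2 n τ ht ht' _ _ (fun hf hg => H1 n τ ht ht' hf hg) hF hG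



lemma even_lint {G h : ℝ → ℝ≥0∞} (hh : Measurable h) (hG : ∀ t, G t ≤ h t + h (-t)) (s : ℝ) :
    ∫⁻ t, G (t - s) ≤ 2 * ∫⁻ t, h t := by
  rw [lintegral_sub_right_eq_self G s]
  refine (lintegral_mono hG).trans ?_
  rw [lintegral_add_left hh, lintegral_neg_eq_self h, two_mul]

lemma near_lint {σ : ℝ} (h0 : 0 < σ) (h1 : σ < 1) {ρ : ℝ} (hρ : 0 < ρ) (s : ℝ) :
    ∫⁻ t, {u : ℝ | |u| ≤ ρ}.indicator (fun u => ENNReal.ofReal (|u| ^ (-σ))) (t - s) ≤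
      ENNReal.ofReal (2 / (1 - σ) * ρ ^ (1 - σ)) := by
  have hm : Measurable ((Set.Ioc 0 ρ).indicator (fun u : ℝ => ENNReal.ofReal (u ^ (-σ)))) := by
    refine Measurable.indicator ?_ measurableSet_Ioc
    fun_prop
  refine (even_lint hm (fun t => ?_) s).trans ?_
  · rcases lt_trichotomy t 0 with ht | rfl | ht
    · refine le_add_left ?_
      by_cases h : |t| ≤ ρ
      · rw [Set.indicator_of_mem (by exact h), Set.indicator_of_mem, abs_of_neg ht]
        rw [abs_of_neg ht] at h
        exact ⟨by linarith, h⟩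
      · rw [Set.indicator_of_notMem (by exact h)]; exact zero_le
    · rw [Set.indicator_of_mem (by simpa using hρ.le)]
      rw [abs_zero, Real.zero_rpow (by linarith)]; simp
    · refine le_add_right ?_
      by_cases h : |t| ≤ ρ
      · rw [Set.indicator_of_mem (by exact h), Set.indicator_of_mem, abs_of_pos ht]
        rw [abs_of_pos ht] at h
        exact ⟨by linarith, h⟩
      · rw [Set.indicator_of_notMem (by exact h)]; exact zero_le
  · rw [lintegral_indicator measurableSet_Ioc]
    have hi : IntegrableOn (fun u : ℝ => u ^ (-σ)) (Set.Ioc 0 ρ) volume := by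
      rw [← intervalIntegrable_iff_integrableOn_Ioc_of_le hρ.le]
      exact intervalIntegral.intervalIntegrable_rpow' (by linarith)
    rw [← ofReal_integral_eq_lintegral_ofReal hi
      ((ae_restrict_iff' measurableSet_Ioc).mpr (Filter.Eventually.of_forall fun u hu =>
        Real.rpow_nonneg hu.1.le _)), ← intervalIntegral.integral_of_le hρ.le,
      integral_rpow (Or.inl (by linarith)), Real.zero_rpow (by linarith)]
    have : (2:ℝ≥0∞) = ENNReal.ofReal 2 := by norm_num
    rw [this, ← ENNReal.ofReal_mul (by norm_num)]
    refine le_of_eq ?_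
    congr 1
    rw [show -σ + 1 = 1 - σ by ring]; ring

lemma far_lint {ρ : ℝ} (hρ : 0 < ρ) (s : ℝ) :
    ∫⁻ t, {u : ℝ | ρ < |u|}.indicator (fun u => ENNReal.ofReal (|u| ^ (-2:ℝ))) (t - s) ≤
      ENNReal.ofReal (2 * ρ⁻¹) := by
  have hm : Measurable ((Set.Ioi ρ).indicator (fun u : ℝ => ENNReal.ofReal (u ^ (-2:ℝ)))) := by
    refine Measurable.indicator ?_ measurableSet_Ioi
    fun_prop
  refine (even_lint hm (fun t => ?_) s).trans ?_
  · by_cases h : ρ < |t|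
    · rw [Set.indicator_of_mem (by exact h)]
      rcases le_total t 0 with ht | ht
      · refine le_add_left ?_
        rw [abs_of_nonpos ht] at h ⊢
        rw [Set.indicator_of_mem (by exact h)]
      · refine le_add_right ?_
        rw [abs_of_nonneg ht] at h ⊢
        rw [Set.indicator_of_mem (by exact h)]
    · rw [Set.indicator_of_notMem (by exact h)]; exact zero_le
  · rw [lintegral_indicator measurableSet_Ioi]
    rw [← ofReal_integral_eq_lintegral_ofReal (integrableOn_Ioi_rpow_of_lt (by norm_num) hρ)
      ((ae_restrict_iff' measurableSet_Ioi).mpr (Filter.Eventually.of_forall fun u hu =>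
        Real.rpow_nonneg (hρ.trans hu).le _)),
      integral_Ioi_rpow_of_lt (by norm_num) hρ]
    have : (2:ℝ≥0∞) = ENNReal.ofReal 2 := by norm_num
    rw [this, ← ENNReal.ofReal_mul (by norm_num)]
    refine le_of_eq ?_
    congr 1
    rw [show (-2:ℝ) + 1 = -1 by norm_num, Real.rpow_neg_one]; ring

/-- One-sided bound for the fractional integral. -/
lemma hls_one {σ : ℝ} (h0 : 0 < σ) (h1 : σ < 1) {φ : ℝ → ℝ≥0∞} (hφ : Measurable φ) {S : ℝ≥0∞}
    (hS : ∫⁻ t, φ t ^ (2 / (2 - σ)) ≤ S ^ (2 / (2 - σ))) (hS0 : S ≠ 0) (hSt : S ≠ ⊤) (s : ℝ)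
    (hb0 : φ s ≠ 0) (hbt : φ s ≠ ⊤) :
    ∫⁻ t, {t | φ t ≤ φ s}.indicator (fun t => φ t * ENNReal.ofReal (|t - s| ^ (-σ))) t ≤
      ENNReal.ofReal (2 / (1 - σ) + 2 ^ (σ / 2)) * (φ s ^ (2 / (2 - σ) - 1) * S ^ (2 - 2 / (2 - σ))) := by
  set a := 2 / (2 - σ) with ha
  have h2 : 0 < 2 - σ := by linarith
  have ha0 : 0 < a := by positivity
  -- reduce to real numbers
  obtain ⟨b, hb, eb⟩ : ∃ b : ℝ, 0 < b ∧ φ s = ENNReal.ofReal b :=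
    ⟨(φ s).toReal, ENNReal.toReal_pos hb0 hbt, (ENNReal.ofReal_toReal hbt).symm⟩
  obtain ⟨T, hT, eT⟩ : ∃ b : ℝ, 0 < b ∧ S = ENNReal.ofReal b :=
    ⟨S.toReal, ENNReal.toReal_pos hS0 hSt, (ENNReal.ofReal_toReal hSt).symm⟩
  set ρ := (b / T) ^ (-a) with hρ
  have hρ0 : 0 < ρ := by positivity
  -- split
  have hsp : ∀ t, {t | φ t ≤ φ s}.indicator (fun t => φ t * ENNReal.ofReal (|t - s| ^ (-σ))) t ≤
      φ s * {u : ℝ | |u| ≤ ρ}.indicator (fun u => ENNReal.ofReal (|u| ^ (-σ))) (t - s) +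
      φ t * {u : ℝ | ρ < |u|}.indicator (fun u => ENNReal.ofReal (|u| ^ (-σ))) (t - s) := by
    intro t
    by_cases ht : φ t ≤ φ s
    · rw [Set.indicator_of_mem (by exact ht)]
      by_cases h : |t - s| ≤ ρ
      · refine le_add_right ?_
        rw [Set.indicator_of_mem (by exact h)]
        gcongr
      · refine le_add_left ?_
        rw [Set.indicator_of_mem (by simpa using h)]
    · rw [Set.indicator_of_notMem (by exact ht)]; exact zero_le
  have mI : ∀ x : ℝ, Measurable fun t => {u : ℝ | ρ < |u|}.indicator (fun u => ENNReal.ofReal (|u| ^ x)) (t - s) := by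
    intro x
    have : Measurable ({u : ℝ | ρ < |u|}.indicator (fun u : ℝ => ENNReal.ofReal (|u| ^ x))) := by
      refine Measurable.indicator ?_ (measurableSet_lt measurable_const (by fun_prop))
      fun_prop
    exact this.comp (measurable_id.sub_const s)
  have mJ : Measurable fun t => {u : ℝ | |u| ≤ ρ}.indicator (fun u => ENNReal.ofReal (|u| ^ (-σ))) (t - s) := by
    have : Measurable ({u : ℝ | |u| ≤ ρ}.indicator (fun u : ℝ => ENNReal.ofReal (|u| ^ (-σ)))) := by
      refine Measurable.indicator ?_ (measurableSet_le (by fun_prop) measurable_const)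
      fun_prop
    exact this.comp (measurable_id.sub_const s)
  have hconj : a.HolderConjugate (2 / σ) := by
    rw [Real.holderConjugate_iff]
    refine ⟨by rw [ha, lt_div_iff₀ h2]; linarith, ?_⟩
    rw [ha]; field_simp; ring
  have hfar : ∫⁻ t, φ t * {u : ℝ | ρ < |u|}.indicator (fun u => ENNReal.ofReal (|u| ^ (-σ))) (t - s) ≤
      S * ENNReal.ofReal (2 * ρ⁻¹) ^ (σ / 2) := by
    refine (ENNReal.lintegral_mul_le_Lp_mul_Lq volume hconj hφ.aemeasurable (mI (-σ)).aemeasurable).trans ?_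
    gcongr
    · rw [one_div, ENNReal.rpow_inv_le_iff ha0]; exact hS
    · rw [show 1 / (2 / σ) = σ / 2 by field_simp]
      gcongr
      refine le_trans (le_of_eq ?_) (far_lint hρ0 s)
      congr 1; ext1 t
      by_cases h : ρ < |t - s|
      · rw [Set.indicator_of_mem (by exact h), Set.indicator_of_mem (by exact h),
          ENNReal.ofReal_rpow_of_nonneg (by positivity) (by positivity), ← Real.rpow_mul (abs_nonneg _)]
        congr 2; field_simp
      · rw [Set.indicator_of_notMem (by exact h), Set.indicator_of_notMem (by exact h),
          ENNReal.zero_rpow_of_pos (by positivity)]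
  refine (lintegral_mono hsp).trans ?_
  rw [lintegral_add_left (mJ.const_mul _), lintegral_const_mul _ mJ]
  refine (add_le_add (mul_le_mul_right (near_lint h0 h1 hρ0 s) _) hfar).trans ?_
  rw [eb, eT, ENNReal.ofReal_rpow_of_pos hb, ENNReal.ofReal_rpow_of_pos hT,
    ENNReal.ofReal_rpow_of_nonneg (by positivity) (by positivity),
    ← ENNReal.ofReal_mul (by positivity), ← ENNReal.ofReal_mul (by positivity),
    ← ENNReal.ofReal_mul (by positivity), ← ENNReal.ofReal_mul (by have : 0 < 1 - σ := by linarith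
                                                                   positivity),
    ← ENNReal.ofReal_add (by have : 0 < 1 - σ := by linarith
                             positivity) (by positivity)]
  refine le_of_eq ?_
  congr 1
  have e1 : ρ ^ (1 - σ) = b ^ (a - 2) * T ^ (2 - a) := by
    rw [hρ, ← Real.rpow_mul (by positivity), show -a * (1 - σ) = a - 2 by rw [ha]; field_simp; ring,
      Real.div_rpow hb.le hT.le, show 2 - a = -(a - 2) by ring, Real.rpow_neg hT.le]
    rfl
  have e2 : (2 * ρ⁻¹) ^ (σ / 2) = 2 ^ (σ / 2) * (b ^ (a - 1) * T ^ (1 - a)) := by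
    rw [Real.mul_rpow (by norm_num) (by positivity), hρ, ← Real.rpow_neg (by positivity), neg_neg,
      ← Real.rpow_mul (by positivity), show a * (σ / 2) = a - 1 by rw [ha]; field_simp; ring,
      Real.div_rpow hb.le hT.le, show 1 - a = -(a - 1) by ring, Real.rpow_neg hT.le]
    rfl
  rw [e1, e2]
  have e3 : b ^ (a - 1) = b ^ (a - 2) * b := by
    rw [← Real.rpow_add_one hb.ne']; congr 1; ring
  have e4 : T ^ (2 - a) = T ^ (1 - a) * T := by
    rw [← Real.rpow_add_one hT.ne']; congr 1; ring
  rw [e3, e4]; ring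

/-- Hardy-Littlewood-Sobolev (diagonal case, dimension one). -/
lemma hls {σ : ℝ} (h0 : 0 < σ) (h1 : σ < 1) : ∃ C : ℝ, 0 < C ∧ ∀ φ : ℝ → ℝ≥0∞, Measurable φ →
    (∀ t, φ t ≠ ⊤) → ∫⁻ s, ∫⁻ t, φ s * φ t * ENNReal.ofReal (|t - s| ^ (-σ)) ≤
      ENNReal.ofReal C * nr (2 / (2 - σ)) volume φ ^ (2:ℝ) := by
  have h2 : 0 < 2 - σ := by linarith
  have h3 : 0 < 1 - σ := by linarith
  set a := 2 / (2 - σ) with ha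
  have ha0 : 0 < a := by positivity
  refine ⟨2 * (2 / (1 - σ) + 2 ^ (σ / 2)), by positivity, fun φ hφ hfin => ?_⟩
  set S := nr a volume φ with hS
  have hSa : S ^ a = ∫⁻ t, φ t ^ a := nr_rpow ha0 _ _
  rcases eq_or_ne S 0 with hS0 | hS0
  · rw [hS0, ENNReal.zero_rpow_of_pos ha0] at hSa
    have := (lintegral_eq_zero_iff (hφ.pow_const a)).mp hSa.symm
    refine le_trans (le_of_eq ?_) zero_le
    rw [lintegral_eq_zero_iff (by
      refine Measurable.lintegral_prod_right' (f := fun p : ℝ × ℝ => φ p.1 * φ p.2 * ENNReal.ofReal (|p.2 - p.1| ^ (-σ))) ?_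
      fun_prop)]
    filter_upwards [this] with s hs
    have hs0 : φ s = 0 := by
      have : φ s ^ a = 0 := hs
      simpa [ha0, ha0.le, ha0.not_gt] using this
    simp [hs0]
  rcases eq_or_ne S ⊤ with hSt | hSt
  · rw [hSt, ENNReal.top_rpow_of_pos (by norm_num), ENNReal.mul_top (by simp; positivity)]
    exact le_top
  let W : ℝ → ℝ → ℝ≥0∞ := fun s t => {p : ℝ × ℝ | φ p.2 ≤ φ p.1}.indicator
    (fun p => φ p.1 * φ p.2 * ENNReal.ofReal (|p.2 - p.1| ^ (-σ))) (s, t)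
  have hWm : Measurable (Function.uncurry W) := by
    change Measurable ({p : ℝ × ℝ | φ p.2 ≤ φ p.1}.indicator
      (fun p => φ p.1 * φ p.2 * ENNReal.ofReal (|p.2 - p.1| ^ (-σ))))
    refine Measurable.indicator (by fun_prop) (measurableSet_le (by fun_prop) (by fun_prop))
  have hW : ∀ s t, φ s * φ t * ENNReal.ofReal (|t - s| ^ (-σ)) ≤ W s t + W t s := by
    intro s t
    rcases le_total (φ t) (φ s) with h | h
    · refine le_add_right ?_
      simp only [W]
      rw [Set.indicator_of_mem (by exact h)]
    · refine le_add_left ?_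
      simp only [W]
      rw [Set.indicator_of_mem (by exact h), abs_sub_comm, mul_comm (φ s)]
  have hWb : ∫⁻ s, ∫⁻ t, W s t ≤ ENNReal.ofReal (2 / (1 - σ) + 2 ^ (σ / 2)) * S ^ (2:ℝ) := by
    calc ∫⁻ s, ∫⁻ t, W s t ≤ ∫⁻ s, φ s ^ a * (ENNReal.ofReal (2 / (1 - σ) + 2 ^ (σ / 2)) * S ^ (2 - a)) := by
          refine lintegral_mono fun s => ?_
          have e : ∀ t, W s t = φ s * {t | φ t ≤ φ s}.indicator (fun t => φ t * ENNReal.ofReal (|t - s| ^ (-σ))) t := by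
            intro t
            simp only [W]
            by_cases h : φ t ≤ φ s
            · rw [Set.indicator_of_mem (by exact h), Set.indicator_of_mem (by exact h)]; ring
            · rw [Set.indicator_of_notMem (by exact h), Set.indicator_of_notMem (by exact h), mul_zero]
          simp only [e]
          rw [lintegral_const_mul _ (by
            refine Measurable.indicator (by fun_prop) (measurableSet_le hφ measurable_const))]
          rcases eq_or_ne (φ s) 0 with hs | hs
          · rw [hs, zero_mul]; exact zero_le
          refine (mul_le_mul_right (hls_one h0 h1 hφ hSa.symm.le hS0 hSt s hs (hfin s)) _).trans (le_of_eq ?_)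
          have : φ s ^ a = φ s * φ s ^ (a - 1) := by
            conv_rhs => rw [← ENNReal.rpow_one (φ s), ← ENNReal.rpow_mul, one_mul]
            rw [← ENNReal.rpow_add _ _ hs (hfin s)]; congr 1; ring
          rw [this]; ring
      _ = _ := by
          rw [lintegral_mul_const _ (hφ.pow_const a), ← hSa, mul_left_comm, ← ENNReal.rpow_add _ _ hS0 hSt]
          congr 2; ring
  calc _ ≤ ∫⁻ s, ∫⁻ t, (W s t + W t s) := lintegral_mono fun s => lintegral_mono fun t => hW s t
    _ = (∫⁻ s, ∫⁻ t, W s t) + ∫⁻ s, ∫⁻ t, W t s := by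
        have hmm : Measurable fun s => ∫⁻ t, W s t := Measurable.lintegral_prod_right' (f := Function.uncurry W) hWm
        rw [← lintegral_add_left hmm]
        congr 1; ext1 s
        exact lintegral_add_left (hWm.comp measurable_prodMk_left) _
    _ = (∫⁻ s, ∫⁻ t, W s t) + ∫⁻ s, ∫⁻ t, W s t := by
        congr 1
        exact (lintegral_lintegral_swap hWm.aemeasurable).symm
    _ ≤ _ := by
        rw [← two_mul, ENNReal.ofReal_mul (by norm_num), mul_assoc]
        gcongr
        norm_num



/-- Lebesgue measure on the unit time interval -/
def kap : Measure ℝ := volume.restrict (Set.Ioc 0 1)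

instance : IsProbabilityMeasure kap := ⟨by simp [kap]⟩
instance : NullSingletonClass kap := by unfold kap; infer_instance

/-- time dependent coefficient -/
def uu {Z A : Type} [MeasurableSpace Z] (ρ : Measure Z) (E : A → Z → ℂ) (L : A → ℝ) (F : ℝ × Z → ℂ) (a : A)
    (t : ℝ) : ℂ := fc ρ E (fun z => F (t, z)) a * cexp (-(2 * π * I * (L a : ℂ) * t))

/-- space-time Fourier coefficient on the paraboloid -/
def fh {Z A : Type} [MeasurableSpace Z] (ρ : Measure Z) (E : A → Z → ℂ) (L : A → ℝ) (F : ℝ × Z → ℂ) (a : A) : ℂ :=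
  ∫ t, uu ρ E L F a t ∂kap

/-- damped square sum -/
def Qn {Z A : Type} [MeasurableSpace Z] (ρ : Measure Z) (E : A → Z → ℂ) (L : A → ℝ) (n : ℕ) (F : ℝ × Z → ℂ) : ℝ≥0∞ :=
  ∑' a, ENNReal.ofReal (Real.exp (-π * L a / 4 ^ n)) * ‖fh ρ E L F a‖ₑ ^ (2:ℝ)

section
variable {Z A : Type} [MeasurableSpace Z] {ρ : Measure Z} [IsProbabilityMeasure ρ]
    {E : A → Z → ℂ} {L : A → ℝ} {D : ℝ}

lemma norm_ph (l t : ℝ) : ‖cexp (-(2 * π * I * (l : ℂ) * t))‖ = 1 := by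
  rw [Complex.norm_exp]; simp

lemma BM.slice {F : ℝ × Z → ℂ} (hF : BM F) (t : ℝ) : BM (fun z => F (t, z)) := hF.comp measurable_prodMk_left

lemma uu_bm (h : DSys ρ E L D) {F : ℝ × Z → ℂ} (hF : BM F) (a : A) : BM (uu ρ E L F a) := by
  obtain ⟨hm, M, hM⟩ := hF
  refine ⟨?_, M, fun t => ?_⟩
  · unfold uu
    refine Measurable.mul ?_ (by fun_prop)
    unfold fc
    have : StronglyMeasurable fun p : ℝ × Z => F p * conj (E a p.2) := by
      refine Measurable.stronglyMeasurable (hm.mul ?_)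
      exact Complex.continuous_conj.measurable.comp ((h.meas a).comp measurable_snd)
    exact this.integral_prod_right'.measurable
  · unfold uu
    rw [norm_mul, norm_ph, mul_one]
    exact norm_fc_le h (fun x => hM _) a

lemma uu_bd (h : DSys ρ E L D) {F : ℝ × Z → ℂ} {M : ℝ} (hM : ∀ z, ‖F z‖ ≤ M) (a : A) (t : ℝ) :
    ‖uu ρ E L F a t‖ ≤ M := by
  unfold uu
  rw [norm_mul, norm_ph, mul_one]
  exact norm_fc_le h (fun x => hM _) a

lemma fh_bd (h : DSys ρ E L D) {F : ℝ × Z → ℂ} {M : ℝ} (hM : ∀ z, ‖F z‖ ≤ M) (a : A) :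
    ‖fh ρ E L F a‖ ≤ M := by
  have := norm_integral_le_of_norm_le_const (μ := kap) (f := uu ρ E L F a) (C := M)
    (Filter.Eventually.of_forall fun t => uu_bd h hM a t)
  simpa [fh] using this

lemma fh_add (h : DSys ρ E L D) {F G : ℝ × Z → ℂ} (hF : BM F) (hG : BM G) (a : A) :
    fh ρ E L (fun z => F z + G z) a = fh ρ E L F a + fh ρ E L G a := by
  unfold fh
  rw [← integral_add ((uu_bm h hF a).integrable kap) ((uu_bm h hG a).integrable kap)]
  congr 1; ext1 t
  unfold uu
  rw [fc_add h (hF.slice t) (hG.slice t), add_mul]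

lemma Qn_exch [Countable A] (h : DSys ρ E L D) {F : ℝ × Z → ℂ} (hF : BM F) (n : ℕ) :
    Qn ρ E L n F ≤ ∫⁻ t, ∫⁻ t', ‖Bf ρ E L n (t' - t) (fun z => F (t, z)) (fun z => F (t', z))‖ₑ ∂kap ∂kap := by
  obtain ⟨hm, M, hM⟩ := id hF
  have key := exchange kap (fun a => cf n 0 (L a)) (h.summ_cf n 0) (uu ρ E L F) (uu ρ E L F)
    (fun a => (uu_bm h hF a).1) (fun a => (uu_bm h hF a).1) M M (uu_bd h hM) (uu_bd h hM)
  have e1 : ∀ a, cf n 0 (L a) * ((∫ x, uu ρ E L F a x ∂kap) * conj (∫ x, uu ρ E L F a x ∂kap)) =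
      ((Real.exp (-π * L a / 4 ^ n) * ‖fh ρ E L F a‖ ^ 2 : ℝ) : ℂ) := by
    intro a
    change cf n 0 (L a) * (fh ρ E L F a * conj (fh ρ E L F a)) = _
    rw [Complex.mul_conj', cf]; push_cast; simp
  have hs : Summable fun a => Real.exp (-π * L a / 4 ^ n) * ‖fh ρ E L F a‖ ^ 2 := by
    refine Summable.of_nonneg_of_le (fun a => by positivity) (fun a => ?_)
      ((h.summ_cf n 0).mul_right (M ^ 2))
    rw [cf_norm]
    gcongr
    exact fh_bd h hM a
  simp_rw [e1] at key
  rw [← Complex.ofReal_tsum, ← ofReal_norm, Complex.norm_real, Real.norm_of_nonneg (tsum_nonneg fun a => by positivity),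
    ENNReal.ofReal_tsum_of_nonneg (fun a => by positivity) hs] at key
  unfold Qn
  refine le_trans (le_of_eq ?_) (key.trans (le_of_eq ?_))
  · congr 1; ext1 a
    rw [ENNReal.ofReal_mul (by positivity), ENNReal.ofReal_pow (norm_nonneg _), ofReal_norm]
    norm_num
  · congr 1; ext1 t; congr 1; ext1 t'; congr 1
    unfold Bf
    congr 1; ext1 a
    unfold uu cf
    have : conj (cexp (-(2 * π * I * (L a : ℂ) * t'))) = cexp (2 * π * I * (L a : ℂ) * t') := by
      rw [← Complex.exp_conj]; congr 1
      rw [map_neg, map_mul, map_mul, map_mul, map_mul, Complex.conj_I, Complex.conj_ofReal, Complex.conj_ofReal,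
        Complex.conj_ofReal, map_ofNat]
      ring
    rw [map_mul, this]
    have e2 : cexp (2 * π * I * (L a : ℂ) * ((t' - t : ℝ) : ℂ)) =
        cexp (-(2 * π * I * (L a : ℂ) * t)) * cexp (2 * π * I * (L a : ℂ) * t') := by
      rw [← Complex.exp_add]; congr 1; push_cast; ring
    rw [e2]; simp; ring

lemma mink {J : Type} (s : Finset J) (g : J → A → ℝ≥0∞) :
    (∑' a, (∑ j ∈ s, g j a) ^ (2:ℝ)) ^ (1/2:ℝ) ≤ ∑ j ∈ s, (∑' a, g j a ^ (2:ℝ)) ^ (1/2:ℝ) := by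
  classical
  letI : MeasurableSpace A := ⊤
  have e : ∀ f : A → ℝ≥0∞, (∑' a, f a ^ (2:ℝ)) ^ (1/2:ℝ) = nr 2 Measure.count f := by
    intro f; unfold nr; rw [lintegral_count]
  simp_rw [e]
  induction s using Finset.induction_on with
  | empty => simp [nr]
  | insert j s hj ih =>
    simp_rw [Finset.sum_insert hj]
    refine (nr_add (by norm_num) _ (measurable_from_top) (measurable_from_top)).trans ?_
    gcongr

/-- local-in-time estimate -/
lemma Qn_local [Countable A] (h : DSys ρ E L D) {σ Ch C : ℝ} (h0 : 0 < σ) (h1 : σ < 1) (hC : 0 < C)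
    (hh : ∀ φ : ℝ → ℝ≥0∞, Measurable φ →
    (∀ t, φ t ≠ ⊤) → ∫⁻ s, ∫⁻ t, φ s * φ t * ENNReal.ofReal (|t - s| ^ (-σ)) ≤
      ENNReal.ofReal Ch * nr (2 / (2 - σ)) volume φ ^ (2:ℝ)) {F : ℝ × Z → ℂ} (hF : BM F) (n : ℕ)
    {φ : ℝ → ℝ≥0∞} (hφ : Measurable φ) (hft : ∀ t, φ t ≠ ⊤)
    (hB : ∀ t t', t' ≠ t → ‖Bf ρ E L n (t' - t) (fun z => F (t, z)) (fun z => F (t', z))‖ₑ ≤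
      ENNReal.ofReal (C * |t' - t| ^ (-σ)) * φ t * φ t') :
    Qn ρ E L n F ≤ ENNReal.ofReal (C * Ch) * nr (2 / (2 - σ)) volume φ ^ (2:ℝ) := by
  refine (Qn_exch h hF n).trans ?_
  have hle : kap ≤ volume := Measure.restrict_le_self
  calc _ ≤ ∫⁻ t, ∫⁻ t', ENNReal.ofReal C * (φ t * φ t' * ENNReal.ofReal (|t' - t| ^ (-σ))) ∂kap ∂kap := by
        refine lintegral_mono fun t => lintegral_mono_ae ?_
        have : ∀ᵐ t' ∂kap, t' ≠ t := by
          exact compl_mem_ae_iff.mpr (measure_singleton t)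
        filter_upwards [this] with t' ht'
        refine (hB t t' ht').trans (le_of_eq ?_)
        rw [ENNReal.ofReal_mul hC.le]; ring
    _ ≤ ∫⁻ t, ∫⁻ t', ENNReal.ofReal C * (φ t * φ t' * ENNReal.ofReal (|t' - t| ^ (-σ))) :=
        lintegral_mono' hle fun t => lintegral_mono' hle fun t' => le_rfl
    _ = ENNReal.ofReal C * ∫⁻ t, ∫⁻ t', (φ t * φ t' * ENNReal.ofReal (|t' - t| ^ (-σ))) := by
        rw [← lintegral_const_mul']
        · congr 1; ext1 t; rw [lintegral_const_mul']; simp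
        · simp
    _ ≤ _ := by
        rw [ENNReal.ofReal_mul hC.le, mul_assoc]
        gcongr
        exact hh φ hφ hft

/-- restriction of a space-time function to a time set -/
def tcut (J : Set ℝ) (F : ℝ × Z → ℂ) : ℝ × Z → ℂ := (Prod.fst ⁻¹' J).indicator F

lemma tcut_slice_in {J : Set ℝ} (F : ℝ × Z → ℂ) {t : ℝ} (ht : t ∈ J) :
    (fun z => tcut J F (t, z)) = fun z => F (t, z) := by
  ext1 z; exact Set.indicator_of_mem (by exact ht) _

lemma tcut_slice_out {J : Set ℝ} (F : ℝ × Z → ℂ) {t : ℝ} (ht : t ∉ J) :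
    (fun z => tcut J F (t, z)) = fun _ => 0 := by
  ext1 z; exact Set.indicator_of_notMem (by exact ht) _

lemma fc_zero (a : A) : fc ρ E (fun _ => 0) a = 0 := by simp [fc]

lemma uu_tcut (J : Set ℝ) (F : ℝ × Z → ℂ) (a : A) : uu ρ E L (tcut J F) a = J.indicator (uu ρ E L F a) := by
  ext1 t
  by_cases ht : t ∈ J
  · rw [Set.indicator_of_mem ht]; unfold uu; rw [tcut_slice_in F ht]
  · rw [Set.indicator_of_notMem ht]; unfold uu; rw [tcut_slice_out F ht, fc_zero, zero_mul]

/-- global-in-time estimate for each dyadic scale -/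
lemma LS [Countable A] (h : DSys ρ E L D) {σ : ℝ} (h0 : 0 < σ) (h1 : σ < 1) : ∃ Ch : ℝ, 0 < Ch ∧
    ∀ (n : ℕ) (C : ℝ) (F : ℝ × Z → ℂ) (φ : ℝ → ℝ≥0∞), 0 < C → BM F → Measurable φ → (∀ t, φ t ≠ ⊤) →
    (∀ t t', 0 < |t' - t| → |t' - t| ≤ ((2:ℝ) ^ n)⁻¹ →
      ‖Bf ρ E L n (t' - t) (fun z => F (t, z)) (fun z => F (t', z))‖ₑ ≤
      ENNReal.ofReal (C * |t' - t| ^ (-σ)) * φ t * φ t') →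
    Qn ρ E L n F ≤ ENNReal.ofReal (C * Ch) * (2 ^ (n * σ) * nr (2 / (2 - σ)) kap φ ^ (2:ℝ)) := by
  obtain ⟨Ch, hCh, hh⟩ := hls h0 h1
  refine ⟨Ch, hCh, fun n C F φ hC hF hφ hft hB => ?_⟩
  have h2 : 0 < 2 - σ := by linarith
  set a := 2 / (2 - σ) with ha
  have ha0 : 0 < a := by positivity
  let c : ℕ → ℝ := fun j => j / 2 ^ n
  let J : ℕ → Set ℝ := fun j => Set.Ioc (c j) (c (j + 1))
  have hcm : Monotone c := fun i j hij => by simp only [c]; gcongr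
  have hJm : ∀ j, MeasurableSet (J j) := fun j => measurableSet_Ioc
  have hJs : ∀ j ∈ Finset.range (2 ^ n), J j ⊆ Set.Ioc 0 1 := by
    intro j hj t ht
    refine ⟨lt_of_le_of_lt (by simp only [c]; positivity) ht.1, ht.2.trans ?_⟩
    simp only [c]
    rw [div_le_one (by positivity)]
    have := Finset.mem_range.mp hj
    exact_mod_cast this
  have bmJ : ∀ j, BM (tcut (J j) F) := fun j => hF.indicator (measurable_fst (hJm j))
  -- local pieces
  have hloc : ∀ j, Qn ρ E L n (tcut (J j) F) ≤ ENNReal.ofReal (C * Ch) *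
      nr a volume ((J j).indicator φ) ^ (2:ℝ) := by
    intro j
    refine Qn_local h h0 h1 hC hh (bmJ j) n (hφ.indicator (hJm j)) (fun t => ?_) (fun t t' htt => ?_)
    · by_cases ht : t ∈ J j
      · rw [Set.indicator_of_mem ht]; exact hft t
      · rw [Set.indicator_of_notMem ht]; simp
    · by_cases ht : t ∈ J j
      · by_cases ht' : t' ∈ J j
        · rw [tcut_slice_in F ht, tcut_slice_in F ht', Set.indicator_of_mem ht, Set.indicator_of_mem ht']
          refine hB t t' (abs_pos.mpr (sub_ne_zero.mpr htt)) ?_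
          have e : c (j + 1) = c j + ((2:ℝ) ^ n)⁻¹ := by simp only [c]; push_cast; ring
          have ht1 := ht.1; have ht2 := ht.2; have ht1' := ht'.1; have ht2' := ht'.2
          rw [abs_le]; constructor <;> linarith
        · rw [tcut_slice_out F ht']
          have : Bf ρ E L n (t' - t) (fun z => tcut (J j) F (t, z)) (fun _ => 0) = 0 := by
            unfold Bf; simp [fc_zero]
          rw [this]; simp
      · rw [tcut_slice_out F ht]
        have : Bf ρ E L n (t' - t) (fun _ => 0) (fun z => tcut (J j) F (t', z)) = 0 := by
          unfold Bf; simp [fc_zero]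
        rw [this]; simp
  -- decomposition of the coefficient
  have hdec : ∀ b, fh ρ E L F b = ∑ j ∈ Finset.range (2 ^ n), fh ρ E L (tcut (J j) F) b := by
    intro b
    have hi := (uu_bm h hF b)
    have e1 : ∀ j ∈ Finset.range (2 ^ n), fh ρ E L (tcut (J j) F) b = ∫ t in (c j)..(c (j + 1)), uu ρ E L F b t := by
      intro j hj
      unfold fh kap
      rw [uu_tcut, intervalIntegral.integral_of_le (hcm (Nat.le_succ j)), setIntegral_indicator (hJm j),
        Set.inter_eq_right.mpr (hJs j hj)]
    rw [Finset.sum_congr rfl e1, intervalIntegral.sum_integral_adjacent_intervals]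
    · have c0 : c 0 = 0 := by simp [c]
      have c1 : c (2 ^ n) = 1 := by simp [c]
      rw [c0, c1, intervalIntegral.integral_of_le zero_le_one]; rfl
    · intro j hj
      refine ⟨hi.integrable _, hi.integrable _⟩
  have hsq : Qn ρ E L n F ^ (1/2:ℝ) ≤ ∑ j ∈ Finset.range (2 ^ n), Qn ρ E L n (tcut (J j) F) ^ (1/2:ℝ) := by
    have e : ∀ G : ℝ × Z → ℂ, Qn ρ E L n G = ∑' b, ((ENNReal.ofReal (Real.exp (-π * L b / 4 ^ n))) ^ (1/2:ℝ) *
        ‖fh ρ E L G b‖ₑ) ^ (2:ℝ) := by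
      intro G; unfold Qn
      congr 1; ext1 b
      rw [ENNReal.mul_rpow_of_nonneg _ _ (by norm_num), ← ENNReal.rpow_mul]; norm_num
    simp_rw [e]
    refine le_trans ?_ (mink _ _)
    gcongr with b
    rw [← Finset.mul_sum]
    gcongr
    rw [hdec b]
    exact enorm_sum_le _ _
  have hsum : ∑ j ∈ Finset.range (2 ^ n), nr a volume ((J j).indicator φ) ≤ 2 ^ (n * (σ / 2)) * nr a kap φ := by
    have hconj : a.HolderConjugate (2 / σ) := by
      rw [Real.holderConjugate_iff]
      refine ⟨by rw [ha, lt_div_iff₀ h2]; linarith, ?_⟩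
      rw [ha]; field_simp; ring
    have hH := ENNReal.inner_le_Lp_mul_Lq (Finset.range (2 ^ n)) (fun j => nr a volume ((J j).indicator φ)) (fun _ => 1) hconj
    simp only [mul_one, nr_rpow ha0, ENNReal.one_rpow, Finset.sum_const, Finset.card_range, nsmul_eq_mul] at hH
    refine hH.trans ?_
    rw [mul_comm]
    gcongr
    · rw [show 1 / (2 / σ) = σ / 2 by field_simp, ENNReal.rpow_mul]; simp
    · unfold nr
      gcongr
      have e : ∀ j t, (J j).indicator φ t ^ a = (J j).indicator (fun t => φ t ^ a) t := by
        intro j t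
        by_cases ht : t ∈ J j
        · rw [Set.indicator_of_mem ht, Set.indicator_of_mem ht]
        · rw [Set.indicator_of_notMem ht, Set.indicator_of_notMem ht, ENNReal.zero_rpow_of_pos ha0]
      simp_rw [e, lintegral_indicator (hJm _)]
      rw [← lintegral_biUnion_finset]
      · unfold kap
        exact lintegral_mono_set (by simpa using hJs)
      · intro i _ j _ hij
        exact hcm.pairwise_disjoint_on_Ioc_succ hij
      · exact fun j _ => hJm j
  have hfin : Qn ρ E L n F ^ (1/2:ℝ) ≤ ENNReal.ofReal (C * Ch) ^ (1/2:ℝ) * (2 ^ (n * (σ / 2)) * nr a kap φ) := by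
    refine hsq.trans (le_trans ?_ (mul_le_mul_right hsum _))
    rw [Finset.mul_sum]
    gcongr with j hj
    calc _ ≤ (ENNReal.ofReal (C * Ch) * nr a volume ((J j).indicator φ) ^ (2:ℝ)) ^ (1/2:ℝ) := by
          gcongr; exact hloc j
      _ = _ := by
          rw [ENNReal.mul_rpow_of_nonneg _ _ (by norm_num), ← ENNReal.rpow_mul]; norm_num
  have := ENNReal.rpow_le_rpow hfin (by norm_num : (0:ℝ) ≤ 2)
  rw [ENNReal.mul_rpow_of_nonneg _ _ (by norm_num), ENNReal.mul_rpow_of_nonneg _ _ (by norm_num),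
    ← ENNReal.rpow_mul, ← ENNReal.rpow_mul, ← ENNReal.rpow_mul] at this
  norm_num at this
  refine this.trans (le_of_eq ?_)
  norm_num
  congr 3; ring

end



lemma psum {ε : ℝ} (hε : 0 < ε) : ∃ K : ℝ, 0 < K ∧ ∀ ψ : ℝ≥0∞,
    ∑' n : ℕ, (if (2:ℝ≥0∞) ^ (n:ℝ) ≤ ψ then (2:ℝ≥0∞) ^ (n * (2 * ε)) * ψ ^ (-2 * ε)
      else (2:ℝ≥0∞) ^ (n * (2 * -ε)) * ψ ^ (-2 * -ε)) ≤ ENNReal.ofReal K := by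
  obtain ⟨K, hK, HK⟩ := two_geom (δ := 2 * ε) (by positivity)
  refine ⟨K, hK, fun ψ => ?_⟩
  rcases eq_or_ne ψ 0 with rfl | h0
  · refine le_trans (le_of_eq ?_) zero_le
    rw [ENNReal.tsum_eq_zero]
    intro n
    have h1 : ¬ ((2:ℝ≥0∞) ^ (n:ℝ) ≤ 0) := by simp
    rw [if_neg h1, ENNReal.zero_rpow_of_pos (by linarith), mul_zero]
  rcases eq_or_ne ψ ⊤ with rfl | ht
  · refine le_trans (le_of_eq ?_) zero_le
    rw [ENNReal.tsum_eq_zero]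
    intro n
    rw [if_pos le_top, ENNReal.top_rpow_of_neg (by linarith), mul_zero]
  obtain ⟨c, hc⟩ : ∃ c : ℝ, ψ = 2 ^ c := by
    refine ⟨Real.logb 2 ψ.toReal, ?_⟩
    rw [two_rpow_ofReal, Real.rpow_logb (by norm_num) (by norm_num) (ENNReal.toReal_pos h0 ht),
      ENNReal.ofReal_toReal ht]
  calc _ ≤ ∑' n : ℕ, (fun i : ℤ => ENNReal.ofReal ((2:ℝ) ^ (-(2 * ε) * |(i:ℝ) + -c|))) (n : ℤ) := by
        refine ENNReal.tsum_le_tsum fun n => ?_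
        have hr : ∀ x y : ℝ, (2:ℝ≥0∞) ^ x * (2 ^ c) ^ y = ENNReal.ofReal ((2:ℝ) ^ (x + c * y)) := by
          intro x y
          rw [← ENNReal.rpow_mul, ← ENNReal.rpow_add _ _ (by norm_num) (by norm_num), two_rpow_ofReal]
        split_ifs with h
        · rw [hc, hr]
          refine ENNReal.ofReal_le_ofReal (Real.rpow_le_rpow_of_exponent_le (by norm_num) ?_)
          rw [hc, two_rpow_ofReal, two_rpow_ofReal, ENNReal.ofReal_le_ofReal_iff (by positivity),
            Real.rpow_le_rpow_left_iff (by norm_num)] at h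
          push_cast
          rw [abs_of_nonpos (by linarith)]
          nlinarith
        · rw [hc, hr]
          refine ENNReal.ofReal_le_ofReal (Real.rpow_le_rpow_of_exponent_le (by norm_num) ?_)
          rw [hc, two_rpow_ofReal, two_rpow_ofReal, ENNReal.ofReal_le_ofReal_iff (by positivity),
            Real.rpow_le_rpow_left_iff (by norm_num), not_le] at h
          push_cast
          rw [abs_of_nonneg (by linarith)]
          nlinarith
    _ ≤ ∑' i : ℤ, ENNReal.ofReal ((2:ℝ) ^ (-(2 * ε) * |(i:ℝ) + -c|)) :=
        ENNReal.tsum_comp_le_tsum_of_injective Nat.cast_injective _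
    _ ≤ _ := HK _

lemma weight_le {σ l : ℝ} (hσ : 0 < σ) (hl : 0 ≤ l) :
    ENNReal.ofReal ((1 + l) ^ (-(σ / 2))) ≤ ENNReal.ofReal (Real.exp (4 * π)) *
      ∑' n : ℕ, (2:ℝ≥0∞) ^ (-(n * σ)) * ENNReal.ofReal (Real.exp (-π * l / 4 ^ n)) := by
  obtain ⟨n, hn1, hn2⟩ := exists_nat_pow_near (by linarith : (1:ℝ) ≤ 1 + l) (by norm_num : (1:ℝ) < 4)
  have h1 := ENNReal.le_tsum (f := fun n : ℕ => (2:ℝ≥0∞) ^ (-(n * σ)) * ENNReal.ofReal (Real.exp (-π * l / 4 ^ n))) n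
  refine le_trans ?_ (mul_le_mul_right h1 _)
  rw [two_rpow_ofReal, ← ENNReal.ofReal_mul (by positivity), ← ENNReal.ofReal_mul (by positivity)]
  refine ENNReal.ofReal_le_ofReal ?_
  have e1 : (1 + l) ^ (-(σ / 2)) ≤ (2:ℝ) ^ (-(n * σ)) := by
    have : (2:ℝ) ^ (-(n * σ)) = ((4:ℝ) ^ n) ^ (-(σ / 2)) := by
      rw [show (4:ℝ) = 2 ^ (2:ℝ) by norm_num, ← Real.rpow_natCast, ← Real.rpow_mul (by norm_num),
        ← Real.rpow_mul (by norm_num)]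
      congr 1; ring
    rw [this]
    exact Real.rpow_le_rpow_of_nonpos (by positivity) hn1 (by linarith)
  have e2 : 1 ≤ Real.exp (4 * π) * Real.exp (-π * l / 4 ^ n) := by
    rw [← Real.exp_add]
    refine Real.one_le_exp ?_
    have : l / 4 ^ n ≤ 4 := by
      rw [div_le_iff₀ (by positivity)]
      rw [pow_succ] at hn2; linarith
    have hp := Real.pi_pos
    have : -π * l / 4 ^ n = -π * (l / 4 ^ n) := by ring
    rw [this]; nlinarith
  calc _ ≤ (2:ℝ) ^ (-(n * σ)) := e1
    _ ≤ (2:ℝ) ^ (-(n * σ)) * (Real.exp (4 * π) * Real.exp (-π * l / 4 ^ n)) :=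
        le_mul_of_one_le_right (by positivity) e2
    _ = _ := by ring

lemma Qn_add {Z A : Type} [MeasurableSpace Z] {ρ : Measure Z} [IsProbabilityMeasure ρ]
    {E : A → Z → ℂ} {L : A → ℝ} {D : ℝ} (h : DSys ρ E L D) {F G : ℝ × Z → ℂ} (hF : BM F) (hG : BM G) (n : ℕ) :
    Qn ρ E L n (fun z => F z + G z) ≤ 2 * (Qn ρ E L n F + Qn ρ E L n G) := by
  unfold Qn
  rw [← ENNReal.tsum_add, ← ENNReal.tsum_mul_left]
  refine ENNReal.tsum_le_tsum fun a => ?_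
  rw [fh_add h hF hG, ← mul_add, mul_left_comm]
  gcongr
  refine (ENNReal.rpow_le_rpow (enorm_add_le _ _) (by norm_num)).trans ?_
  have := ENNReal.rpow_add_le_mul_rpow_add_rpow ‖fh ρ E L F a‖ₑ ‖fh ρ E L G a‖ₑ (by norm_num : (1:ℝ) ≤ 2)
  norm_num at this ⊢
  exact this

section
variable {X A Y B : Type} [MeasurableSpace X] [MeasurableSpace Y] [Countable A] [Countable B]
    {μ : Measure X} {ν : Measure Y} [IsProbabilityMeasure μ] [IsProbabilityMeasure ν]
    {e : A → X → ℂ} {l : A → ℝ} {m : ℝ} {e' : B → Y → ℂ} {l' : B → ℝ} {k : ℝ}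

/-- inner norm -/
def gg (p : ℝ) (ν : Measure Y) (F : ℝ × (X × Y) → ℂ) (q : ℝ × X) : ℝ≥0∞ := nr p ν (fun y => ‖F (q.1, (q.2, y))‖ₑ)

lemma gg_meas (p : ℝ) {F : ℝ × (X × Y) → ℂ} (hF : Measurable F) : Measurable (gg p ν F) := by
  have : Measurable fun w : (ℝ × X) × Y => ‖F (w.1.1, (w.1.2, w.2))‖ₑ := (hF.comp (by fun_prop)).enorm
  exact nr_measurable p ν this

lemma gg_le {p M : ℝ} (hp : 0 < p) {F : ℝ × (X × Y) → ℂ} (hM : ∀ z, ‖F z‖ ≤ M) (q : ℝ × X) :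
    gg p ν F q ≤ ENNReal.ofReal M := by
  unfold gg
  rw [← nr_const hp ν (ENNReal.ofReal M)]
  refine nr_mono hp _ fun y => ?_
  rw [← ofReal_norm]; exact ENNReal.ofReal_le_ofReal (hM _)

/-- abbreviation for product system -/
def pe (e : A → X → ℂ) (e' : B → Y → ℂ) : A × B → X × Y → ℂ := fun a z => e a.1 z.1 * e' a.2 z.2

def pl (l : A → ℝ) (l' : B → ℝ) : A × B → ℝ := fun a => l a.1 + l' a.2

lemma scale (h : DSys μ e l m) (h' : DSys ν e' l' k) {α β σ : ℝ} (hα0 : 0 < α) (hα1 : α < 1) (hβ0 : 0 ≤ β)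
    (hβ1 : β ≤ α) (hσ : σ = (m * α + k * β) / 2) (h0 : 0 < σ) (h1 : σ < 1) : ∃ C : ℝ, 0 < C ∧
    ∀ (n : ℕ) (F : ℝ × (X × Y) → ℂ), BM F → Qn (μ.prod ν) (pe e e') (pl l l') n F ≤
      ENNReal.ofReal C * (2 ^ (n * σ) *
        nr2 (2 / (2 - σ)) (2 / (1 + α)) kap μ (gg (2 / (1 + β)) ν F) ^ (2:ℝ)) := by
  obtain ⟨C, hC, H⟩ := DI h h' hα0 hα1 hβ0 hβ1
  obtain ⟨Ch, hCh, HL⟩ := LS (h.prod h') h0 h1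
  refine ⟨C * Ch, by positivity, fun n F hF => ?_⟩
  have gm := gg_meas (ν := ν) (2 / (1 + β)) hF.1
  obtain ⟨hm, M, hM⟩ := id hF
  have p1 : 0 < 2 / (1 + α) := by positivity
  have p2 : 0 < 2 / (1 + β) := by positivity
  refine HL n C F (fun t => nr (2 / (1 + α)) μ (fun x => gg (2 / (1 + β)) ν F (t, x))) hC hF
    (nr_measurable _ _ gm) (fun t => ?_) (fun t t' ht ht' => ?_)
  · refine ne_top_of_le_ne_top (ENNReal.ofReal_ne_top (r := M)) ?_
    rw [← nr_const p1 μ (ENNReal.ofReal M)]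
    exact nr_mono p1 _ fun x => gg_le p2 hM _
  · rw [hσ]
    exact H n (t' - t) ht ht' (hF.slice t) (hF.slice t')

def xcut (S : Set (ℝ × X)) (F : ℝ × (X × Y) → ℂ) : ℝ × (X × Y) → ℂ :=
  ((fun w : ℝ × (X × Y) => (w.1, w.2.1)) ⁻¹' S).indicator F

lemma gg_xcut {p : ℝ} (hp : 0 < p) (S : Set (ℝ × X)) (F : ℝ × (X × Y) → ℂ) :
    gg p ν (xcut S F) = S.indicator (gg p ν F) := by
  ext1 q
  by_cases hq : q ∈ S
  · rw [Set.indicator_of_mem hq]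
    unfold gg
    congr 1; ext1 y; congr 1
    exact Set.indicator_of_mem (by exact hq) _
  · rw [Set.indicator_of_notMem hq]
    unfold gg
    have : (fun y => ‖xcut S F (q.1, (q.2, y))‖ₑ) = fun _ => 0 := by
      ext1 y
      have : xcut S F (q.1, (q.2, y)) = 0 := Set.indicator_of_notMem (by exact hq) _
      rw [this]; simp
    rw [this, nr_const hp]

lemma nsum (h : DSys μ e l m) (h' : DSys ν e' l' k) (hm0 : 0 < m) (hk0 : 0 ≤ k) {α β σ : ℝ} (hα1 : α < 1)
    (hβ0 : 0 ≤ β) (hβ1 : β < α) (hσ : σ = (m * α + k * β) / 2) (h1 : σ < 1) : ∃ C : ℝ, 0 < C ∧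
    ∀ (F : ℝ × (X × Y) → ℂ), BM F → ∑' n : ℕ, (2:ℝ≥0∞) ^ (-(n * σ)) * Qn (μ.prod ν) (pe e e') (pl l l') n F ≤
      ENNReal.ofReal C * nr2 (2 / (2 - σ)) (2 / (1 + α)) kap μ (gg (2 / (1 + β)) ν F) ^ (2:ℝ) := by
  have hα0 : 0 < α := by linarith
  have hσ0 : 0 < σ := by
    rw [hσ]; have := mul_pos hm0 hα0; have := mul_nonneg hk0 hβ0; linarith
  -- choice of ε
  obtain ⟨ε, hε, E1, E2, E3, E4⟩ : ∃ ε : ℝ, 0 < ε ∧ 4 * ε / m < α - β ∧ 4 * ε / m < 1 - α ∧ 4 * ε < σ ∧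
      2 * ε < 1 - σ := by
    have q1 : 0 < min (min (m * (α - β) / 4) (m * (1 - α) / 4)) (min (σ / 4) ((1 - σ) / 2)) := by
      refine lt_min (lt_min ?_ ?_) (lt_min ?_ ?_)
      · have : 0 < α - β := by linarith
        positivity
      · have : 0 < 1 - α := by linarith
        positivity
      · positivity
      · linarith
    obtain ⟨ε, he0, he⟩ := exists_between q1
    rw [lt_min_iff, lt_min_iff, lt_min_iff] at he
    refine ⟨ε, he0, ?_, ?_, by linarith [he.2.1], by linarith [he.2.2]⟩
    · rw [div_lt_iff₀ hm0]; linarith [he.1.1]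
    · rw [div_lt_iff₀ hm0]; linarith [he.1.2]
  have h2 : 0 < 2 - σ := by linarith
  set a := 2 / (2 - σ) with ha
  set s := 2 / (1 + α) with hs
  set p := 2 / (1 + β) with hp
  have ha0 : 0 < a := by positivity
  have ha1 : 1 ≤ a := by rw [ha, le_div_iff₀ h2]; linarith
  have hs0 : 0 < s := by positivity
  have hs1 : 1 ≤ s := by rw [hs, le_div_iff₀ (by linarith)]; linarith
  have hp0 : 0 < p := by positivity
  have core : ∀ η : ℝ, |η| = ε → ∃ C : ℝ, 0 < C ∧ ∀ (n : ℕ) (F : ℝ × (X × Y) → ℂ), BM F → ∀ S H,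
      Maj kap μ a s S H (gg p ν F) → ∀ T : Set (ℝ × X), MeasurableSet T →
      (2:ℝ≥0∞) ^ (-(n * σ)) * Qn (μ.prod ν) (pe e e') (pl l l') n (xcut T F) ≤
      ENNReal.ofReal C * (S ^ (2:ℝ) * ∫⁻ t, ∫⁻ x, T.indicator (fun z => (2:ℝ≥0∞) ^ (n * (2 * η)) *
        (psi a s (-1) (2 / m) S H (gg p ν F) z ^ (-2 * η)) * den a s S H (gg p ν F) z) (t, x) ∂μ ∂kap) := by
    intro η hη
    have hη1 : -ε ≤ η := by rw [← hη]; exact neg_abs_le η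
    have hη2 : η ≤ ε := by rw [← hη]; exact le_abs_self η
    have e1 : 4 * η / m ≤ 4 * ε / m := by gcongr
    have e2 : -(4 * ε / m) ≤ 4 * η / m := by rw [← neg_div]; gcongr; linarith
    obtain ⟨C, hC, H⟩ := scale h h' (α := α + 4 * η / m) (β := β) (σ := σ + 2 * η) (by linarith) (by linarith)
      hβ0 (by linarith) (by rw [hσ]; field_simp; ring) (by linarith) (by linarith)
    refine ⟨C, hC, fun n F hF S HH hM T hT => ?_⟩
    have hmm : Measurable (fun w : ℝ × (X × Y) => (w.1, w.2.1)) := by fun_prop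
    have k1 := H n (xcut T F) (hF.indicator (hmm hT))
    rw [gg_xcut (by positivity)] at k1
    have d1 : 0 < 2 - (σ + 2 * η) := by linarith
    have d2 : 0 < 1 + (α + 4 * η / m) := by linarith
    have k2 := hM.jens ha0 hs0 (s' := 2 / (2 - (σ + 2 * η))) (p' := 2 / (1 + (α + 4 * η / m))) (d1 := -1) (d2 := 2 / m)
      (η := η) (by positivity) (by rw [div_le_iff₀ d1]; linarith) (by positivity)
      (by rw [div_le_iff₀ d2]; linarith) (by rw [ha, one_div_div, one_div_div]; ring)
      (by rw [hs, one_div_div, one_div_div]; ring) hT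
    have two0 : ∀ x : ℝ, (2:ℝ≥0∞) ^ x ≠ ⊤ := fun x => by rw [two_rpow_ofReal]; simp
    have k3 : ∀ t x, T.indicator (fun z => (2:ℝ≥0∞) ^ (n * (2 * η)) *
        (psi a s (-1) (2 / m) S HH (gg p ν F) z ^ (-2 * η)) * den a s S HH (gg p ν F) z) (t, x) =
        (2:ℝ≥0∞) ^ (n * (2 * η)) * T.indicator (fun z =>
        (psi a s (-1) (2 / m) S HH (gg p ν F) z ^ (-2 * η)) * den a s S HH (gg p ν F) z) (t, x) := by
      intro t x
      by_cases hz : (t, x) ∈ T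
      · rw [Set.indicator_of_mem hz, Set.indicator_of_mem hz, mul_assoc]
      · rw [Set.indicator_of_notMem hz, Set.indicator_of_notMem hz, mul_zero]
    simp_rw [k3, lintegral_const_mul' _ _ (two0 _)]
    calc _ ≤ (2:ℝ≥0∞) ^ (-(n * σ)) * (ENNReal.ofReal C * (2 ^ (n * (σ + 2 * η)) * (S ^ (2:ℝ) *
          ∫⁻ t, ∫⁻ x, T.indicator (fun z => (psi a s (-1) (2 / m) S HH (gg p ν F) z ^ (-2 * η)) *
            den a s S HH (gg p ν F) z) (t, x) ∂μ ∂kap))) := by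
            gcongr
            refine k1.trans ?_
            gcongr
      _ = _ := by
            have : (2:ℝ≥0∞) ^ (n * (2 * η)) = 2 ^ (-(n * σ)) * 2 ^ (n * (σ + 2 * η)) := by
              rw [← ENNReal.rpow_add _ _ (by norm_num) (by norm_num)]; congr 1; ring
            rw [this]; ring
  obtain ⟨C1, hC1, H1⟩ := core ε (abs_of_pos hε)
  obtain ⟨C2, hC2, H2⟩ := core (-ε) (by rw [abs_neg, abs_of_pos hε])
  obtain ⟨K, hK, HK⟩ := psum hε
  refine ⟨2 * (C1 + C2) * K, by positivity, fun F hF => ?_⟩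
  obtain ⟨hFm, M, hM⟩ := id hF
  have gm := gg_meas (ν := ν) p hF.1
  have gM := gg_le (ν := ν) hp0 hM
  have fin : nr2 a s kap μ (gg p ν F) ≠ ⊤ := by
    refine ne_top_of_le_ne_top (ENNReal.ofReal_ne_top (r := M)) ?_
    rw [← nr2_const ha0 hs0 kap μ (ENNReal.ofReal M)]
    exact nr2_mono ha0 hs0 _ _ gM
  obtain ⟨V, hV0, hV⟩ : ∃ V : ℝ, 0 ≤ V ∧ nr2 a s kap μ (gg p ν F) = ENNReal.ofReal V :=
    ⟨_, ENNReal.toReal_nonneg, (ENNReal.ofReal_toReal fin).symm⟩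
  have main : ∀ δ : ℝ, 0 < δ → ∑' n : ℕ, (2:ℝ≥0∞) ^ (-(n * σ)) * Qn (μ.prod ν) (pe e e') (pl l l') n F ≤
      ENNReal.ofReal (2 * (C1 + C2) * K) * (ENNReal.ofReal V + ENNReal.ofReal δ) *
        (ENNReal.ofReal V + ENNReal.ofReal δ) + ENNReal.ofReal 0 * ENNReal.ofReal δ := by
    intro δ hδ
    obtain ⟨S, H, hMaj, hSle, -, -, -⟩ := exists_maj (μ := kap) (ν := μ) (k := gg p ν F) ha1 hs1 gm
      (M := ENNReal.ofReal M) ENNReal.ofReal_ne_top gM (δ := ENNReal.ofReal δ) (by simpa using hδ) ENNReal.ofReal_ne_top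
    rw [hV] at hSle
    set ψ := psi a s (-1) (2 / m) S H (gg p ν F) with hψ
    set dn := den a s S H (gg p ν F) with hdn
    have hψm : Measurable ψ := hMaj.psi_meas _ _
    have hdm : Measurable dn := hMaj.den_meas
    let w : ℕ → ℝ≥0∞ → ℝ≥0∞ := fun n u => if (2:ℝ≥0∞) ^ (n:ℝ) ≤ u then (2:ℝ≥0∞) ^ (n * (2 * ε)) * u ^ (-2 * ε)
      else (2:ℝ≥0∞) ^ (n * (2 * -ε)) * u ^ (-2 * -ε)
    have hwm : ∀ n, Measurable (w n) := by
      intro n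
      refine Measurable.ite (measurableSet_le measurable_const measurable_id) (by fun_prop) (by fun_prop)
    have hwdm : ∀ n, Measurable fun z => w n (ψ z) * dn z := fun n => ((hwm n).comp hψm).mul hdm
    have step : ∀ n : ℕ, (2:ℝ≥0∞) ^ (-(n * σ)) * Qn (μ.prod ν) (pe e e') (pl l l') n F ≤
        2 * ENNReal.ofReal (C1 + C2) * S ^ (2:ℝ) * ∫⁻ t, ∫⁻ x, w n (ψ (t, x)) * dn (t, x) ∂μ ∂kap := by
      intro n
      set T := {z | (2:ℝ≥0∞) ^ (n:ℝ) ≤ ψ z} with hT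
      have hTm : MeasurableSet T := measurableSet_le measurable_const hψm
      have hmm : Measurable (fun w : ℝ × (X × Y) => (w.1, w.2.1)) := by fun_prop
      have hsp : F = fun z => xcut T F z + xcut Tᶜ F z := by
        ext1 z
        exact (Set.indicator_self_add_compl_apply _ F z).symm
      have q0 := Qn_add (h.prod h') (hF.indicator (hmm hTm)) (hF.indicator (hmm hTm.compl)) n
      have q1 := H1 n F hF S H hMaj T hTm
      have q2 := H2 n F hF S H hMaj Tᶜ hTm.compl
      have q0' : Qn (μ.prod ν) (pe e e') (pl l l') n F ≤ 2 * (Qn (μ.prod ν) (pe e e') (pl l l') n (xcut T F) +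
          Qn (μ.prod ν) (pe e e') (pl l l') n (xcut Tᶜ F)) := by
        conv_lhs => rw [hsp]
        exact q0
      have c1 : ENNReal.ofReal C1 ≤ ENNReal.ofReal (C1 + C2) := ENNReal.ofReal_le_ofReal (by linarith)
      have c2 : ENNReal.ofReal C2 ≤ ENNReal.ofReal (C1 + C2) := ENNReal.ofReal_le_ofReal (by linarith)
      have i1 : ∀ t x, T.indicator (fun z => (2:ℝ≥0∞) ^ (n * (2 * ε)) * (ψ z ^ (-2 * ε)) * dn z) (t, x) +
          Tᶜ.indicator (fun z => (2:ℝ≥0∞) ^ (n * (2 * -ε)) * (ψ z ^ (-2 * -ε)) * dn z) (t, x) =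
          w n (ψ (t, x)) * dn (t, x) := by
        intro t x
        by_cases hz : (t, x) ∈ T
        · rw [Set.indicator_of_mem hz, Set.indicator_of_notMem (by simpa using hz), add_zero]
          simp only [w]; rw [if_pos (by exact hz)]
        · rw [Set.indicator_of_notMem hz, Set.indicator_of_mem (by simpa using hz), zero_add]
          simp only [w]; rw [if_neg (by exact hz)]
      have m1 : Measurable (T.indicator (fun z => (2:ℝ≥0∞) ^ (n * (2 * ε)) * (ψ z ^ (-2 * ε)) * dn z)) :=
        Measurable.indicator (by fun_prop) hTm
      have i2 : ∫⁻ t, ∫⁻ x, w n (ψ (t, x)) * dn (t, x) ∂μ ∂kap =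
          (∫⁻ t, ∫⁻ x, T.indicator (fun z => (2:ℝ≥0∞) ^ (n * (2 * ε)) * (ψ z ^ (-2 * ε)) * dn z) (t, x) ∂μ ∂kap) +
          ∫⁻ t, ∫⁻ x, Tᶜ.indicator (fun z => (2:ℝ≥0∞) ^ (n * (2 * -ε)) * (ψ z ^ (-2 * -ε)) * dn z) (t, x) ∂μ ∂kap := by
        have mm : Measurable fun t => ∫⁻ x, T.indicator (fun z => (2:ℝ≥0∞) ^ (n * (2 * ε)) * (ψ z ^ (-2 * ε)) * dn z) (t, x) ∂μ :=
          m1.lintegral_prod_right'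
        rw [← lintegral_add_left mm]
        congr 1; ext1 t
        have m1t : Measurable fun x => T.indicator (fun z => (2:ℝ≥0∞) ^ (n * (2 * ε)) * (ψ z ^ (-2 * ε)) * dn z) (t, x) :=
          m1.comp measurable_prodMk_left
        rw [← lintegral_add_left m1t]
        congr 1; ext1 x
        exact (i1 t x).symm
      rw [i2]
      calc _ ≤ (2:ℝ≥0∞) ^ (-(n * σ)) * (2 * (Qn (μ.prod ν) (pe e e') (pl l l') n (xcut T F) +
          Qn (μ.prod ν) (pe e e') (pl l l') n (xcut Tᶜ F))) := by gcongr
        _ = 2 * ((2:ℝ≥0∞) ^ (-(n * σ)) * Qn (μ.prod ν) (pe e e') (pl l l') n (xcut T F) +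
          (2:ℝ≥0∞) ^ (-(n * σ)) * Qn (μ.prod ν) (pe e e') (pl l l') n (xcut Tᶜ F)) := by ring
        _ ≤ 2 * (ENNReal.ofReal (C1 + C2) * (S ^ (2:ℝ) * _) + ENNReal.ofReal (C1 + C2) * (S ^ (2:ℝ) * _)) := by
            gcongr 2 * (?_ + ?_)
            · exact q1.trans (mul_le_mul_left c1 _)
            · exact q2.trans (mul_le_mul_left c2 _)
        _ = _ := by ring
    have sumw : ∑' n : ℕ, ∫⁻ t, ∫⁻ x, w n (ψ (t, x)) * dn (t, x) ∂μ ∂kap ≤ ENNReal.ofReal K := by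
      rw [← lintegral_tsum (fun n => ((hwdm n).lintegral_prod_right').aemeasurable)]
      have e3 : ∀ t, ∑' n : ℕ, ∫⁻ x, w n (ψ (t, x)) * dn (t, x) ∂μ ≤ ENNReal.ofReal K * ∫⁻ x, dn (t, x) ∂μ := by
        intro t
        have hh : ∀ n, AEMeasurable (fun x => w n (ψ (t, x)) * dn (t, x)) μ :=
          fun n => ((hwdm n).comp measurable_prodMk_left).aemeasurable
        rw [← lintegral_tsum hh,
          ← lintegral_const_mul' _ _ ENNReal.ofReal_ne_top]
        refine lintegral_mono fun x => ?_
        change ∑' n : ℕ, w n (ψ (t, x)) * dn (t, x) ≤ _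
        rw [ENNReal.tsum_mul_right]
        gcongr
        exact HK _
      refine (lintegral_mono e3).trans ?_
      rw [lintegral_const_mul' _ _ ENNReal.ofReal_ne_top]
      exact mul_le_of_le_one_right' (hMaj.den_le ha0 hs0)
    calc _ ≤ ∑' n : ℕ, 2 * ENNReal.ofReal (C1 + C2) * S ^ (2:ℝ) * ∫⁻ t, ∫⁻ x, w n (ψ (t, x)) * dn (t, x) ∂μ ∂kap :=
          ENNReal.tsum_le_tsum step
      _ = 2 * ENNReal.ofReal (C1 + C2) * S ^ (2:ℝ) * ∑' n : ℕ, ∫⁻ t, ∫⁻ x, w n (ψ (t, x)) * dn (t, x) ∂μ ∂kap :=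
          ENNReal.tsum_mul_left
      _ ≤ 2 * ENNReal.ofReal (C1 + C2) * (ENNReal.ofReal V + ENNReal.ofReal δ) ^ (2:ℝ) * ENNReal.ofReal K := by
          gcongr
      _ = _ := by
          have e8 : ENNReal.ofReal (2 * (C1 + C2) * K) = 2 * ENNReal.ofReal (C1 + C2) * ENNReal.ofReal K := by
            rw [ENNReal.ofReal_mul (by positivity : (0:ℝ) ≤ 2 * (C1 + C2)), ENNReal.ofReal_mul (by norm_num : (0:ℝ) ≤ 2)]
            norm_num
          rw [e8, ENNReal.rpow_two]; simp; ring
  have := lim_delta (E := 0) hV0 hV0 (by positivity) le_rfl main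
  refine this.trans (le_of_eq ?_)
  rw [hV, ENNReal.rpow_two]; ring

/-- dual (adjoint) estimate -/
lemma dualS (h : DSys μ e l m) (h' : DSys ν e' l' k) (hm0 : 0 < m) (hk0 : 0 ≤ k) {α β σ : ℝ} (hα1 : α < 1)
    (hβ0 : 0 ≤ β) (hβ1 : β < α) (hσ : σ = (m * α + k * β) / 2) (h1 : σ < 1) : ∃ C : ℝ, 0 < C ∧
    ∀ (F : ℝ × (X × Y) → ℂ), BM F → ∑' a, ENNReal.ofReal ((1 + pl l l' a) ^ (-(σ / 2))) *
        ‖fh (μ.prod ν) (pe e e') (pl l l') F a‖ₑ ^ (2:ℝ) ≤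
      ENNReal.ofReal C * nr2 (2 / (2 - σ)) (2 / (1 + α)) kap μ (gg (2 / (1 + β)) ν F) ^ (2:ℝ) := by
  obtain ⟨C, hC, H⟩ := nsum h h' hm0 hk0 hα1 hβ0 hβ1 hσ h1
  have hα0 : 0 < α := by linarith
  have hσ0 : 0 < σ := by
    rw [hσ]; have := mul_pos hm0 hα0; have := mul_nonneg hk0 hβ0; linarith
  refine ⟨Real.exp (4 * π) * C, by positivity, fun F hF => ?_⟩
  rw [ENNReal.ofReal_mul (by positivity), mul_assoc]
  refine le_trans ?_ (mul_le_mul_right (H F hF) _)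
  have e1 : ∑' n : ℕ, (2:ℝ≥0∞) ^ (-(n * σ)) * Qn (μ.prod ν) (pe e e') (pl l l') n F =
      ∑' a, (∑' n : ℕ, (2:ℝ≥0∞) ^ (-(n * σ)) * ENNReal.ofReal (Real.exp (-π * pl l l' a / 4 ^ n))) *
        ‖fh (μ.prod ν) (pe e e') (pl l l') F a‖ₑ ^ (2:ℝ) := by
    unfold Qn
    simp_rw [← ENNReal.tsum_mul_left, ← ENNReal.tsum_mul_right]
    rw [ENNReal.tsum_comm]
    simp_rw [mul_assoc]
  rw [e1, ← ENNReal.tsum_mul_left]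
  refine ENNReal.tsum_le_tsum fun a => ?_
  rw [← mul_assoc]
  gcongr
  exact weight_le hσ0 ((h.prod h').l_nonneg a)

end



section
variable {X Y A B : Type} [MeasurableSpace X] [MeasurableSpace Y] [Countable A] [Countable B]
    {μ : Measure X} {ν : Measure Y}
    [IsProbabilityMeasure μ] [IsProbabilityMeasure ν]

lemma dualstep {Z : Type} [MeasurableSpace Z] (ρ : Measure Z) {p p' : ℝ} (hp : p.HolderConjugate p') (g : Z → ℝ≥0∞) :
    nr p' ρ (fun z => g z ^ (p - 1)) = nr p ρ g ^ (p - 1) := by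
  unfold nr
  simp_rw [← ENNReal.rpow_mul]
  have h1 : (p - 1) * p' = p := by
    have := hp.mul_eq_add; linarith
  have h2 : 1 / p * (p - 1) = 1 / p' := by
    have := hp.inv_add_inv_eq_one
    have hp0 := hp.pos.ne'
    rw [one_div, one_div, mul_sub, inv_mul_cancel₀ hp0]; linarith
  rw [h1, h2]

lemma enorm_integral_nonneg {Z : Type} [MeasurableSpace Z] (ρ : Measure Z) [IsFiniteMeasure ρ] {g : Z → ℝ}
    (hm : Measurable g) (h0 : ∀ z, 0 ≤ g z) {M : ℝ} (hM : ∀ z, g z ≤ M) :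
    ‖∫ z, (g z : ℂ) ∂ρ‖ₑ = ∫⁻ z, ENNReal.ofReal (g z) ∂ρ := by
  have hi : Integrable g ρ := Integrable.of_bound hm.aestronglyMeasurable M
    (Filter.Eventually.of_forall fun z => by rw [Real.norm_of_nonneg (h0 z)]; exact hM z)
  rw [← ofReal_integral_eq_lintegral_ofReal hi (Filter.Eventually.of_forall h0), integral_complex_ofReal,
    ← ofReal_norm]
  congr 1
  rw [Complex.norm_real, Real.norm_of_nonneg (integral_nonneg h0)]

set_option maxHeartbeats 1000000 in
lemma dualize {q q' r r' s s' : ℝ} (hq : q.HolderConjugate q') (hr : r.HolderConjugate r')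
    (hs : s.HolderConjugate s') (hs2 : 2 ≤ s) (hsr : s ≤ r) {u : ℝ × (X × Y) → ℂ} (hu : BM u) (K : ℝ≥0∞)
    (H : ∀ F : ℝ × (X × Y) → ℂ, BM F → ‖∫ w, F w * conj (u w) ∂(kap.prod (μ.prod ν))‖ₑ ≤
      K * nr2 q' r' kap μ (gg s' ν F)) :
    nr2 q r kap μ (gg s ν u) ≤ K := by
  obtain ⟨hum, M, hM⟩ := id hu
  have hM' : ∀ z, ‖u z‖ ≤ |M| + 1 := fun z => (hM z).trans (by linarith [le_abs_self M])
  clear hM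
  generalize hN : |M| + 1 = N at hM'
  have hN0 : 0 < N := by rw [← hN]; positivity
  have vm : Measurable (gg s ν u) := gg_meas s hum
  have vN := gg_le (ν := ν) hs.pos hM'
  set v := gg s ν u with hv
  set V : ℝ → ℝ≥0∞ := fun t => nr r μ (fun x => v (t, x)) with hV
  have Vm : Measurable V := nr_measurable r μ vm
  have VN : ∀ t, V t ≤ ENNReal.ofReal N := fun t => by
    rw [← nr_const hr.pos μ (ENNReal.ofReal N)]
    exact nr_mono hr.pos _ fun x => vN _
  change nr q kap V ≤ K
  have hq0 := hq.pos
  suffices hh : ∀ δ : ℝ≥0∞, 0 < δ → δ < ⊤ → ∫⁻ t, V t ^ q ∂kap ≤ K ^ q + δ ^ q by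
    unfold nr
    rw [one_div, ENNReal.rpow_inv_le_iff hq0]
    refine ENNReal.le_of_forall_pos_le_add fun ε hε _ => ?_
    have := hh ((ε:ℝ≥0∞) ^ (1 / q)) (by apply ENNReal.rpow_pos <;> simp [hε])
      (ENNReal.rpow_lt_top_of_nonneg (by positivity) (by simp))
    rwa [← ENNReal.rpow_mul, one_div_mul_cancel hq0.ne', ENNReal.rpow_one] at this
  intro δ hδ0 hδt
  set w : ℝ → ℝ≥0∞ := fun t => if δ ≤ V t then V t ^ (q - r) else 0 with hw
  have wm : Measurable w := Measurable.ite (measurableSet_le measurable_const Vm) (Vm.pow_const _) measurable_const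
  have wb : ∀ t, w t ≤ ENNReal.ofReal N ^ (q - r) + δ ^ (q - r) := by
    intro t
    simp only [hw]
    split_ifs with h
    · rcases le_total 0 (q - r) with h0 | h0
      · exact (ENNReal.rpow_le_rpow (VN t) h0).trans le_self_add
      · refine le_trans ?_ le_add_self
        rw [← neg_sub r q, ENNReal.rpow_neg, ENNReal.rpow_neg, ENNReal.inv_le_inv]
        exact ENNReal.rpow_le_rpow h (by linarith)
    · simp
  have wbt : ENNReal.ofReal N ^ (q - r) + δ ^ (q - r) ≠ ⊤ := by
    rw [ENNReal.add_ne_top]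
    exact ⟨ENNReal.rpow_ne_top_of_ne_zero (by simpa using hN0) ENNReal.ofReal_ne_top,
      ENNReal.rpow_ne_top_of_ne_zero hδ0.ne' hδt.ne⟩
  have wt : ∀ t, w t ≠ ⊤ := fun t => ne_top_of_le_ne_top wbt (wb t)
  set W : ℝ × X → ℝ≥0∞ := fun z => w z.1 * v z ^ (r - s) with hW
  have Wm : Measurable W := (wm.comp measurable_fst).mul (vm.pow_const _)
  have vt : ∀ z, v z ≠ ⊤ := fun z => ne_top_of_le_ne_top ENNReal.ofReal_ne_top (vN z)
  set G : ℝ × (X × Y) → ℝ≥0∞ := fun z => ‖u z‖ₑ ^ (s - 2) * W (z.1, z.2.1) with hG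
  have Gm : Measurable G := (hum.enorm.pow_const _).mul (Wm.comp (by fun_prop))
  have GB : ∀ z, G z ≤ ENNReal.ofReal N ^ (s - 2) * ((ENNReal.ofReal N ^ (q - r) + δ ^ (q - r)) * ENNReal.ofReal N ^ (r - s)) := by
    intro z
    have h1 : ‖u z‖ₑ ≤ ENNReal.ofReal N := by
      rw [← ofReal_norm]; exact ENNReal.ofReal_le_ofReal (hM' z)
    refine mul_le_mul' (ENNReal.rpow_le_rpow h1 (by linarith)) ?_
    exact mul_le_mul' (wb _) (ENNReal.rpow_le_rpow (vN _) (by linarith))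
  have GBt : ENNReal.ofReal N ^ (s - 2) * ((ENNReal.ofReal N ^ (q - r) + δ ^ (q - r)) * ENNReal.ofReal N ^ (r - s)) ≠ ⊤ :=
    ENNReal.mul_ne_top (ENNReal.rpow_ne_top_of_nonneg (by linarith) ENNReal.ofReal_ne_top)
      (ENNReal.mul_ne_top wbt (ENNReal.rpow_ne_top_of_nonneg (by linarith) ENNReal.ofReal_ne_top))
  generalize ENNReal.ofReal N ^ (s - 2) * ((ENNReal.ofReal N ^ (q - r) + δ ^ (q - r)) * ENNReal.ofReal N ^ (r - s)) = GB0 at GB GBt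
  have Gt : ∀ z, G z ≠ ⊤ := fun z => ne_top_of_le_ne_top GBt (GB z)
  have GR : ∀ z, (G z).toReal ≤ GB0.toReal := fun z => ENNReal.toReal_mono GBt (GB z)
  set F : ℝ × (X × Y) → ℂ := fun z => ((G z).toReal : ℂ) * u z with hF
  have FBM : BM F := by
    refine BM.mul ⟨Complex.measurable_ofReal.comp Gm.ennreal_toReal, GB0.toReal, fun z => ?_⟩ hu
    rw [Complex.norm_real, Real.norm_of_nonneg ENNReal.toReal_nonneg]
    exact GR z
  have Fn : ∀ z, ‖F z‖ₑ = W (z.1, z.2.1) * ‖u z‖ₑ ^ (s - 1) := by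
    intro z
    have h1 : ‖((G z).toReal : ℂ)‖ₑ = G z := by
      rw [← ofReal_norm, Complex.norm_real, Real.norm_of_nonneg ENNReal.toReal_nonneg, ENNReal.ofReal_toReal (Gt z)]
    have h2 : ‖u z‖ₑ ^ (s - 1) = ‖u z‖ₑ ^ (s - 2) * ‖u z‖ₑ := by
      conv_rhs => rw [← ENNReal.rpow_one ‖u z‖ₑ, ← ENNReal.rpow_mul, one_mul,
        ← ENNReal.rpow_add_of_nonneg _ _ (by linarith) zero_le_one]
      congr 1; ring
    simp only [hF]
    rw [enorm_mul, h1, h2]; simp only [hG]; ring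
  have Wt : ∀ z, W z ≠ ⊤ := fun z => ENNReal.mul_ne_top (wt _) (ENNReal.rpow_ne_top_of_nonneg (by linarith) (vt z))
  -- dual norm
  set J := ∫⁻ t, w t * V t ^ r ∂kap with hJ
  have Jt : J ≠ ⊤ := by
    have : J ≤ ∫⁻ t, (ENNReal.ofReal N ^ (q - r) + δ ^ (q - r)) * ENNReal.ofReal N ^ r ∂kap :=
      lintegral_mono fun t => mul_le_mul' (wb t) (ENNReal.rpow_le_rpow (VN t) hr.pos.le)
    refine ne_top_of_le_ne_top ?_ this
    rw [lintegral_const, measure_univ, mul_one]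
    exact ENNReal.mul_ne_top wbt (ENNReal.rpow_ne_top_of_nonneg hr.pos.le ENNReal.ofReal_ne_top)
  have g1 : ∀ z, gg s' ν F z = w z.1 * v z ^ (r - 1) := by
    intro z
    unfold gg
    simp_rw [Fn]
    rw [nr_const_mul hs.symm.pos _ _ (Wt _), dualstep ν hs]
    change W z * v z ^ (s - 1) = _
    simp only [hW]
    rw [mul_assoc, ← ENNReal.rpow_add_of_nonneg _ _ (by linarith) (by linarith)]
    congr 2; ring
  have wV : ∀ t, w t * V t ^ (r - 1) = if δ ≤ V t then V t ^ (q - 1) else 0 := by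
    intro t
    simp only [hw]
    split_ifs with h
    · rw [← ENNReal.rpow_add _ _ (hδ0.trans_le h).ne' (ne_top_of_le_ne_top ENNReal.ofReal_ne_top (VN t))]
      congr 1; ring
    · simp
  have wV2 : ∀ t, w t * V t ^ r = if δ ≤ V t then V t ^ q else 0 := by
    intro t
    simp only [hw]
    split_ifs with h
    · rw [← ENNReal.rpow_add _ _ (hδ0.trans_le h).ne' (ne_top_of_le_ne_top ENNReal.ofReal_ne_top (VN t))]
      congr 1; ring
    · simp
  have g2 : nr2 q' r' kap μ (gg s' ν F) = J ^ (1 / q') := by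
    unfold nr2
    simp_rw [g1]
    simp_rw [nr_const_mul hr.symm.pos μ _ (wt _), dualstep μ hr]
    unfold nr
    congr 1
    refine lintegral_congr fun t => ?_
    change (w t * V t ^ (r - 1)) ^ q' = w t * V t ^ r
    rw [wV, wV2]
    split_ifs with h
    · rw [← ENNReal.rpow_mul]
      congr 1
      have := hq.mul_eq_add; linarith
    · exact ENNReal.zero_rpow_of_pos hq.symm.pos
  -- pairing
  have g3 : ‖∫ w, F w * conj (u w) ∂(kap.prod (μ.prod ν))‖ₑ = J := by
    have e1 : ∀ z, F z * conj (u z) = (((G z).toReal * ‖u z‖ ^ 2 : ℝ) : ℂ) := by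
      intro z
      simp only [hF]
      rw [mul_assoc, Complex.mul_conj']; push_cast; rfl
    simp_rw [e1]
    have hgm : Measurable fun z => (G z).toReal * ‖u z‖ ^ 2 := Gm.ennreal_toReal.mul (hum.norm.pow_const 2)
    rw [enorm_integral_nonneg _ hgm (fun z => by positivity)
      (M := GB0.toReal * N ^ 2) (fun z => mul_le_mul (GR z) (pow_le_pow_left₀ (norm_nonneg _) (hM' z) 2) (by positivity)
        ENNReal.toReal_nonneg)]
    have e2 : ∀ z, ENNReal.ofReal ((G z).toReal * ‖u z‖ ^ 2) = W (z.1, z.2.1) * ‖u z‖ₑ ^ s := by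
      intro z
      rw [ENNReal.ofReal_mul ENNReal.toReal_nonneg, ENNReal.ofReal_toReal (Gt z), ENNReal.ofReal_pow (norm_nonneg _),
        ofReal_norm]
      simp only [hG]
      have : ‖u z‖ₑ ^ s = ‖u z‖ₑ ^ (s - 2) * ‖u z‖ₑ ^ 2 := by
        rw [← ENNReal.rpow_two, ← ENNReal.rpow_add_of_nonneg _ _ (by linarith) (by norm_num)]; congr 1; ring
      rw [this]; ring
    simp_rw [e2]
    have hWu : Measurable fun z : ℝ × (X × Y) => W (z.1, z.2.1) * ‖u z‖ₑ ^ s :=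
      (Wm.comp (by fun_prop)).mul (hum.enorm.pow_const _)
    rw [lintegral_prod _ hWu.aemeasurable]
    refine lintegral_congr fun t => ?_
    have hWt : Measurable fun z : X × Y => W (t, z.1) * ‖u (t, z)‖ₑ ^ s := by
      have a1 : Measurable fun z : X × Y => (t, z.1) := by fun_prop
      have a2 : Measurable fun z : X × Y => (t, z) := by fun_prop
      have a3 : Measurable fun z : X × Y => W (t, z.1) := Wm.comp a1
      have a4 : Measurable fun z : X × Y => u (t, z) := hum.comp a2
      exact a3.mul (a4.enorm.pow_const s)
    rw [lintegral_prod _ hWt.aemeasurable]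
    have e3 : ∀ x, ∫⁻ y, W (t, x) * ‖u (t, (x, y))‖ₑ ^ s ∂ν = w t * v (t, x) ^ r := by
      intro x
      rw [lintegral_const_mul' _ _ (Wt _), ← nr_rpow hs.pos ν (fun y => ‖u (t, (x, y))‖ₑ)]
      change W (t, x) * v (t, x) ^ s = _
      simp only [hW]
      rw [mul_assoc, ← ENNReal.rpow_add_of_nonneg _ _ (by linarith) hs.pos.le]
      congr 2; ring
    simp_rw [e3]
    rw [lintegral_const_mul' _ _ (wt _), ← nr_rpow hr.pos]
  have fin := H F FBM
  rw [g2, g3] at fin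
  have JK : J ≤ K ^ q := by
    by_cases hJ0 : J = 0
    · rw [hJ0]; simp
    have e4 : J = J ^ (1 / q) * J ^ (1 / q') := by
      rw [← ENNReal.rpow_add _ _ hJ0 Jt]
      have := hq.inv_add_inv_eq_one
      rw [one_div, one_div, this, ENNReal.rpow_one]
    conv_lhs at fin => rw [e4]
    have hne0 : J ^ (1 / q') ≠ 0 := (ENNReal.rpow_pos (pos_iff_ne_zero.mpr hJ0) Jt).ne'
    have hnet : J ^ (1 / q') ≠ ⊤ := ENNReal.rpow_ne_top_of_nonneg (by have := hq.symm.pos; positivity) Jt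
    have := (ENNReal.mul_le_mul_iff_left hne0 hnet).1 fin
    rwa [one_div, ENNReal.rpow_inv_le_iff hq0] at this
  calc ∫⁻ t, V t ^ q ∂kap ≤ ∫⁻ t, (w t * V t ^ r + δ ^ q) ∂kap := by
        refine lintegral_mono fun t => ?_
        change V t ^ q ≤ w t * V t ^ r + δ ^ q
        rw [wV2]
        split_ifs with h
        · exact le_self_add
        · rw [zero_add]
          exact ENNReal.rpow_le_rpow (not_le.1 h).le hq0.le
    _ = J + δ ^ q := by
        rw [lintegral_add_right _ measurable_const, lintegral_const, measure_univ, mul_one]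
    _ ≤ _ := by gcongr

end



section
variable {Ω A : Type} [MeasurableSpace Ω] [Countable A]

lemma tsum_bm {φ : A → Ω → ℂ} (hφ : ∀ a, Measurable (φ a)) (h1 : ∀ a x, ‖φ a x‖ = 1) {c : A → ℂ}
    (hc : Summable fun a => ‖c a‖) : BM (fun x => ∑' a, c a * φ a x) := by
  have hn : ∀ a x, ‖c a * φ a x‖ = ‖c a‖ := fun a x => by rw [norm_mul, h1, mul_one]
  have hs : ∀ x, Summable fun a => ‖c a * φ a x‖ := fun x => by simp_rw [hn]; exact hc
  refine ⟨?_, ∑' a, ‖c a‖, fun x => ?_⟩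
  · refine measurable_of_tendsto_metrizable' (Filter.atTop : Filter (Finset A))
      (f := fun s x => ∑ a ∈ s, c a * φ a x) (fun s => ?_) ?_
    · exact Finset.measurable_fun_sum s fun a _ => (hφ a).const_mul _
    · rw [tendsto_pi_nhds]
      intro x
      exact (hs x).of_norm.hasSum
  · refine (norm_tsum_le_tsum_norm (hs x)).trans (le_of_eq ?_)
    simp_rw [hn]

lemma tsum_pair (ρ : Measure Ω) [IsProbabilityMeasure ρ]
    {φ : A → Ω → ℂ} (hφ : ∀ a, Measurable (φ a)) (h1 : ∀ a x, ‖φ a x‖ = 1) {c : A → ℂ}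
    (hc : Summable fun a => ‖c a‖) {F : Ω → ℂ} (hF : BM F) :
    ‖∫ x, F x * conj (∑' a, c a * φ a x) ∂ρ‖ₑ ≤ ∑' a, ‖c a‖ₑ * ‖∫ x, F x * conj (φ a x) ∂ρ‖ₑ := by
  obtain ⟨hm, M, hM⟩ := id hF
  let G : A → Ω → ℂ := fun a x => F x * conj (c a * φ a x)
  have hn : ∀ a x, ‖c a * φ a x‖ = ‖c a‖ := fun a x => by rw [norm_mul, h1, mul_one]
  have hG : ∀ a, BM (G a) := fun a => hF.mul (BM.conj ⟨(hφ a).const_mul _, ‖c a‖, fun x => (hn a x).le⟩)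
  have hGn : ∀ a x, ‖G a x‖ ≤ M * ‖c a‖ := fun a x => by
    simp only [G]
    rw [norm_mul, RCLike.norm_conj, hn]
    gcongr; exact hM x
  have key := hasSum_integral_of_summable_integral_norm (F := G) (μ := ρ)
    (fun a => (hG a).integrable _) (by
      refine Summable.of_nonneg_of_le (fun a => integral_nonneg fun _ => norm_nonneg _) (fun a => ?_)
        (hc.mul_left M)
      have := integral_mono_of_nonneg (μ := ρ) (f := fun z => ‖G a z‖) (g := fun _ => M * ‖c a‖)
        (Filter.Eventually.of_forall fun _ => norm_nonneg _) (integrable_const _)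
        (Filter.Eventually.of_forall (hGn a))
      refine this.trans ?_
      rw [integral_const, smul_eq_mul]; simp)
  have e1 : ∀ x, F x * conj (∑' a, c a * φ a x) = ∑' a, G a x := by
    intro x
    rw [Complex.conj_tsum, ← tsum_mul_left]
  simp_rw [e1]
  rw [← key.tsum_eq]
  refine (enorm_tsum_le' _).trans (le_of_eq ?_)
  congr 1; ext1 a
  have e2 : ∀ x, G a x = conj (c a) * (F x * conj (φ a x)) := fun x => by simp only [G]; rw [map_mul]; ring
  simp_rw [e2]
  rw [integral_const_mul, enorm_mul]
  congr 1
  rw [← ofReal_norm, RCLike.norm_conj, ofReal_norm]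

end

/-- the free evolution with given coefficients -/
def uf {Z A : Type} (E : A → Z → ℂ) (L : A → ℝ) (c : A → ℂ) (w : ℝ × Z) : ℂ :=
  ∑' a, c a * (cexp (2 * π * I * (L a : ℂ) * w.1) * E a w.2)

lemma norm_ph' (l t : ℝ) : ‖cexp (2 * π * I * (l : ℂ) * t)‖ = 1 := by
  rw [Complex.norm_exp]; simp

section
variable {Z A : Type} [MeasurableSpace Z] [Countable A] {ρ : Measure Z} [IsProbabilityMeasure ρ]
    {E : A → Z → ℂ} {L : A → ℝ} {D : ℝ}

lemma uf_bm (h : DSys ρ E L D) {c : A → ℂ} (hc : Summable fun a => ‖c a‖) : BM (uf E L c) := by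
  refine tsum_bm (φ := fun a (w : ℝ × Z) => cexp (2 * π * I * (L a : ℂ) * w.1) * E a w.2) (fun a => ?_) (fun a x => ?_) hc
  · exact Measurable.mul (by fun_prop) ((h.meas a).comp measurable_snd)
  · rw [norm_mul, norm_ph', h.norm_one, one_mul]

lemma uf_pair (h : DSys ρ E L D) {c : A → ℂ} (hc : Summable fun a => ‖c a‖) {F : ℝ × Z → ℂ} (hF : BM F) :
    ‖∫ w, F w * conj (uf E L c w) ∂(kap.prod ρ)‖ₑ ≤ ∑' a, ‖c a‖ₑ * ‖fh ρ E L F a‖ₑ := by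
  have hm : ∀ a, Measurable fun (w : ℝ × Z) => cexp (2 * π * I * (L a : ℂ) * w.1) * E a w.2 :=
    fun a => Measurable.mul (by fun_prop) ((h.meas a).comp measurable_snd)
  have h1 : ∀ a (w : ℝ × Z), ‖cexp (2 * π * I * (L a : ℂ) * w.1) * E a w.2‖ = 1 :=
    fun a x => by rw [norm_mul, norm_ph', h.norm_one, one_mul]
  refine (tsum_pair (kap.prod ρ) hm h1 hc hF).trans (le_of_eq ?_)
  congr 1; ext1 a
  congr 2
  have bm : BM fun w => F w * conj (cexp (2 * π * I * (L a : ℂ) * w.1) * E a w.2) :=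
    hF.mul (BM.conj ⟨hm a, 1, fun x => (h1 a x).le⟩)
  rw [integral_prod _ (bm.integrable _)]
  unfold fh uu fc
  congr 1; ext1 t
  rw [← integral_mul_const]
  congr 1; ext1 z
  have : conj (cexp (2 * π * I * (L a : ℂ) * t)) = cexp (-(2 * π * I * (L a : ℂ) * t)) := by
    rw [← Complex.exp_conj]; congr 1
    rw [map_mul, map_mul, map_mul, map_mul, Complex.conj_I, Complex.conj_ofReal, Complex.conj_ofReal,
      Complex.conj_ofReal, map_ofNat]
    ring
  rw [map_mul, this]; ring

lemma uf_L2 (h : DSys ρ E L D) {c : A → ℂ} (hc : Summable fun a => ‖c a‖) (t : ℝ) :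
    nr 2 ρ (fun z => ‖uf E L c (t, z)‖ₑ) ≤ (∑' a, ‖c a‖ₑ ^ (2:ℝ)) ^ (1 / 2 : ℝ) := by
  set f : Z → ℂ := fun z => uf E L c (t, z) with hf
  have fb : BM f := (uf_bm h hc).slice t
  obtain ⟨fm, M, hM⟩ := id fb
  set J := ∫⁻ z, ‖f z‖ₑ ^ (2:ℝ) ∂ρ with hJ
  change J ^ (1 / 2 : ℝ) ≤ _
  have hc' : Summable fun a => ‖c a * cexp (2 * π * I * (L a : ℂ) * t)‖ := by
    simp_rw [norm_mul, norm_ph', mul_one]; exact hc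
  have p1 := tsum_pair ρ h.meas h.norm_one hc' fb
  have e1 : ∀ z, ∑' a, c a * cexp (2 * π * I * (L a : ℂ) * t) * E a z = f z := fun z => by
    simp only [hf, uf, mul_assoc]
  have e2 : ‖∫ z, f z * conj (f z) ∂ρ‖ₑ = J := by
    simp_rw [Complex.mul_conj']
    have := enorm_integral_nonneg ρ (g := fun z => ‖f z‖ ^ 2) (fm.norm.pow_const 2) (fun z => by positivity)
      (M := M ^ 2) (fun z => pow_le_pow_left₀ (norm_nonneg _) (hM z) 2)
    push_cast at this
    rw [this]
    refine lintegral_congr fun z => ?_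
    rw [ENNReal.ofReal_pow (norm_nonneg _), ofReal_norm]; norm_num
  have e3 : ∀ a, ‖c a * cexp (2 * π * I * (L a : ℂ) * t)‖ₑ = ‖c a‖ₑ := fun a => by
    rw [← ofReal_norm, norm_mul, norm_ph', mul_one, ofReal_norm]
  simp_rw [e1, e3] at p1
  rw [e2] at p1
  have p2 := p1.trans (tsum_mul_le_sqrt _ _)
  have p3 := p2.trans (mul_le_mul_right (ENNReal.rpow_le_rpow (h.bessel fb) (by norm_num : (0:ℝ) ≤ 1 / 2)) _)
  rw [← hJ] at p3
  have Jt : J ≠ ⊤ := by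
    have : J ≤ ∫⁻ z, ENNReal.ofReal M ^ (2:ℝ) ∂ρ := lintegral_mono fun z => by
      refine ENNReal.rpow_le_rpow ?_ (by norm_num)
      rw [← ofReal_norm]; exact ENNReal.ofReal_le_ofReal (hM z)
    refine ne_top_of_le_ne_top ?_ this
    simp
  by_cases hJ0 : J = 0
  · rw [hJ0]; simp
  have e4 : J = J ^ (1 / 2 : ℝ) * J ^ (1 / 2 : ℝ) := by
    rw [← ENNReal.rpow_add _ _ hJ0 Jt]; norm_num
  conv_lhs at p3 => rw [e4]
  exact (ENNReal.mul_le_mul_iff_left (ENNReal.rpow_pos (pos_iff_ne_zero.mpr hJ0) Jt).ne'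
    (ENNReal.rpow_ne_top_of_nonneg (by norm_num) Jt)).1 p3

end

section
variable {X Y A B : Type} [MeasurableSpace X] [MeasurableSpace Y] [Countable A] [Countable B]
    {μ : Measure X} {ν : Measure Y}
    [IsProbabilityMeasure μ] [IsProbabilityMeasure ν]
    {e : A → X → ℂ} {l : A → ℝ} {m : ℝ} {e' : B → Y → ℂ} {l' : B → ℝ} {k : ℝ}

lemma core (h : DSys μ e l m) (h' : DSys ν e' l' k) (hm0 : 0 < m) (hk0 : 0 ≤ k) {q r s : ℝ} (hq : 2 < q)
    (hs : 2 ≤ s) (hsr : s < r) (hσ : 2 / q = (m * (1 - 2 / r) + k * (1 - 2 / s)) / 2) :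
    ∃ C : ℝ, 0 < C ∧ ∀ c : A × B → ℂ, Summable (fun a => ‖c a‖) →
      nr2 q r kap μ (gg s ν (uf (pe e e') (pl l l') c)) ≤
        ENNReal.ofReal C * (∑' a, ENNReal.ofReal ((1 + pl l l' a) ^ (1 / q) * ‖c a‖ ^ 2)) ^ (1 / 2 : ℝ) := by
  have hr0 : 0 < r := by linarith
  have hs0 : 0 < s := by linarith
  have hq0 : 0 < q := by linarith
  obtain ⟨C, hC, H⟩ := dualS h h' hm0 hk0 (α := 1 - 2 / r) (β := 1 - 2 / s) (σ := 2 / q)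
    (by have : 0 < 2 / r := by positivity
        linarith)
    (by rw [sub_nonneg, div_le_one hs0]; exact hs)
    (by have : 2 / r < 2 / s := div_lt_div_of_pos_left (by norm_num) hs0 hsr
        linarith) hσ (by rw [div_lt_one hq0]; exact hq)
  have hcq : ∀ p : ℝ, 2 ≤ p → p.HolderConjugate (2 / (1 + (1 - 2 / p))) := by
    intro p hp
    have hp0 : 0 < p := by linarith
    have h2 : 2 / p ≤ 1 := by rw [div_le_one hp0]; exact hp
    refine ⟨?_, hp0, ?_⟩
    · rw [inv_div]; field_simp; ring
    · apply div_pos <;> linarith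
  have hq' : q.HolderConjugate (2 / (2 - 2 / q)) := by
    have := hcq q hq.le
    convert this using 2; ring
  have hZ : DSys (μ.prod ν) (pe e e') (pl l l') (m + k) := h.prod h'
  refine ⟨C ^ (1 / 2 : ℝ), by positivity, fun c hc => ?_⟩
  refine dualize hq' (hcq r (by linarith)) (hcq s hs) hs hsr.le (uf_bm hZ hc) _ fun F hF => ?_
  refine (uf_pair hZ hc hF).trans ?_
  have hL : ∀ a, 0 < 1 + pl l l' a := fun a => by have := hZ.l_nonneg a; linarith
  have e1 : ∀ a, ‖c a‖ₑ * ‖fh (μ.prod ν) (pe e e') (pl l l') F a‖ₑ =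
      (ENNReal.ofReal ((1 + pl l l' a) ^ (1 / (2 * q))) * ‖c a‖ₑ) *
        (ENNReal.ofReal ((1 + pl l l' a) ^ (-(1 / (2 * q)))) * ‖fh (μ.prod ν) (pe e e') (pl l l') F a‖ₑ) := by
    intro a
    have : ENNReal.ofReal ((1 + pl l l' a) ^ (1 / (2 * q))) * ENNReal.ofReal ((1 + pl l l' a) ^ (-(1 / (2 * q)))) = 1 := by
      rw [← ENNReal.ofReal_mul (by have := hL a; positivity), ← Real.rpow_add (hL a)]; simp
    calc _ = 1 * (‖c a‖ₑ * ‖fh (μ.prod ν) (pe e e') (pl l l') F a‖ₑ) := by rw [one_mul]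
      _ = _ := by rw [← this]; ring
  simp_rw [e1]
  refine (tsum_mul_le_sqrt _ _).trans ?_
  have e2 : ∀ a, (ENNReal.ofReal ((1 + pl l l' a) ^ (1 / (2 * q))) * ‖c a‖ₑ) ^ (2:ℝ) =
      ENNReal.ofReal ((1 + pl l l' a) ^ (1 / q) * ‖c a‖ ^ 2) := by
    intro a
    rw [ENNReal.mul_rpow_of_nonneg _ _ (by norm_num), ENNReal.ofReal_rpow_of_nonneg (by have := hL a; positivity) (by norm_num),
      ← Real.rpow_mul (hL a).le, ENNReal.ofReal_mul (by have := hL a; positivity), ENNReal.ofReal_pow (norm_nonneg _),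
      ofReal_norm, ENNReal.rpow_two]
    congr 3; field_simp
  have e3 : ∀ a, (ENNReal.ofReal ((1 + pl l l' a) ^ (-(1 / (2 * q)))) * ‖fh (μ.prod ν) (pe e e') (pl l l') F a‖ₑ) ^ (2:ℝ) =
      ENNReal.ofReal ((1 + pl l l' a) ^ (-(2 / q / 2))) * ‖fh (μ.prod ν) (pe e e') (pl l l') F a‖ₑ ^ (2:ℝ) := by
    intro a
    rw [ENNReal.mul_rpow_of_nonneg _ _ (by norm_num), ENNReal.ofReal_rpow_of_nonneg (by have := hL a; positivity) (by norm_num),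
      ← Real.rpow_mul (hL a).le]
    congr 3; field_simp
  simp_rw [e2, e3]
  have e4 := ENNReal.rpow_le_rpow (H F hF) (by norm_num : (0:ℝ) ≤ 1 / 2)
  rw [ENNReal.mul_rpow_of_nonneg _ _ (by norm_num), ENNReal.ofReal_rpow_of_pos hC, ← ENNReal.rpow_mul] at e4
  norm_num at e4
  refine (mul_le_mul_right (by norm_num; exact e4) _).trans (le_of_eq ?_)
  norm_num
  ring

end



lemma nr_exp_mono {Z : Type} [MeasurableSpace Z] (ρ : Measure Z) [IsProbabilityMeasure ρ] {p p' : ℝ} (hp : 0 < p)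
    (hpp : p ≤ p') {g : Z → ℝ≥0∞} (hg : Measurable g) : nr p ρ g ≤ nr p' ρ g := by
  have := eLpNorm'_le_eLpNorm'_of_exponent_le (f := g) hp hpp ρ hg.aestronglyMeasurable
  simpa [eLpNorm', nr] using this

lemma eNorm_nr {Z : Type} [MeasurableSpace Z] {p : ℝ≥0∞} (hp : p ≠ ∞) (ρ : Measure Z) (g : Z → ℝ≥0∞) :
    eNorm p ρ g = nr p.toReal ρ g := by
  unfold eNorm nr; rw [if_neg hp]

lemma eNorm_le_const {Z : Type} [MeasurableSpace Z] {p : ℝ≥0∞} (hp : 0 < p) (ρ : Measure Z) [IsProbabilityMeasure ρ]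
    {g : Z → ℝ≥0∞} {c : ℝ≥0∞} (h : ∀ z, g z ≤ c) : eNorm p ρ g ≤ c := by
  by_cases ht : p = ∞
  · unfold eNorm; rw [if_pos ht]
    exact essSup_le_of_ae_le c (Filter.Eventually.of_forall h)
  · rw [eNorm_nr ht]
    have hp' : 0 < p.toReal := ENNReal.toReal_pos hp.ne' ht
    rw [← nr_const hp' ρ c]
    exact nr_mono hp' _ h

lemma eNorm_circle {p : ℝ≥0∞} (hp : p ≠ ∞) (g : AddCircle (1:ℝ) → ℝ≥0∞) :
    eNorm p volume g = nr p.toReal kap (fun t : ℝ => g (t : AddCircle (1:ℝ))) := by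
  rw [eNorm_nr hp]
  unfold nr kap
  rw [← AddCircle.lintegral_preimage 1 0, zero_add]

lemma mixed_nr2 {m k : ℕ} {r s : ℝ≥0∞} (hr : r ≠ ∞) (hs : s ≠ ∞) (f : Torus m × Torus k → ℂ) :
    mixedNorm r s f = nr2 r.toReal s.toReal (volume : Measure (Torus m)) (volume : Measure (Torus k)) (fun z => ‖f z‖ₑ) := by
  unfold mixedNorm nr2
  rw [eNorm_nr hr]
  congr 1; ext1 x
  rw [eNorm_nr hs]
  rfl

/-- symbol -/
def tl (m : ℕ) : (Fin m → ℤ) → ℝ := fun ξ => ∑ i, (ξ i : ℝ) ^ 2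

/-- character -/
def te (m : ℕ) : (Fin m → ℤ) → Torus m → ℂ := fun ξ z => eChar ξ z

lemma te_sys (m : ℕ) : DSys (volume : Measure (Torus m)) (te m) (tl m) m := DSys.torus m

lemma evol_uf {m k : ℕ} (f : Torus m × Torus k → ℂ) :
    ∃ c : (Fin m → ℤ) × (Fin k → ℤ) → ℂ, (Summable fun a => ‖c a‖) ∧ (∀ a, ‖c a‖ ≤ ‖fcoef f a‖) ∧
      ∀ (t : ℝ) z, evol (t : AddCircle (1:ℝ)) f z = uf (pe (te m) (te k)) (pl (tl m) (tl k)) c (t, z) := by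
  have e1 : ∀ (t : ℝ) z (ξ : (Fin m → ℤ) × (Fin k → ℤ)),
      fcoef f ξ * fourier ((∑ i, (ξ.1 i) ^ 2) + ∑ i, (ξ.2 i) ^ 2) (t : AddCircle (1:ℝ)) * (eChar ξ.1 z.1 * eChar ξ.2 z.2) =
      fcoef f ξ * (cexp (2 * π * I * (pl (tl m) (tl k) ξ : ℂ) * t) * pe (te m) (te k) ξ z) := by
    intro t z ξ
    rw [fourier_coe_apply]
    unfold pl pe tl te
    push_cast
    rw [div_one, mul_assoc]
  by_cases hs : Summable fun a => ‖fcoef f a‖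
  · refine ⟨fcoef f, hs, fun _ => le_rfl, fun t z => ?_⟩
    unfold evol uf
    simp_rw [e1]
  · refine ⟨fun _ => 0, by simpa using summable_zero, fun a => by simp, fun t z => ?_⟩
    unfold evol uf
    simp_rw [e1]
    simp only [zero_mul, tsum_zero]
    refine tsum_eq_zero_of_not_summable fun hh => hs ?_
    have := hh.norm
    have hZ := (te_sys m).prod (te_sys k)
    refine this.congr fun a => ?_
    rw [norm_mul, norm_mul, norm_ph']
    have : ‖pe (te m) (te k) a z‖ = 1 := hZ.norm_one a z
    rw [this, one_mul, mul_one]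

lemma nr2_collapse {m k : ℕ} {R S : ℝ} (hR : 0 < R) (hS : 0 < S) (h : m = 0 ∨ R = S) {g : Torus m × Torus k → ℝ≥0∞}
    (hg : Measurable g) : nr2 R S volume volume g = nr S (volume.prod volume) g := by
  rw [← nr2_two volume volume S hS hg]
  rcases h with h | h
  · subst h
    have : ∀ p : ℝ, 0 < p → ∀ G : Torus 0 → ℝ≥0∞, nr p volume G = G default := by
      intro p hp G
      have : G = fun _ => G default := by ext1 x; rw [Subsingleton.elim x default]
      rw [this, nr_const hp]
    unfold nr2
    rw [this R hR, this S hS]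
  · rw [h]

lemma core_flat {Z A : Type} [MeasurableSpace Z] [Countable A] {ρ : Measure Z} [IsProbabilityMeasure ρ]
    {E : A → Z → ℂ} {L : A → ℝ} {D : ℝ} (h : DSys ρ E L D) (hD : 0 < D) {q S : ℝ} (hq : 2 < q) (hS : 2 < S)
    (hσ : 2 / q = D * (1 - 2 / S) / 2) :
    ∃ C : ℝ, 0 < C ∧ ∀ c : A → ℂ, Summable (fun a => ‖c a‖) →
      nr2 q S kap ρ (fun w => ‖uf E L c w‖ₑ) ≤
        ENNReal.ofReal C * (∑' a, ENNReal.ofReal ((1 + L a) ^ (1 / q) * ‖c a‖ ^ 2)) ^ (1 / 2 : ℝ) := by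
  have hu : DSys (Measure.dirac () : Measure Unit) (fun (_ : Unit) (_ : Unit) => (1:ℂ)) (fun _ => (0:ℝ)) 0 :=
    DSys.unit _ _ _ (fun _ _ => rfl) (fun _ => rfl)
  obtain ⟨C, hC, H⟩ := core h hu hD le_rfl hq le_rfl hS (by rw [hσ]; ring)
  refine ⟨C, hC, fun c hc => ?_⟩
  have hc' : Summable fun a : A × Unit => ‖c a.1‖ := ((Equiv.prodPUnit A).summable_iff (f := fun a => ‖c a‖)).2 hc
  have := H (fun a => c a.1) hc'
  have e1 : gg 2 (Measure.dirac () : Measure Unit) (uf (pe E (fun (_ : Unit) (_ : Unit) => (1:ℂ)))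
      (pl L (fun _ => (0:ℝ))) (fun a => c a.1)) = fun w => ‖uf E L c w‖ₑ := by
    ext1 w
    have e2 : ∀ y, uf (pe E (fun (_ : Unit) (_ : Unit) => (1:ℂ))) (pl L (fun _ => (0:ℝ))) (fun a => c a.1) (w.1, (w.2, y)) =
        uf E L c w := by
      intro y
      unfold uf pe pl
      rw [← (Equiv.prodPUnit A).tsum_eq (fun a => c a * (cexp (2 * π * I * (L a : ℂ) * w.1) * E a w.2))]
      refine tsum_congr fun a => ?_
      simp
    unfold gg
    simp_rw [e2]
    exact nr_const (by norm_num) _ _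
  have e3 : ∑' a : A × Unit, ENNReal.ofReal ((1 + pl L (fun _ => (0:ℝ)) a) ^ (1 / q) * ‖c a.1‖ ^ 2) =
      ∑' a, ENNReal.ofReal ((1 + L a) ^ (1 / q) * ‖c a‖ ^ 2) := by
    rw [← (Equiv.prodPUnit A).tsum_eq (fun a => ENNReal.ofReal ((1 + L a) ^ (1 / q) * ‖c a‖ ^ 2))]
    refine tsum_congr fun a => ?_
    simp [pl]
  rw [e1, e3] at this
  exact this

lemma core_torus (m k : ℕ) (hk : 1 ≤ k) {q R S : ℝ} (hq : 2 < q) (hS : 2 ≤ S) (hSR : S ≤ R)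
    (hσ : 2 / q = (m * (1 - 2 / R) + k * (1 - 2 / S)) / 2) :
    ∃ C : ℝ, 0 < C ∧ ∀ c : (Fin m → ℤ) × (Fin k → ℤ) → ℂ, Summable (fun a => ‖c a‖) →
      nr q kap (fun t => nr2 R S (volume : Measure (Torus m)) (volume : Measure (Torus k))
        (fun z => ‖uf (pe (te m) (te k)) (pl (tl m) (tl k)) c (t, z)‖ₑ)) ≤
        ENNReal.ofReal C * (∑' a, ENNReal.ofReal ((1 + pl (tl m) (tl k) a) ^ (1 / q) * ‖c a‖ ^ 2)) ^ (1 / 2 : ℝ) := by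
  have hS0 : 0 < S := by linarith
  have hR0 : 0 < R := by linarith
  by_cases hh : m = 0 ∨ R = S
  · have hZ : DSys ((volume : Measure (Torus m)).prod (volume : Measure (Torus k))) (pe (te m) (te k)) (pl (tl m) (tl k)) (m + k) :=
      (te_sys m).prod (te_sys k)
    have hk' : (1:ℝ) ≤ k := by exact_mod_cast hk
    have hm' : (0:ℝ) ≤ m := by positivity
    have hσ' : 2 / q = (m + k) * (1 - 2 / S) / 2 := by
      rcases hh with h | h
      · subst h; rw [hσ]; simp
      · rw [hσ, h]; ring
    have hS2 : 2 < S := by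
      rcases hS.lt_or_eq with h | h
      · exact h
      · exfalso
        rw [← h] at hσ'
        have : 0 < 2 / q := by positivity
        rw [hσ'] at this
        norm_num at this
    obtain ⟨C, hC, H⟩ := core_flat hZ (by linarith) hq hS2 hσ'
    refine ⟨C, hC, fun c hc => le_trans (le_of_eq ?_) (H c hc)⟩
    unfold nr2
    congr 1; ext1 t
    exact nr2_collapse hR0 hS0 hh ((uf_bm hZ hc).slice t).1.enorm
  · push Not at hh
    obtain ⟨C, hC, H⟩ := core (te_sys m) (te_sys k) (by exact_mod_cast Nat.pos_of_ne_zero hh.1) (by positivity)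
      hq hS (lt_of_le_of_ne hSR (Ne.symm hh.2)) hσ
    exact ⟨C, hC, H⟩

lemma zero_torus (m k : ℕ) (hk : 1 ≤ k) {R S : ℝ} (hS : 2 ≤ S) (hSR : S ≤ R)
    (hσ : (m * (1 - 2 / R) + k * (1 - 2 / S)) / 2 = 0)
    {c : (Fin m → ℤ) × (Fin k → ℤ) → ℂ} (hc : Summable (fun a => ‖c a‖)) (t : ℝ) :
    nr2 R S (volume : Measure (Torus m)) (volume : Measure (Torus k))
        (fun z => ‖uf (pe (te m) (te k)) (pl (tl m) (tl k)) c (t, z)‖ₑ) ≤ (∑' a, ‖c a‖ₑ ^ (2:ℝ)) ^ (1 / 2 : ℝ) := by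
  have hS0 : 0 < S := by linarith
  have hR0 : 0 < R := by linarith
  have hZ : DSys ((volume : Measure (Torus m)).prod (volume : Measure (Torus k))) (pe (te m) (te k)) (pl (tl m) (tl k)) (m + k) :=
      (te_sys m).prod (te_sys k)
  have a1 : 0 ≤ 1 - 2 / S := by rw [sub_nonneg, div_le_one hS0]; exact hS
  have a2 : 0 ≤ 1 - 2 / R := by rw [sub_nonneg, div_le_one hR0]; linarith
  have hk' : (1:ℝ) ≤ k := by exact_mod_cast hk
  have b1 : 0 ≤ k * (1 - 2 / S) := by positivity
  have b2 : 0 ≤ m * (1 - 2 / R) := by positivity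
  have b3 : k * (1 - 2 / S) = 0 := by linarith
  have b4 : m * (1 - 2 / R) = 0 := by linarith
  have hS2 : S = 2 := by
    rcases mul_eq_zero.1 b3 with h | h
    · linarith
    · have : 2 / S = 1 := by linarith
      rw [div_eq_one_iff_eq hS0.ne'] at this; exact this.symm
  have hh : m = 0 ∨ R = S := by
    rcases mul_eq_zero.1 b4 with h | h
    · left; exact_mod_cast h
    · right
      have : 2 / R = 1 := by linarith
      rw [div_eq_one_iff_eq hR0.ne'] at this; rw [hS2, this]
  rw [nr2_collapse hR0 hS0 hh ((uf_bm hZ hc).slice t).1.enorm, hS2]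
  exact uf_L2 hZ hc t

lemma sob_mono {m k : ℕ} {f : Torus m × Torus k → ℂ} {c : (Fin m → ℤ) × (Fin k → ℤ) → ℂ}
    (hcf : ∀ a, ‖c a‖ ≤ ‖fcoef f a‖) {s s' : ℝ} (hs : s ≤ s') :
    (∑' a, ENNReal.ofReal ((1 + pl (tl m) (tl k) a) ^ s * ‖c a‖ ^ 2)) ^ (1 / 2 : ℝ) ≤ sobolevNorm s' f := by
  unfold sobolevNorm
  refine ENNReal.rpow_le_rpow (ENNReal.tsum_le_tsum fun a => ENNReal.ofReal_le_ofReal ?_) (by norm_num)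
  have h0 : 0 ≤ pl (tl m) (tl k) a := by unfold pl tl; positivity
  have h1 : 1 + ((∑ i, (a.1 i : ℝ) ^ 2) + ∑ i, (a.2 i : ℝ) ^ 2) = 1 + pl (tl m) (tl k) a := rfl
  rw [h1]
  gcongr
  · linarith
  · exact hcf a



/-- Refined Strichartz estimate with partial regularity on the torus:
for `d ≥ 2`, `1 ≤ k ≤ d`, `2 ≤ r̃ ≤ r < ∞`, `2 < q ≤ ∞` with
`2/q ≥ (d-k)(1/2 - 1/r) + k(1/2 - 1/r̃)`, one has
`‖e^{-itΔ} f‖_{L^q_t(𝕋; L^r_x L^r̃_y)} ≤ C ‖f‖_{H^{1/q}(𝕋^d)}`. -/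
theorem refined_strichartz_single (d k : ℕ) (hd : 2 ≤ d) (hk1 : 1 ≤ k) (hkd : k ≤ d)
    (q r rt : ℝ≥0∞) (hrt2 : 2 ≤ rt) (hrtr : rt ≤ r) (hr : r < ∞) (hq : 2 < q)
    (hadm : ((d : ℝ) - k) * (1 / 2 - (1 / r).toReal) +
        (k : ℝ) * (1 / 2 - (1 / rt).toReal) ≤ (2 / q).toReal) :
    ∃ C : ℝ, 0 < C ∧ ∀ f : Torus (d - k) × Torus k → ℂ,
      eNorm q (volume : Measure (AddCircle (1 : ℝ)))
          (fun t => mixedNorm r rt (evol t f)) ≤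
        ENNReal.ofReal C * sobolevNorm (1 / q).toReal f := by

  have hrT : r ≠ ∞ := hr.ne
  have hrtT : rt ≠ ∞ := (hrtr.trans_lt hr).ne
  set m := d - k with hm
  have hmc : ((m : ℕ) : ℝ) = (d : ℝ) - k := by rw [hm, Nat.cast_sub hkd]
  set R := r.toReal with hR
  set S := rt.toReal with hS
  have hS2 : 2 ≤ S := by
    have := ENNReal.toReal_mono hrtT hrt2
    simpa using this
  have hSR : S ≤ R := ENNReal.toReal_mono hrT hrtr
  have hS0 : 0 < S := by linarith
  have hR0 : 0 < R := by linarith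
  set σ := (m * (1 - 2 / R) + k * (1 - 2 / S)) / 2 with hσ
  have hadm' : σ ≤ (2 / q).toReal := by
    refine le_trans (le_of_eq ?_) hadm
    rw [hσ, hmc, ENNReal.toReal_div, ENNReal.toReal_div, ENNReal.toReal_one]
    ring
  have hσ0 : 0 ≤ σ := by
    have a1 : 0 ≤ 1 - 2 / S := by rw [sub_nonneg, div_le_one hS0]; exact hS2
    have a2 : 0 ≤ 1 - 2 / R := by rw [sub_nonneg, div_le_one hR0]; linarith
    positivity
  have hZ : DSys ((volume : Measure (Torus m)).prod (volume : Measure (Torus k))) (pe (te m) (te k))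
      (pl (tl m) (tl k)) (m + k) := (te_sys m).prod (te_sys k)
  rcases hσ0.eq_or_lt with h0 | h0
  · refine ⟨1, one_pos, fun f => ?_⟩
    obtain ⟨c, hc, hcf, hev⟩ := evol_uf f
    rw [ENNReal.ofReal_one, one_mul]
    refine eNorm_le_const (lt_trans (by norm_num) hq) _ fun t => ?_
    obtain ⟨t, rfl⟩ := QuotientAddGroup.mk_surjective t
    rw [mixed_nr2 hrT hrtT]
    have e1 : ∀ z, evol (QuotientAddGroup.mk t : AddCircle (1:ℝ)) f z = _ := fun z => hev t z
    simp_rw [e1]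
    refine (zero_torus m k hk1 hS2 hSR h0.symm hc t).trans ?_
    refine le_trans (le_of_eq ?_) (sob_mono hcf (s := 0) (s' := (1 / q).toReal) ENNReal.toReal_nonneg)
    congr 2; ext1 a
    rw [Real.rpow_zero, one_mul, ENNReal.ofReal_pow (norm_nonneg _), ofReal_norm, ENNReal.rpow_two]
  · have hqT : q ≠ ∞ := by
      rintro rfl
      simp at hadm'
      linarith
    set Q := q.toReal with hQ
    have hQ2 : 2 < Q := by
      have := (ENNReal.toReal_lt_toReal (by norm_num) hqT).2 hq
      simpa using this
    have hQ0 : 0 < Q := by linarith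
    have hσQ : σ ≤ 2 / Q := by
      rw [ENNReal.toReal_div] at hadm'
      simpa using hadm'
    have hQQ : Q ≤ 2 / σ := by
      rw [le_div_iff₀ h0]; rw [le_div_iff₀ hQ0] at hσQ; linarith
    obtain ⟨C, hC, H⟩ := core_torus m k hk1 (q := 2 / σ) (by linarith) hS2 hSR
      (by rw [div_div_cancel₀ (by norm_num)])
    refine ⟨C, hC, fun f => ?_⟩
    obtain ⟨c, hc, hcf, hev⟩ := evol_uf f
    rw [eNorm_circle hqT]
    simp_rw [mixed_nr2 hrT hrtT, hev]
    have ub := uf_bm hZ hc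
    have Vm : Measurable fun t : ℝ => nr2 R S (volume : Measure (Torus m)) (volume : Measure (Torus k))
        (fun z => ‖uf (pe (te m) (te k)) (pl (tl m) (tl k)) c (t, z)‖ₑ) :=
      nr_measurable R volume (gg_meas (ν := (volume : Measure (Torus k))) S ub.1)
    refine (nr_exp_mono kap hQ0 hQQ Vm).trans ((H c hc).trans ?_)
    gcongr
    refine sob_mono hcf ?_
    rw [ENNReal.toReal_div, ENNReal.toReal_one]
    exact one_div_le_one_div_of_le hQ0 hQQ

end
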